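/- Let d ≥ 1, a ≥ 0, r ≥ 2 and 2 < q < ∞ with 2/q + d/r = (d+a+1)/2. Then there exists a constant C = C(d,a,r) > 0 such that for all u₀ ∈ 𝒮(ℝ^{d+1}_+) and F ∈ 𝒮(ℝ^{d+1}_+×ℝ), the function U = 𝕋_a^*(u₀) + 𝔻_a(F) satisfies the bulk Strichartz estimate sup_{z>0} ‖U(·,z,·)‖_{L^q_tL^r_x} ≤ C·( ‖u₀‖_{L²_a(ℝ^{d+1}_+)} + ∫₀^∞ ‖F(·,ζ,·)‖_{L^{q'}_tL^{r'}_x} ζ^a dζ ). -/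

import Mathlib

open MeasureTheory Filter Complex
open scoped ENNReal NNReal Topology

noncomputable section

/-- Bessel function of the first kind of order `ν`, via its power series. -/
def besselJ (ν : ℝ) (x : ℝ) : ℝ :=
  ∑' k : ℕ, ((-1 : ℝ) ^ k / ((k.factorial : ℝ) * Real.Gamma ((k : ℝ) + ν + 1))) *
    (x / 2) ^ (2 * (k : ℝ) + ν)

/-- The half-line Schrödinger–Bessel kernel `S_a(z,ζ,t)`. -/
def SaK (a : ℝ) (z ζ t : ℝ) : ℂ :=
  (Complex.exp (-Complex.I * ((Real.sign t : ℝ) : ℂ) * (((a + 1) * Real.pi / 4 : ℝ) : ℂ)) /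
      (((2 * |t|) ^ ((a + 1) / 2) : ℝ) : ℂ)) *
    (((z * ζ / (2 * |t|)) ^ ((1 - a) / 2) : ℝ) : ℂ) *
    ((besselJ ((a - 1) / 2) (z * ζ / (2 * |t|)) : ℝ) : ℂ) *
    Complex.exp (Complex.I * ((z ^ 2 + ζ ^ 2 : ℝ) : ℂ) / ((4 * t : ℝ) : ℂ))

/-- The boundary kernel `S_a(z,0,t)`. -/
def Sa0 (a : ℝ) (z t : ℝ) : ℂ :=
  ((((2 : ℝ) ^ (-a) / Real.Gamma ((a + 1) / 2) : ℝ)) : ℂ) *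
    Complex.exp (-Complex.I * ((Real.sign t : ℝ) : ℂ) * (((a + 1) * Real.pi / 4 : ℝ) : ℂ)) *
    (((|t| ^ (-((a + 1) / 2)) : ℝ)) : ℂ) *
    Complex.exp (Complex.I * ((z ^ 2 : ℝ) : ℂ) / ((4 * t : ℝ) : ℂ))

/-- The free Schrödinger kernel on `ℝ^d` (principal branch of the power). -/
def Sfree (d : ℕ) (x y : Fin d → ℝ) (t : ℝ) : ℂ :=
  (4 * (Real.pi : ℂ) * Complex.I * (t : ℂ)) ^ (-(d : ℂ) / 2) *
    Complex.exp (Complex.I * ((∑ i, (x i - y i) ^ 2 : ℝ) : ℂ) / ((4 * t : ℝ) : ℂ))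

/-- The full half-space kernel `𝕊_a(X,Y,t) = S_a(z,ζ,t)·S(x,y,t)`. -/
def SK (d : ℕ) (a : ℝ) (X Y : (Fin d → ℝ) × ℝ) (t : ℝ) : ℂ :=
  SaK a X.2 Y.2 t * Sfree d X.1 Y.1 t

/-- The weighted measure `dω_a = z^a dx dz` on the half-space `ℝ^d × (0,∞)`. -/
def ωa (d : ℕ) (a : ℝ) : Measure ((Fin d → ℝ) × ℝ) :=
  (volume : Measure (Fin d → ℝ)).prod
    (((volume : Measure ℝ).restrict (Set.Ioi 0)).withDensity fun z => ENNReal.ofReal (z ^ a))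

/-- The mixed norm `‖Φ‖_{L^q_t L^r_x}`. -/
def mixNorm (d : ℕ) (q r : ℝ) (Φ : (Fin d → ℝ) → ℝ → ℂ) : ℝ≥0∞ :=
  (∫⁻ t : ℝ, (∫⁻ x : Fin d → ℝ, (‖Φ x t‖₊ : ℝ≥0∞) ^ r) ^ (q / r)) ^ (1 / q)

/-- The mixed norm `‖Φ‖_{L^q_T L^r_x}` over the time interval `[0,T]`. -/
def mixNormT (d : ℕ) (T q r : ℝ) (Φ : (Fin d → ℝ) → ℝ → ℂ) : ℝ≥0∞ :=
  (∫⁻ t in Set.Ioc (0 : ℝ) T, (∫⁻ x : Fin d → ℝ, (‖Φ x t‖₊ : ℝ≥0∞) ^ r) ^ (q / r)) ^ (1 / q)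

/-- The homogeneous propagator `𝕋_a^*(u₀)`. -/
def Tstar (d : ℕ) (a : ℝ) (u₀ : (Fin d → ℝ) × ℝ → ℂ) (X : (Fin d → ℝ) × ℝ) (t : ℝ) : ℂ :=
  if t = 0 then u₀ X else ∫ Y, SK d a X Y t * u₀ Y ∂(ωa d a)

/-- The inhomogeneous Duhamel term `𝔻_a(F)`. -/
def Dop (d : ℕ) (a : ℝ) (F : (Fin d → ℝ) × ℝ → ℝ → ℂ) (X : (Fin d → ℝ) × ℝ) (t : ℝ) : ℂ :=
  ∫ τ in (0 : ℝ)..t, ∫ Y, SK d a X Y (t - τ) * F Y τ ∂(ωa d a)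

/-- The boundary-data operator `Θ_a^*(Φ)`. -/
def ThetaStar (d : ℕ) (a : ℝ) (Φ : (Fin d → ℝ) → ℝ → ℂ) (X : (Fin d → ℝ) × ℝ) (t : ℝ) : ℂ :=
  Complex.I *
    ∫ τ in (0 : ℝ)..t, ∫ y : Fin d → ℝ, Sa0 a X.2 (t - τ) * Sfree d X.1 y (t - τ) * Φ y τ

/-- The weight `k(z) = min{1, z^{a/2}}`. -/
def kwt (a z : ℝ) : ℝ := min 1 (z ^ (a / 2))

/-- The weight `k^{-1}(z) = max{1, z^{-a/2}}`. -/
def kinv (a z : ℝ) : ℝ := max 1 (z ^ (-a / 2))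

/-!
The estimate is a `TT*` argument on the layers of constant height `z`. Correlating over the source
point the half-space kernels that reach a fixed layer at the times `t` and `t'` splits into a
tangential and a normal factor. The tangential factor is a free Schrödinger kernel, bounded from
`L^{r'}` to `L^r` by `|t - t'|^{-(d/2)(1 - 2/r)}` upon interpolating between the `L²` and `L¹ → L^∞`
bounds. Weber's second exponential integral evaluates the normal factor, and Poisson's integral for
Bessel functions bounds it by `|t - t'|^{-(a+1)/2}` uniformly in `z`. By admissibility the two decay
rates add up to `2/q < 1`, so the Hardy–Littlewood–Sobolev inequality in time bounds the
correlation operator, hence by duality the homogeneous term. The correlation integrals converge only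
after a Gaussian cutoff, on which no bound depends and which is removed by Fatou's lemma.

The Duhamel term is a superposition over the source heights `ζ`; the kernel between the layers `ζ`
and `z` obeys the same dispersive bound, and Minkowski's inequality sums the layers.
-/

/-- The coefficients `1 / (n! Γ(n + b))` of the Bessel–Clifford function. -/
def besselCliffordCoeff (b : ℝ) (n : ℕ) : ℝ := (n.factorial * Real.Gamma (n + b))⁻¹

/-- The Bessel–Clifford function `∑ wⁿ / (n! Γ(n + b))`, an entire function of `w` through which
`J_ν(x) = (x/2)^ν · besselClifford (ν + 1) (-x²/4)`. -/
def besselClifford (b : ℝ) : ℂ → ℂ := Complex.regularizedHGFun 0 {(b : ℂ)}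

theorem hasFPowerSeriesOnBall_besselClifford (b : ℝ) :
    HasFPowerSeriesOnBall (besselClifford b) (Complex.regularizedHGFunSeries 0 {(b : ℂ)}) 0 ⊤ := by
  have hr := Complex.radius_regularizedHGFunSeries_eq_top (a := 0) (b := {(b : ℂ)}) (by simp)
  exact hr ▸ (Complex.regularizedHGFunSeries 0 {(b : ℂ)}).hasFPowerSeriesOnBall (by simp [hr])

theorem hasSum_besselClifford (b : ℝ) (w : ℂ) :
    HasSum (fun n => (besselCliffordCoeff b n : ℂ) * w ^ n) (besselClifford b w) := by
  have h := (hasFPowerSeriesOnBall_besselClifford b).hasSum (y := w) (by simp)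
  simpa [Complex.regularizedHGFunSeries_coeff, Complex.regularizedHGFunCoeff, besselCliffordCoeff,
    ← Complex.Gamma_ofReal, add_comm, mul_comm] using h

theorem continuous_besselClifford (b : ℝ) : Continuous (besselClifford b) := by
  simpa [continuousOn_univ] using (hasFPowerSeriesOnBall_besselClifford b).continuousOn

theorem conj_besselClifford_ofReal (b x : ℝ) :
    (starRingEnd ℂ) (besselClifford b x) = besselClifford b x := by
  rw [← (hasSum_besselClifford b x).tsum_eq, Complex.conj_tsum]
  simp

theorem besselCliffordCoeff_pos {b : ℝ} (hb : 0 < b) (n : ℕ) : 0 < besselCliffordCoeff b n :=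
  inv_pos.2 (mul_pos (mod_cast n.factorial_pos) (Real.Gamma_pos_of_pos (by positivity)))

theorem ae_betaMeasure_mem_Ioo (α β : ℝ) :
    ∀ᵐ s ∂ProbabilityTheory.betaMeasure α β, s ∈ Set.Ioo (0 : ℝ) 1 := by
  rw [ProbabilityTheory.betaMeasure, ae_withDensity_iff
    (by unfold ProbabilityTheory.betaPDF; fun_prop)]
  refine Eventually.of_forall fun s hs => ⟨?_, ?_⟩ <;> by_contra! h
  exacts [hs (ProbabilityTheory.betaPDF_eq_zero_of_nonpos h),
    hs (ProbabilityTheory.betaPDF_eq_zero_of_one_le h)]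

theorem integral_pow_betaMeasure {α β : ℝ} (hα : 0 < α) (hβ : 0 < β) (n : ℕ) :
    ∫ s, s ^ n ∂ProbabilityTheory.betaMeasure α β =
      ProbabilityTheory.beta (n + α) β / ProbabilityTheory.beta α β := by
  have hnα : 0 < n + α := by positivity
  have hB := ProbabilityTheory.beta_pos hα hβ
  have hBn := ProbabilityTheory.beta_pos hnα hβ
  have hpdf : ∀ s, ProbabilityTheory.betaPDF α β s * ENNReal.ofReal (s ^ n) =
      ENNReal.ofReal (ProbabilityTheory.beta (n + α) β / ProbabilityTheory.beta α β) *
        ProbabilityTheory.betaPDF (n + α) β s := fun s => by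
    unfold ProbabilityTheory.betaPDF ProbabilityTheory.betaPDFReal
    split_ifs with hs
    · have h0 := hs.1
      have h1 := sub_pos.2 hs.2
      rw [← ENNReal.ofReal_mul (by positivity), ← ENNReal.ofReal_mul (by positivity),
        show (n : ℝ) + α - 1 = α - 1 + n by ring, Real.rpow_add hs.1, Real.rpow_natCast]
      congr 1
      field_simp
    · simp
  have hnonneg : 0 ≤ᵐ[ProbabilityTheory.betaMeasure α β] fun s => s ^ n := by
    filter_upwards [ae_betaMeasure_mem_Ioo α β] with s hs using pow_nonneg hs.1.le n
  rw [integral_eq_lintegral_of_nonneg_ae hnonneg (by fun_prop), ProbabilityTheory.betaMeasure,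
    lintegral_withDensity_eq_lintegral_mul _ (by unfold ProbabilityTheory.betaPDF; fun_prop)
      (by fun_prop)]
  simp only [Pi.mul_apply, hpdf]
  rw [lintegral_const_mul _ (by unfold ProbabilityTheory.betaPDF; fun_prop),
    ProbabilityTheory.lintegral_betaPDF_eq_one hnα hβ, mul_one,
    ENNReal.toReal_ofReal (by positivity)]

theorem exists_isProbabilityMeasure_integral_pow_eq {b : ℝ} (hb : 1 / 2 ≤ b) :
    ∃ μ : Measure ℝ, IsProbabilityMeasure μ ∧ (∀ᵐ s ∂μ, s ∈ Set.Icc (0 : ℝ) 1) ∧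
      ∀ n : ℕ, ∫ s, s ^ n ∂μ =
        Real.Gamma (n + 1 / 2) * Real.Gamma b / (Real.Gamma (1 / 2) * Real.Gamma (n + b)) := by
  have : 0 < Real.Gamma (1 / 2) := Real.Gamma_pos_of_pos (by norm_num)
  have hG : ∀ n : ℕ, 0 < Real.Gamma (n + b) := fun n => Real.Gamma_pos_of_pos (by positivity)
  obtain rfl | hb' := hb.eq_or_lt
  · refine ⟨Measure.dirac 1, inferInstance, by simp [ae_dirac_eq], fun n => ?_⟩
    have := hG n
    simp only [integral_dirac, one_pow]
    field_simp
  · have hβ : 0 < b - 1 / 2 := sub_pos.2 hb'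
    refine ⟨ProbabilityTheory.betaMeasure (1 / 2) (b - 1 / 2),
      ProbabilityTheory.isProbabilityMeasureBeta (by norm_num) hβ,
      (ae_betaMeasure_mem_Ioo _ _).mono fun s hs => ⟨hs.1.le, hs.2.le⟩, fun n => ?_⟩
    have := hG n
    have hGβ := Real.Gamma_pos_of_pos hβ
    rw [integral_pow_betaMeasure (by norm_num) hβ, ProbabilityTheory.beta, ProbabilityTheory.beta,
      show (n : ℝ) + 1 / 2 + (b - 1 / 2) = n + b by ring, add_sub_cancel]
    generalize Real.Gamma (b - 1 / 2) = g at hGβ ⊢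
    field_simp

theorem norm_cosh_le_exp_abs_re (w : ℂ) : ‖Complex.cosh w‖ ≤ Real.exp |w.re| := by
  rw [Complex.cosh, norm_div, Complex.norm_ofNat, div_le_iff₀ two_pos]
  calc ‖Complex.exp w + Complex.exp (-w)‖ ≤ Real.exp w.re + Real.exp (-w.re) := by
        simpa [Complex.norm_exp] using norm_add_le (Complex.exp w) (Complex.exp (-w))
    _ ≤ Real.exp |w.re| + Real.exp |w.re| :=
        add_le_add (Real.exp_le_exp.2 (le_abs_self _)) (Real.exp_le_exp.2 (neg_le_abs _))
    _ = Real.exp |w.re| * 2 := by ring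

theorem four_pow_mul_factorial_mul_Gamma (n : ℕ) :
    4 ^ n * n.factorial * Real.Gamma (n + 1 / 2) = (2 * n).factorial * Real.Gamma (1 / 2) := by
  induction n with
  | zero => simp
  | succ n ih =>
    rw [Nat.mul_succ, Nat.factorial_succ, Nat.factorial_succ, Nat.factorial_succ, Nat.cast_succ,
      add_right_comm, Real.Gamma_add_one (by positivity)]
    push_cast
    linear_combination (4 * (n + 1) * (n + 1 / 2) : ℝ) * ih

theorem hasSum_integral_cosh_mul_sqrt {μ : Measure ℝ} [IsFiniteMeasure μ]
    (hμ : ∀ᵐ s ∂μ, s ∈ Set.Icc (0 : ℝ) 1) (w : ℂ) :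
    HasSum (fun n : ℕ => w ^ (2 * n) / (2 * n).factorial * ((∫ s, s ^ n ∂μ : ℝ) : ℂ))
      (∫ s, Complex.cosh (w * (√s : ℝ)) ∂μ) := by
  have hpow : ∀ n : ℕ, Integrable (fun s : ℝ => s ^ n) μ := fun n =>
    (integrable_const (1 : ℝ)).mono' (by fun_prop) <| by
      filter_upwards [hμ] with s hs
      rw [Real.norm_of_nonneg (pow_nonneg hs.1 n)]
      exact pow_le_one₀ hs.1 hs.2
  have hsum : Summable fun n : ℕ =>
      ∫ s, ‖w ^ (2 * n) / ((2 * n).factorial : ℂ) * ((s ^ n : ℝ) : ℂ)‖ ∂μ := by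
    refine ((Real.hasSum_cosh ‖w‖).summable.mul_right (μ.real Set.univ)).of_nonneg_of_le
      (fun n => integral_nonneg fun s => norm_nonneg _) fun n => ?_
    rw [mul_comm _ (μ.real _), ← smul_eq_mul (a := μ.real _), ← integral_const]
    refine integral_mono_ae ((hpow n).ofReal.const_mul _).norm (integrable_const _) ?_
    filter_upwards [hμ] with s hs
    rw [norm_mul, norm_div, norm_pow, Complex.norm_natCast, Complex.norm_real,
      Real.norm_of_nonneg (pow_nonneg hs.1 n)]
    exact mul_le_of_le_one_right (by positivity) (pow_le_one₀ hs.1 hs.2)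
  convert! hasSum_integral_of_summable_integral_norm (fun n => (hpow n).ofReal.const_mul _) hsum
    using 1
  · ext n
    rw [integral_const_mul, integral_complex_ofReal]
  · refine integral_congr_ae ?_
    filter_upwards [hμ] with s hs
    rw [← (Complex.hasSum_cosh _).tsum_eq]
    refine tsum_congr fun n => ?_
    rw [mul_pow, ← Complex.ofReal_pow, pow_mul √s, Real.sq_sqrt hs.1]
    ring

/-- Poisson's integral writes `besselClifford b (w² / 4)` as an average of `cosh (w √s)` over
`s ∈ [0, 1]`, against the `Beta(1/2, b - 1/2)` distribution. -/
theorem norm_besselClifford_sq_div_four_le {b : ℝ} (hb : 1 / 2 ≤ b) (w : ℂ) :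
    ‖besselClifford b (w ^ 2 / 4)‖ ≤ (Real.Gamma b)⁻¹ * Real.exp |w.re| := by
  have : 0 < Real.Gamma b := Real.Gamma_pos_of_pos (by linarith)
  obtain ⟨μ, _, hμ, hmoment⟩ := exists_isProbabilityMeasure_integral_pow_eq hb
  have hpoisson : besselClifford b (w ^ 2 / 4) =
      ((Real.Gamma b)⁻¹ : ℝ) * ∫ s, Complex.cosh (w * (√s : ℝ)) ∂μ := by
    refine (hasSum_besselClifford b _).unique ?_
    convert! (hasSum_integral_cosh_mul_sqrt hμ w).mul_left ((Real.Gamma b)⁻¹ : ℂ) using 1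
    · ext n
      have hcoeff : besselCliffordCoeff b n / 4 ^ n = (Real.Gamma b)⁻¹ *
          (1 / (2 * n).factorial * ∫ s, s ^ n ∂μ) := by
        have hn := four_pow_mul_factorial_mul_Gamma n
        have : 0 < Real.Gamma (n + b) := Real.Gamma_pos_of_pos (by positivity)
        have hhalf : 0 < Real.Gamma (1 / 2) := Real.Gamma_pos_of_pos (by norm_num)
        rw [hmoment, besselCliffordCoeff]
        generalize Real.Gamma (n + 1 / 2) = g at hn ⊢
        generalize Real.Gamma (1 / 2) = g₀ at hn hhalf ⊢
        field_simp
        linear_combination -hn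
      have hcoeff' := congrArg (fun x : ℝ => (x : ℂ)) hcoeff
      push_cast at hcoeff'
      rw [div_pow, ← pow_mul]
      linear_combination w ^ (2 * n) * hcoeff'
    · simp
  have hbound : ∀ᵐ s ∂μ, ‖Complex.cosh (w * (√s : ℝ))‖ ≤ Real.exp |w.re| := by
    filter_upwards [hμ] with s hs
    refine (norm_cosh_le_exp_abs_re _).trans (Real.exp_le_exp.2 ?_)
    rw [Complex.re_mul_ofReal, abs_mul, abs_of_nonneg (Real.sqrt_nonneg s)]
    exact mul_le_of_le_one_right (abs_nonneg _) (Real.sqrt_le_one.2 hs.2)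
  rw [hpoisson, norm_mul, Complex.norm_real, Real.norm_of_nonneg (by positivity)]
  gcongr
  simpa using norm_integral_le_of_norm_le_const hbound

theorem sum_choose_mul_descFactorial_div_Gamma {b : ℝ} (hb : 0 < b) (i j : ℕ) :
    ∑ n ∈ Finset.range (i + 1), (i.choose n : ℝ) * (j.descFactorial n / Real.Gamma (n + b)) =
      Real.Gamma (i + j + b) / (Real.Gamma (i + b) * Real.Gamma (j + b)) := by
  induction i generalizing j b with
  | zero =>
    have := Real.Gamma_pos_of_pos hb
    have : 0 < Real.Gamma (j + b) := Real.Gamma_pos_of_pos (by positivity)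
    simp
    field_simp
  | succ i ih =>
    have hib : 0 < (i : ℝ) + b := by positivity
    have := Real.Gamma_pos_of_pos hib
    have hshift : ∑ n ∈ Finset.range (i + 1),
        (i.choose n : ℝ) * (j.descFactorial (n + 1) / Real.Gamma ((n + 1 : ℕ) + b)) =
          j * Real.Gamma (i + j + b) / (Real.Gamma (i + 1 + b) * Real.Gamma (j + b)) := by
      obtain _ | j := j
      · simp
      · simp only [Nat.succ_descFactorial_succ]
        push_cast
        simp only [mul_div_assoc, mul_left_comm _ ((j : ℝ) + 1), add_assoc _ (1 : ℝ) b,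
          ← Finset.mul_sum]
        rw [ih (b := 1 + b) (by positivity)]
        ring_nf
    have : 0 < Real.Gamma (j + b) := Real.Gamma_pos_of_pos (by positivity)
    rw [Finset.sum_choose_succ_mul (fun n _ => (j.descFactorial n / Real.Gamma (n + b) : ℝ)),
      ih hb, hshift]
    push_cast
    rw [add_right_comm (i : ℝ) 1 b, Real.Gamma_add_one hib.ne',
      show (i : ℝ) + 1 + j + b = i + j + b + 1 by ring, Real.Gamma_add_one (by positivity)]
    field_simp
    ring

theorem hasSum_prod_mul {ι κ : Type*} {f : ι → ℂ} {g : κ → ℂ} {a b : ℂ} (hf : HasSum f a)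
    (hg : HasSum g b) : HasSum (fun p : ι × κ => f p.1 * g p.2) (a * b) :=
  hf.mul hg (summable_mul_of_summable_norm hf.summable.norm hg.summable.norm)

theorem hasSum_descFactorial_mul_pow_div_factorial (n : ℕ) (x : ℂ) :
    HasSum (fun i : ℕ => i.descFactorial n * (x ^ i / i.factorial)) (x ^ n * Complex.exp x) := by
  have hzero : ∀ i ∉ Set.range (· + n), (i.descFactorial n : ℂ) * (x ^ i / i.factorial) = 0 := by
    intro i hi
    have : i < n := by
      by_contra! h
      exact hi ⟨i - n, Nat.sub_add_cancel h⟩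
    simp [Nat.descFactorial_of_lt this]
  rw [← (add_left_injective n).hasSum_iff hzero, Complex.exp_eq_exp_ℂ]
  convert! (NormedSpace.expSeries_div_hasSum_exp x).mul_left (x ^ n) using 1
  ext i
  have h : (i.factorial : ℂ) * (i + n).descFactorial n = (i + n).factorial := by
    exact_mod_cast by simpa using Nat.factorial_mul_descFactorial (Nat.le_add_left n i)
  have : ((i + n).factorial : ℂ) ≠ 0 := by exact_mod_cast (i + n).factorial_ne_zero
  have : (i.factorial : ℂ) ≠ 0 := by exact_mod_cast i.factorial_ne_zero
  simp only [Function.comp_apply]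
  field_simp
  linear_combination x ^ (n + i) * h

theorem hasSum_besselCliffordCoeff_mul_descFactorial {b : ℝ} (hb : 0 < b) (i j : ℕ) :
    HasSum (fun n => besselCliffordCoeff b n * (i.descFactorial n * j.descFactorial n))
      (Real.Gamma (i + j + b) / (Real.Gamma (i + b) * Real.Gamma (j + b))) := by
  rw [← sum_choose_mul_descFactorial_div_Gamma hb]
  have hzero : ∀ n ∉ Finset.range (i + 1),
      besselCliffordCoeff b n * (i.descFactorial n * j.descFactorial n) = 0 := fun n hn => by
    simp [Nat.descFactorial_of_lt (not_le.1 (by simpa [Nat.lt_succ_iff] using hn))]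
  convert! hasSum_sum_of_ne_finset_zero (L := SummationFilter.unconditional ℕ) hzero using 1
  · refine Finset.sum_congr rfl fun n _ => ?_
    rw [besselCliffordCoeff, Nat.descFactorial_eq_factorial_mul_choose i]
    have : (n.factorial : ℝ) ≠ 0 := by exact_mod_cast n.factorial_ne_zero
    push_cast
    field_simp

/-- The `(n, i, j)` term of `exp (x + y) * besselClifford b (x * y)`, the factors `xⁿ * exp x` and
`yⁿ * exp y` being expanded in powers `xⁱ` and `yʲ`. -/
def expMulBesselCliffordTerm (b : ℝ) (x y : ℂ) (m : ℕ × ℕ × ℕ) : ℂ :=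
  besselCliffordCoeff b m.1 * (m.2.1.descFactorial m.1 * (x ^ m.2.1 / m.2.1.factorial) *
    (m.2.2.descFactorial m.1 * (y ^ m.2.2 / m.2.2.factorial)))

theorem hasSum_expMulBesselCliffordTerm_row (b : ℝ) (x y : ℂ) (n : ℕ) :
    HasSum (fun ij : ℕ × ℕ => expMulBesselCliffordTerm b x y (n, ij))
      (Complex.exp (x + y) * (besselCliffordCoeff b n * (x * y) ^ n)) := by
  have hx := hasSum_descFactorial_mul_pow_div_factorial n x
  have hy := hasSum_descFactorial_mul_pow_div_factorial n y
  have hxy := hasSum_prod_mul hx hy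
  rw [show Complex.exp (x + y) * (besselCliffordCoeff b n * (x * y) ^ n) =
    besselCliffordCoeff b n * (x ^ n * Complex.exp x * (y ^ n * Complex.exp y)) by
      rw [Complex.exp_add]; ring]
  exact hxy.mul_left _

theorem hasSum_expMulBesselCliffordTerm_column {b : ℝ} (hb : 0 < b) (x y : ℂ) (ij : ℕ × ℕ) :
    HasSum (fun n => expMulBesselCliffordTerm b x y (n, ij))
      (((Real.Gamma (ij.1 + ij.2 + b) * besselCliffordCoeff b ij.1 *
        besselCliffordCoeff b ij.2 : ℝ) : ℂ) * (x ^ ij.1 * y ^ ij.2)) := by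
  convert! ((Complex.hasSum_ofReal.2 (hasSum_besselCliffordCoeff_mul_descFactorial hb ij.1
    ij.2)).mul_right (x ^ ij.1 / ij.1.factorial * (y ^ ij.2 / ij.2.factorial))) using 1
  · ext n
    simp only [expMulBesselCliffordTerm]
    push_cast
    ring
  · simp only [besselCliffordCoeff]
    push_cast
    ring

theorem summable_norm_expMulBesselCliffordTerm {b : ℝ} (hb : 0 < b) (x y : ℂ) :
    Summable fun m => ‖expMulBesselCliffordTerm b x y m‖ := by
  have hrow (n : ℕ) : HasSum (fun ij : ℕ × ℕ => ‖expMulBesselCliffordTerm b x y (n, ij)‖)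
      (Real.exp ‖x‖ * Real.exp ‖y‖ * (besselCliffordCoeff b n * (‖x‖ * ‖y‖) ^ n)) := by
    rw [← Complex.hasSum_ofReal]
    convert! hasSum_expMulBesselCliffordTerm_row b ‖x‖ ‖y‖ n using 1
    · ext ij
      simp [expMulBesselCliffordTerm, abs_of_pos (besselCliffordCoeff_pos hb n)]
    · rw [Complex.exp_add]
      push_cast
      ring
  refine (summable_prod_of_nonneg fun m => norm_nonneg _).2 ⟨fun n => (hrow n).summable, ?_⟩
  simp only [fun n => (hrow n).tsum_eq]
  refine Summable.mul_left _ (Complex.summable_ofReal.1 ?_)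
  simpa using (hasSum_besselClifford b ((‖x‖ * ‖y‖ : ℝ) : ℂ)).summable

theorem hasSum_Gamma_mul_besselCliffordCoeff {b : ℝ} (hb : 0 < b) (x y : ℂ) :
    HasSum (fun ij : ℕ × ℕ => ((Real.Gamma (ij.1 + ij.2 + b) * besselCliffordCoeff b ij.1 *
      besselCliffordCoeff b ij.2 : ℝ) : ℂ) * (x ^ ij.1 * y ^ ij.2))
      (Complex.exp (x + y) * besselClifford b (x * y)) := by
  have htotal := (summable_norm_expMulBesselCliffordTerm hb x y).of_norm.hasSum
  have heq : ∑' m, expMulBesselCliffordTerm b x y m =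
      Complex.exp (x + y) * besselClifford b (x * y) :=
    (htotal.prod_fiberwise (hasSum_expMulBesselCliffordTerm_row b x y)).unique
      ((hasSum_besselClifford b _).mul_left _)
  rw [← heq]
  exact ((Equiv.prodComm (ℕ × ℕ) ℕ).hasSum_iff.2 htotal).prod_fiberwise
    (hasSum_expMulBesselCliffordTerm_column hb x y)

/-- The measure `z ^ a dz` on `(0, ∞)`, the normal factor of `ωa d a`. -/
def powMeasure (a : ℝ) : Measure ℝ :=
  ((volume : Measure ℝ).restrict (Set.Ioi 0)).withDensity fun z => ENNReal.ofReal (z ^ a)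

instance (a : ℝ) : SFinite (powMeasure a) := by
  unfold powMeasure
  infer_instance

theorem ae_powMeasure_pos (a : ℝ) : ∀ᵐ z ∂powMeasure a, 0 < z :=
  (withDensity_absolutelyContinuous _ _) (ae_restrict_mem measurableSet_Ioi)

theorem lintegral_powMeasure (a : ℝ) {f : ℝ → ℝ≥0∞} (hf : Measurable f) :
    ∫⁻ z, f z ∂powMeasure a = ∫⁻ z in Set.Ioi (0 : ℝ), f z * ENNReal.ofReal (z ^ a) := by
  rw [powMeasure, lintegral_withDensity_eq_lintegral_mul _ (by fun_prop) hf]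
  simp only [Pi.mul_apply, mul_comm]

section

variable {E : Type*} [NormedAddCommGroup E] [NormedSpace ℝ E]

theorem integral_powMeasure (a : ℝ) (f : ℝ → E) :
    ∫ z, f z ∂powMeasure a = ∫ z in Set.Ioi (0 : ℝ), z ^ a • f z := by
  rw [powMeasure, integral_withDensity_eq_integral_toReal_smul (by fun_prop)
    (Eventually.of_forall fun _ => ENNReal.ofReal_lt_top)]
  refine setIntegral_congr_fun measurableSet_Ioi fun z hz => ?_
  simp only [ENNReal.toReal_ofReal (Real.rpow_nonneg (Set.mem_Ioi.1 hz).le a)]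

theorem integrable_powMeasure_iff {a : ℝ} {f : ℝ → E} :
    Integrable f (powMeasure a) ↔ IntegrableOn (fun z => z ^ a • f z) (Set.Ioi 0) := by
  rw [powMeasure, integrable_withDensity_iff_integrable_smul' (by fun_prop)
    (Eventually.of_forall fun _ => ENNReal.ofReal_lt_top)]
  refine integrableOn_congr_fun (fun z hz => ?_) measurableSet_Ioi
  simp only [ENNReal.toReal_ofReal (Real.rpow_nonneg (Set.mem_Ioi.1 hz).le a)]

theorem integral_powMeasure_pow_smul (a : ℝ) (n : ℕ) (f : ℝ → E) :
    ∫ z, z ^ n • f z ∂powMeasure a = ∫ z, f z ∂powMeasure (a + n) := by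
  rw [integral_powMeasure, integral_powMeasure]
  refine setIntegral_congr_fun measurableSet_Ioi fun z hz => ?_
  simp only [smul_smul, Real.rpow_add hz, Real.rpow_natCast]

theorem integrable_pow_smul_powMeasure_iff {a : ℝ} {n : ℕ} {f : ℝ → E} :
    Integrable (fun z => z ^ n • f z) (powMeasure a) ↔ Integrable f (powMeasure (a + n)) := by
  rw [integrable_powMeasure_iff, integrable_powMeasure_iff]
  refine integrableOn_congr_fun (fun z hz => ?_) measurableSet_Ioi
  simp only [smul_smul, Real.rpow_add hz, Real.rpow_natCast]

end

theorem integrable_exp_neg_mul_sq_powMeasure {a : ℝ} (ha : -1 < a) {p : ℝ} (hp : 0 < p) :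
    Integrable (fun z : ℝ => Real.exp (-(p * z ^ 2))) (powMeasure a) := by
  simpa [integrable_powMeasure_iff] using integrableOn_rpow_mul_exp_neg_mul_sq hp ha

theorem integral_exp_neg_mul_sq_powMeasure {a : ℝ} (ha : -1 < a) {p : ℝ} (hp : 0 < p) :
    ∫ z, Real.exp (-(p * z ^ 2)) ∂powMeasure a =
      (1 / p) ^ ((a + 1) / 2) * (Real.Gamma ((a + 1) / 2) / 2) := by
  have h := integral_rpow_mul_exp_neg_mul_rpow two_pos ha hp
  rw [one_div, Real.inv_rpow hp.le, ← Real.rpow_neg hp.le, ← neg_div]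
  simp only [integral_powMeasure, smul_eq_mul, neg_mul, Real.rpow_two] at h ⊢
  linear_combination h

theorem frequently_ofReal_punctured {P : ℂ → Prop} (x₀ : ℝ) (h : ∀ᶠ x : ℝ in 𝓝 x₀, P x) :
    ∃ᶠ z in 𝓝[≠] (x₀ : ℂ), P z := by
  have ht : Tendsto (fun x : ℝ => (x : ℂ)) (𝓝[≠] x₀) (𝓝[≠] (x₀ : ℂ)) :=
    Complex.continuous_ofReal.continuousAt.continuousWithinAt.tendsto_nhdsWithin
      fun x hx => by simpa using hx
  exact ht.frequently (h.filter_mono nhdsWithin_le_nhds).frequently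

/-- Both sides are analytic in `p` on the right half-plane and agree on the positive reals. -/
theorem integral_cexp_neg_mul_sq_powMeasure {a : ℝ} (ha : -1 < a) {p : ℂ} (hp : 0 < p.re) :
    ∫ z : ℝ, Complex.exp (-(p * (z : ℂ) ^ 2)) ∂powMeasure a =
      (1 / p) ^ (((a + 1) / 2 : ℝ) : ℂ) * ((Real.Gamma ((a + 1) / 2) / 2 : ℝ) : ℂ) := by
  set X : ℝ → ℝ := fun z => -z ^ 2 with hX
  have hreal : ∀ x : ℝ, 0 < x → ProbabilityTheory.complexMGF X (powMeasure a) x =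
      (1 / (x : ℂ)) ^ (((a + 1) / 2 : ℝ) : ℂ) * ((Real.Gamma ((a + 1) / 2) / 2 : ℝ) : ℂ) := by
    intro x hx
    rw [ProbabilityTheory.complexMGF_ofReal, ProbabilityTheory.mgf, ← Complex.ofReal_one,
      ← Complex.ofReal_div, ← Complex.ofReal_cpow (by positivity), ← Complex.ofReal_mul,
      ← integral_exp_neg_mul_sq_powMeasure ha hx]
    simp [hX]
  have hsub : {p : ℂ | 0 < p.re} ⊆
      {p | p.re ∈ interior (ProbabilityTheory.integrableExpSet X (powMeasure a))} := fun p hp => by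
    refine interior_mono (s := Set.Ioi 0) (fun x hx => ?_) (by simpa using hp)
    simpa [ProbabilityTheory.integrableExpSet, hX] using
      integrable_exp_neg_mul_sq_powMeasure ha hx
  have hopen : IsOpen {p : ℂ | 0 < p.re} := isOpen_lt continuous_const Complex.continuous_re
  have hdiff : DifferentiableOn ℂ (fun p : ℂ => (1 / p) ^ (((a + 1) / 2 : ℝ) : ℂ) *
      ((Real.Gamma ((a + 1) / 2) / 2 : ℝ) : ℂ)) {p : ℂ | 0 < p.re} := fun p hp => by
    have hp0 : p ≠ 0 := by
      rintro rfl
      simp at hp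
    refine (((differentiableAt_const 1).div differentiableAt_id hp0).cpow_const
      (Or.inl ?_)).mul_const _ |>.differentiableWithinAt
    simpa using div_pos hp (Complex.normSq_pos.2 hp0)
  have hmgf := ProbabilityTheory.analyticOnNhd_complexMGF.mono hsub
  have h := hmgf.eqOn_of_preconnected_of_frequently_eq
    (hdiff.analyticOnNhd hopen) (convex_halfSpace_re_gt 0).isPreconnected (z₀ := ((1 : ℝ) : ℂ))
    (by simp) (frequently_ofReal_punctured 1 ((lt_mem_nhds one_pos).mono hreal)) hp
  simpa [ProbabilityTheory.complexMGF, hX] using h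

@[fun_prop]
theorem measurable_conj_comp {α : Type*} [MeasurableSpace α] {f : α → ℂ} (hf : Measurable f) :
    Measurable fun x => (starRingEnd ℂ) (f x) :=
  Complex.continuous_conj.measurable.comp hf

theorem enorm_conj (w : ℂ) : ‖(starRingEnd ℂ) w‖ₑ = ‖w‖ₑ := by
  rw [← ofReal_norm, RCLike.norm_conj, ofReal_norm]

section WeightedInner

variable {α β : Type*} [MeasurableSpace α] [MeasurableSpace β] {μ : Measure α} {χ : α → ℝ}

/-- The `L²` pairing of `f` and `g` with respect to the measure `χ μ`; conjugate-linear in `g`. -/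
def weightedInner (μ : Measure α) (χ : α → ℝ) (f g : α → ℂ) : ℂ :=
  ∫ x, (χ x : ℂ) * (f x * (starRingEnd ℂ) (g x)) ∂μ

theorem conj_weightedInner (f g : α → ℂ) :
    (starRingEnd ℂ) (weightedInner μ χ f g) = weightedInner μ χ g f := by
  simp only [weightedInner, ← integral_conj, map_mul, Complex.conj_ofReal, Complex.conj_conj,
    mul_comm]

theorem weightedInner_mul_const (f g : α → ℂ) (c c' : ℂ) :
    weightedInner μ χ (fun x => f x * c) (fun x => g x * c') =
      weightedInner μ χ f g * (c * (starRingEnd ℂ) c') := by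
  simp only [weightedInner, ← integral_mul_const, map_mul]
  congr with x
  ring

theorem weightedInner_prod [SFinite μ] {ν : Measure β} [SFinite ν] (ψ : β → ℝ) (f f' : α → ℂ)
    (g g' : β → ℂ) :
    weightedInner (μ.prod ν) (fun w => χ w.1 * ψ w.2) (fun w => f w.1 * g w.2)
        (fun w => f' w.1 * g' w.2) =
      weightedInner μ χ f f' * weightedInner ν ψ g g' := by
  simp only [weightedInner, ← integral_prod_mul]
  congr with w
  push_cast
  rw [map_mul]
  ring

theorem measurable_weightedInner [SFinite μ] {f g : β → α → ℂ} (hχ : Measurable χ)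
    (hf : Measurable (Function.uncurry f)) (hg : Measurable (Function.uncurry g)) :
    Measurable fun w => weightedInner μ χ (f w) (g w) := by
  have hmeas : Measurable fun z : β × α =>
      (χ z.2 : ℂ) * (Function.uncurry f z * (starRingEnd ℂ) (Function.uncurry g z)) := by fun_prop
  exact hmeas.stronglyMeasurable.integral_prod_right.measurable

end WeightedInner

/-- The parameter of the complex Gaussian `exp(-ε ζ²) exp(iζ²/(4t)) exp(-iζ²/(4t'))`. -/
def chirpWidth (ε t t' : ℝ) : ℂ := (ε : ℂ) + ((1 / (4 * t') - 1 / (4 * t) : ℝ) : ℂ) * Complex.I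

theorem re_chirpWidth (ε t t' : ℝ) : (chirpWidth ε t t').re = ε := by simp [chirpWidth]

theorem chirpWidth_self (ε t : ℝ) : chirpWidth ε t t = ε := by simp [chirpWidth]

theorem div_le_norm_chirpWidth (ε : ℝ) {t t' : ℝ} (ht : t ≠ 0) (ht' : t' ≠ 0) :
    |t - t'| / (4 * |t| * |t'|) ≤ ‖chirpWidth ε t t'‖ := by
  refine le_trans (le_of_eq ?_) (Complex.abs_im_le_norm _)
  have him : (chirpWidth ε t t').im = 1 / (4 * t') - 1 / (4 * t) := by
    simp [chirpWidth, -Complex.ofReal_sub]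
  rw [him, show 1 / (4 * t') - 1 / (4 * t) = (t - t') / (4 * t * t') by field_simp, abs_div,
    abs_mul, abs_mul, abs_of_pos (zero_lt_four' ℝ)]

section

variable {a : ℝ} {p : ℂ}

theorem integral_pow_mul_cexp_neg_mul_sq_powMeasure (ha : -1 < a) (hp : 0 < p.re)
    (n : ℕ) :
    ∫ z : ℝ, (z : ℂ) ^ (2 * n) * Complex.exp (-(p * (z : ℂ) ^ 2)) ∂powMeasure a =
      1 / 2 * (1 / p) ^ (((a + 1) / 2 : ℝ) : ℂ) * (1 / p) ^ n *
        (Real.Gamma (n + (a + 1) / 2) : ℂ) := by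
  have hp0 : 1 / p ≠ 0 := one_div_ne_zero fun h => by simp [h] at hp
  have han : -1 < a + (2 * n : ℕ) := lt_add_of_lt_of_nonneg ha (Nat.cast_nonneg _)
  have h := integral_powMeasure_pow_smul a (2 * n) fun z : ℝ => Complex.exp (-(p * (z : ℂ) ^ 2))
  rw [integral_cexp_neg_mul_sq_powMeasure han hp,
    show (a + (2 * n : ℕ) + 1) / 2 = n + (a + 1) / 2 by push_cast; ring, Complex.ofReal_add,
    Complex.cpow_add _ _ hp0, Complex.ofReal_natCast, Complex.cpow_natCast] at h
  simp only [Complex.real_smul, Complex.ofReal_pow] at h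
  rw [h]
  push_cast
  ring

theorem integrable_pow_mul_cexp_neg_mul_sq_powMeasure (ha : -1 < a) (hp : 0 < p.re)
    (n : ℕ) :
    Integrable (fun z : ℝ => (z : ℂ) ^ (2 * n) * Complex.exp (-(p * (z : ℂ) ^ 2)))
      (powMeasure a) := by
  have han : -1 < a + (2 * n : ℕ) := lt_add_of_lt_of_nonneg ha (Nat.cast_nonneg _)
  have h := integrable_pow_smul_powMeasure_iff.2 (integrable_exp_neg_mul_sq_powMeasure han hp)
  refine h.mono (by fun_prop) (Eventually.of_forall fun z => ?_)
  simp [Complex.norm_exp, ← Complex.ofReal_pow]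

theorem integral_norm_pow_mul_cexp_neg_mul_sq_powMeasure (ha : -1 < a) (hp : 0 < p.re)
    (n : ℕ) :
    ∫ z : ℝ, ‖(z : ℂ) ^ (2 * n) * Complex.exp (-(p * (z : ℂ) ^ 2))‖ ∂powMeasure a =
      1 / 2 * (1 / p.re) ^ ((a + 1) / 2) * (1 / p.re) ^ n * Real.Gamma (n + (a + 1) / 2) := by
  have han : -1 < a + (2 * n : ℕ) := lt_add_of_lt_of_nonneg ha (Nat.cast_nonneg _)
  have h := integral_powMeasure_pow_smul a (2 * n) fun z : ℝ => Real.exp (-(p.re * z ^ 2))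
  rw [integral_exp_neg_mul_sq_powMeasure han hp,
    show (a + (2 * n : ℕ) + 1) / 2 = n + (a + 1) / 2 by push_cast; ring,
    Real.rpow_add (one_div_pos.2 hp), Real.rpow_natCast] at h
  simp only [smul_eq_mul] at h
  simp only [norm_mul, norm_pow, Complex.norm_real, Real.norm_eq_abs, pow_mul, sq_abs,
    Complex.norm_exp] at h ⊢
  simp only [← Complex.ofReal_pow, Complex.neg_re, Complex.re_mul_ofReal]
  rw [h]
  ring

theorem hasSum_besselClifford_mul_besselClifford (b : ℝ) (A B x : ℂ) :
    HasSum (fun ij : ℕ × ℕ => besselCliffordCoeff b ij.1 * besselCliffordCoeff b ij.2 *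
      (A ^ ij.1 * B ^ ij.2) * x ^ (ij.1 + ij.2))
      (besselClifford b (A * x) * besselClifford b (B * x)) := by
  convert! hasSum_prod_mul (hasSum_besselClifford b (A * x)) (hasSum_besselClifford b (B * x))
    using 2 with ij
  ring

/-- Weber's second exponential integral, obtained by integrating the double series of the product
of the two Bessel–Clifford functions termwise. -/
theorem integral_besselClifford_mul_besselClifford_powMeasure (ha : -1 < a) (hp : 0 < p.re)
    (A B : ℂ) :
    ∫ z : ℝ, besselClifford ((a + 1) / 2) (A * (z : ℂ) ^ 2) *
        besselClifford ((a + 1) / 2) (B * (z : ℂ) ^ 2) *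
        Complex.exp (-(p * (z : ℂ) ^ 2)) ∂powMeasure a =
      1 / 2 * (1 / p) ^ (((a + 1) / 2 : ℝ) : ℂ) *
        (Complex.exp (A / p + B / p) * besselClifford ((a + 1) / 2) (A / p * (B / p))) := by
  have hb : 0 < (a + 1) / 2 := by linarith
  set b := (a + 1) / 2 with hb_def
  let k : ℕ × ℕ → ℂ := fun ij => besselCliffordCoeff b ij.1 * besselCliffordCoeff b ij.2 *
    (A ^ ij.1 * B ^ ij.2)
  have hint := fun ij : ℕ × ℕ =>
    (integrable_pow_mul_cexp_neg_mul_sq_powMeasure ha hp (ij.1 + ij.2)).const_mul (k ij)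
  have hsum : Summable fun ij : ℕ × ℕ => ∫ z : ℝ, ‖k ij * ((z : ℂ) ^ (2 * (ij.1 + ij.2)) *
      Complex.exp (-(p * (z : ℂ) ^ 2)))‖ ∂powMeasure a := by
    have h := (hasSum_Gamma_mul_besselCliffordCoeff hb ((‖A‖ / p.re : ℝ) : ℂ)
      ((‖B‖ / p.re : ℝ) : ℂ)).summable
    simp only [← Complex.ofReal_pow, ← Complex.ofReal_mul] at h
    convert! (Complex.summable_ofReal.1 h).mul_left (1 / 2 * (1 / p.re) ^ b) using 2 with ij
    have hnn := fun n => (besselCliffordCoeff_pos hb n).le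
    simp only [norm_mul (k _), integral_const_mul,
      integral_norm_pow_mul_cexp_neg_mul_sq_powMeasure ha hp, ← hb_def]
    simp only [k, norm_mul, norm_pow, Complex.norm_real, Real.norm_of_nonneg (hnn _)]
    push_cast
    ring
  have hdouble : ∀ z : ℝ, HasSum (fun ij => k ij * ((z : ℂ) ^ (2 * (ij.1 + ij.2)) *
      Complex.exp (-(p * (z : ℂ) ^ 2)))) (besselClifford b (A * (z : ℂ) ^ 2) *
        besselClifford b (B * (z : ℂ) ^ 2) * Complex.exp (-(p * (z : ℂ) ^ 2))) := fun z => by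
    convert! (hasSum_besselClifford_mul_besselClifford b A B ((z : ℂ) ^ 2)).mul_right
      (Complex.exp (-(p * (z : ℂ) ^ 2))) using 2 with ij
    simp only [k]
    ring
  have h := hasSum_integral_of_summable_integral_norm hint hsum
  simp only [(hdouble _).tsum_eq] at h
  refine h.unique ?_
  convert! (hasSum_Gamma_mul_besselCliffordCoeff hb (A / p) (B / p)).mul_left
    (1 / 2 * (1 / p) ^ (b : ℂ)) using 2 with ij
  rw [integral_const_mul, integral_pow_mul_cexp_neg_mul_sq_powMeasure ha hp, ← hb_def]
  simp only [k]
  push_cast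
  ring

theorem norm_cexp_mul_besselClifford_le {b : ℝ} (hb : 1 / 2 ≤ b) (hp : 0 < p.re) (α β : ℝ) :
    ‖Complex.exp (-(α : ℂ) ^ 2 / p + -(β : ℂ) ^ 2 / p) *
        besselClifford b (-(α : ℂ) ^ 2 / p * (-(β : ℂ) ^ 2 / p))‖ ≤ (Real.Gamma b)⁻¹ := by
  have : 0 < Real.Gamma b := Real.Gamma_pos_of_pos (by linarith)
  set κ : ℝ := (1 / p).re with hκ_def
  have hκ : 0 ≤ κ := by
    rw [hκ_def, one_div, Complex.inv_re]
    exact div_nonneg hp.le (Complex.normSq_nonneg _)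
  have hre : ∀ x : ℝ, ((x : ℂ) / p).re = x * κ := fun x => by
    rw [div_eq_mul_one_div, Complex.re_ofReal_mul]
  set w : ℂ := ((2 * α * β : ℝ) : ℂ) / p with hw_def
  have hw : -(α : ℂ) ^ 2 / p * (-(β : ℂ) ^ 2 / p) = w ^ 2 / 4 := by
    rw [hw_def]
    push_cast
    ring
  have hexp : ‖Complex.exp (-(α : ℂ) ^ 2 / p + -(β : ℂ) ^ 2 / p)‖ =
      Real.exp (-(α ^ 2 + β ^ 2) * κ) := by
    rw [Complex.norm_exp, ← hre]
    push_cast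
    ring_nf
  have hdecay : -(α ^ 2 + β ^ 2) * κ + |w.re| ≤ 0 := by
    have h : 0 ≤ (|α| - |β|) ^ 2 * κ := by positivity
    rw [hw_def, hre, abs_mul, abs_mul, abs_mul, abs_two, abs_of_nonneg hκ, ← sq_abs α, ← sq_abs β]
    linarith
  rw [hw, norm_mul, hexp]
  calc Real.exp (-(α ^ 2 + β ^ 2) * κ) * ‖besselClifford b (w ^ 2 / 4)‖
      ≤ Real.exp (-(α ^ 2 + β ^ 2) * κ) * ((Real.Gamma b)⁻¹ * Real.exp |w.re|) := by
        gcongr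
        exact norm_besselClifford_sq_div_four_le hb w
    _ = (Real.Gamma b)⁻¹ * Real.exp (-(α ^ 2 + β ^ 2) * κ + |w.re|) := by
        rw [Real.exp_add]
        ring
    _ ≤ (Real.Gamma b)⁻¹ :=
        mul_le_of_le_one_right (by positivity) (Real.exp_le_one_iff.2 hdecay)

theorem norm_integral_besselClifford_mul_besselClifford_powMeasure_le (ha : 0 ≤ a) (hp : 0 < p.re)
    (α β : ℝ) :
    ‖∫ z : ℝ, besselClifford ((a + 1) / 2) (-(α : ℂ) ^ 2 * (z : ℂ) ^ 2) *
        besselClifford ((a + 1) / 2) (-(β : ℂ) ^ 2 * (z : ℂ) ^ 2) *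
        Complex.exp (-(p * (z : ℂ) ^ 2)) ∂powMeasure a‖ ≤
      (Real.Gamma ((a + 1) / 2))⁻¹ * ‖p‖ ^ (-((a + 1) / 2)) := by
  have hpow : ‖(1 / p) ^ (((a + 1) / 2 : ℝ) : ℂ)‖ = ‖p‖ ^ (-((a + 1) / 2)) := by
    rw [Complex.norm_cpow_real, norm_div, norm_one, one_div, Real.inv_rpow (norm_nonneg _),
      Real.rpow_neg (norm_nonneg _)]
  have hfactor := norm_cexp_mul_besselClifford_le (b := (a + 1) / 2) (by linarith) hp α β
  rw [integral_besselClifford_mul_besselClifford_powMeasure (by linarith) hp, norm_mul, norm_mul,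
    hpow, mul_comm]
  refine mul_le_mul hfactor (mul_le_of_le_one_left (by positivity) (by norm_num))
    (by positivity) ((norm_nonneg _).trans hfactor)

end

/-- The continuous extension of `SaK a z ζ t` to all real `z`, `ζ`, obtained by writing the Bessel
function through the Bessel–Clifford function; it vanishes at `t = 0`. -/
def SaKExt (a z ζ t : ℝ) : ℂ :=
  Sa0 a z t * (Real.Gamma ((a + 1) / 2) * besselClifford ((a + 1) / 2)
    (-((z / (4 * t) : ℝ) : ℂ) ^ 2 * (ζ : ℂ) ^ 2)) *
    Complex.exp (Complex.I * ((ζ ^ 2 / (4 * t) : ℝ) : ℂ))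

theorem rpow_neg_mul_besselJ (ν : ℝ) {x : ℝ} (hx : 0 < x) :
    ((x ^ (-ν) * besselJ ν x : ℝ) : ℂ) =
      ((2 : ℝ) ^ (-ν) : ℝ) * besselClifford (ν + 1) (-((x / 2 : ℝ) : ℂ) ^ 2) := by
  rw [← (hasSum_besselClifford _ _).tsum_eq, besselJ, ← tsum_mul_left, ← tsum_mul_left,
    Complex.ofReal_tsum]
  refine tsum_congr fun k => ?_
  have hpow : x ^ (-ν) * (x / 2) ^ (2 * (k : ℝ) + ν) = 2 ^ (-ν) * ((x / 2) ^ 2) ^ k := by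
    have : 0 < x / 2 := by positivity
    rw [Real.rpow_add this, Real.rpow_mul this.le, Real.rpow_two, Real.rpow_natCast,
      mul_left_comm, ← mul_div_cancel₀ x two_ne_zero, Real.mul_rpow two_pos.le this.le,
      mul_div_cancel_left₀ _ two_ne_zero, mul_assoc, ← Real.rpow_add this, neg_add_cancel,
      Real.rpow_zero, mul_one, mul_comm]
  have hterm : x ^ (-ν) * ((-1) ^ k / (k.factorial * Real.Gamma (k + ν + 1)) *
      (x / 2) ^ (2 * (k : ℝ) + ν)) =
      2 ^ (-ν) * (besselCliffordCoeff (ν + 1) k * (-(x / 2) ^ 2) ^ k) := by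
    rw [mul_left_comm, hpow, neg_pow ((x / 2) ^ 2), besselCliffordCoeff, ← add_assoc,
      div_eq_mul_inv]
    ac_rfl
  rw [hterm]
  push_cast
  ring

theorem SaK_eq_SaKExt {a z ζ t : ℝ} (ha : -1 < a) (hz : 0 < z) (hζ : 0 < ζ) (ht : t ≠ 0) :
    SaK a z ζ t = SaKExt a z ζ t := by
  have hG := (Real.Gamma_pos_of_pos (show 0 < (a + 1) / 2 by linarith)).ne'
  have ht' : 0 < |t| := abs_pos.2 ht
  have hbessel := rpow_neg_mul_besselJ ((a - 1) / 2)
    (show 0 < z * ζ / (2 * |t|) by positivity)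
  rw [show -((a - 1) / 2) = (1 - a) / 2 by ring, show (a - 1) / 2 + 1 = (a + 1) / 2 by ring]
    at hbessel
  have harg : -((z * ζ / (2 * |t|) / 2 : ℝ) : ℂ) ^ 2 =
      -((z / (4 * t) : ℝ) : ℂ) ^ 2 * (ζ : ℂ) ^ 2 := by
    rw [neg_mul, ← mul_pow, ← Complex.ofReal_mul, ← Complex.ofReal_pow, ← Complex.ofReal_pow,
      show z * ζ / (2 * |t|) / 2 = z * ζ / (4 * |t|) by ring, div_pow, mul_pow 4, sq_abs]
    congr 2
    ring
  have hconst : ((2 * |t|) ^ ((a + 1) / 2))⁻¹ * 2 ^ ((1 - a) / 2) =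
      2 ^ (-a) * |t| ^ (-((a + 1) / 2)) := by
    rw [Real.mul_rpow two_pos.le ht'.le, mul_inv, ← Real.rpow_neg two_pos.le,
      ← Real.rpow_neg ht'.le, mul_right_comm, ← Real.rpow_add two_pos]
    ring_nf
  have hchirp : Complex.exp (Complex.I * ((z ^ 2 + ζ ^ 2 : ℝ) : ℂ) / ((4 * t : ℝ) : ℂ)) =
      Complex.exp (Complex.I * ((z ^ 2 : ℝ) : ℂ) / ((4 * t : ℝ) : ℂ)) *
        Complex.exp (Complex.I * ((ζ ^ 2 / (4 * t) : ℝ) : ℂ)) := by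
    rw [← Complex.exp_add]
    push_cast
    ring_nf
  have hconst' := congrArg ((↑) : ℝ → ℂ) hconst
  simp only [Complex.ofReal_mul, Complex.ofReal_inv] at hconst' hbessel
  unfold SaK SaKExt Sa0
  rw [hchirp, mul_assoc _ (Complex.ofReal _) (Complex.ofReal _), hbessel, harg]
  set E := Complex.exp (-Complex.I * ((Real.sign t : ℝ) : ℂ) *
    (((a + 1) * Real.pi / 4 : ℝ) : ℂ))
  set Z := Complex.exp (Complex.I * ((z ^ 2 : ℝ) : ℂ) / ((4 * t : ℝ) : ℂ))
  set W := Complex.exp (Complex.I * ((ζ ^ 2 / (4 * t) : ℝ) : ℂ))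
  set B := besselClifford ((a + 1) / 2) (-((z / (4 * t) : ℝ) : ℂ) ^ 2 * (ζ : ℂ) ^ 2)
  have hcancel : ((2 ^ (-a) / Real.Gamma ((a + 1) / 2) : ℝ) : ℂ) * Real.Gamma ((a + 1) / 2) =
      (2 ^ (-a) : ℝ) := by rw [← Complex.ofReal_mul, div_mul_cancel₀ _ hG]
  calc _ = E * Z * W * B * (((((2 * |t|) ^ ((a + 1) / 2) : ℝ) : ℂ))⁻¹ *
        ((2 ^ ((1 - a) / 2) : ℝ) : ℂ)) := by ring
    _ = _ := by
      rw [hconst', ← hcancel]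
      ring

theorem norm_Sa0 {a : ℝ} (ha : -1 < a) (z t : ℝ) :
    ‖Sa0 a z t‖ = 2 ^ (-a) / Real.Gamma ((a + 1) / 2) * |t| ^ (-((a + 1) / 2)) := by
  have hG := Real.Gamma_pos_of_pos (show 0 < (a + 1) / 2 by linarith)
  have hphase : ‖Complex.exp (-Complex.I * ((Real.sign t : ℝ) : ℂ) *
      (((a + 1) * Real.pi / 4 : ℝ) : ℂ))‖ = 1 := by
    rw [Complex.norm_exp, Real.exp_eq_one_iff]
    simp [-Complex.ofReal_div, -Complex.ofReal_mul]
  have hchirp : ‖Complex.exp (Complex.I * ((z ^ 2 : ℝ) : ℂ) / ((4 * t : ℝ) : ℂ))‖ = 1 := by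
    rw [mul_div_assoc, ← Complex.ofReal_div, mul_comm, Complex.norm_exp_ofReal_mul_I]
  rw [Sa0, norm_mul, norm_mul, norm_mul, hphase, hchirp, Complex.norm_of_nonneg (by positivity),
    Complex.norm_of_nonneg (by positivity), mul_one, mul_one]

theorem norm_SaKExt_le {a : ℝ} (ha : 0 ≤ a) (z ζ t : ℝ) :
    ‖SaKExt a z ζ t‖ ≤ 2 ^ (-a) / Real.Gamma ((a + 1) / 2) * |t| ^ (-((a + 1) / 2)) := by
  have hG := Real.Gamma_pos_of_pos (show 0 < (a + 1) / 2 by linarith)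
  have hC := norm_besselClifford_sq_div_four_le (b := (a + 1) / 2) (by linarith)
    (Complex.I * (2 * (z / (4 * t)) * ζ : ℝ))
  rw [show (Complex.I * (2 * (z / (4 * t)) * ζ : ℝ)) ^ 2 / 4 =
      -((z / (4 * t) : ℝ) : ℂ) ^ 2 * (ζ : ℂ) ^ 2 by push_cast; rw [mul_pow, I_sq]; ring,
    Complex.I_mul_re, Complex.ofReal_im, neg_zero, abs_zero, Real.exp_zero, mul_one] at hC
  have hGC := mul_le_mul_of_nonneg_left hC hG.le
  rw [mul_inv_cancel₀ hG.ne'] at hGC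
  rw [SaKExt, norm_mul, norm_mul, norm_Sa0 (by linarith), norm_mul, Complex.norm_of_nonneg hG.le,
    Complex.norm_exp_I_mul_ofReal, mul_one]
  exact mul_le_of_le_one_right (by positivity) hGC

theorem measurable_realSign : Measurable Real.sign :=
  Measurable.ite (measurableSet_lt measurable_id measurable_const) measurable_const
    (Measurable.ite (measurableSet_lt measurable_const measurable_id) measurable_const
      measurable_const)

@[fun_prop]
theorem measurable_SaKExt (a z : ℝ) {β : Type*} [MeasurableSpace β] {f g : β → ℝ}
    (hf : Measurable f) (hg : Measurable g) : Measurable fun w => SaKExt a z (f w) (g w) := by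
  have hC := (continuous_besselClifford ((a + 1) / 2)).measurable
  have hsign := measurable_realSign
  unfold SaKExt Sa0
  fun_prop

theorem exp_mul_SaKExt_mul_conj_SaKExt (a z ε t t' ζ : ℝ) :
    ((Real.exp (-(ε * ζ ^ 2)) : ℝ) : ℂ) * (SaKExt a z ζ t * (starRingEnd ℂ) (SaKExt a z ζ t')) =
      Sa0 a z t * (starRingEnd ℂ) (Sa0 a z t') * (Real.Gamma ((a + 1) / 2) : ℂ) ^ 2 *
        (besselClifford ((a + 1) / 2) (-((z / (4 * t) : ℝ) : ℂ) ^ 2 * (ζ : ℂ) ^ 2) *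
          besselClifford ((a + 1) / 2) (-((z / (4 * t') : ℝ) : ℂ) ^ 2 * (ζ : ℂ) ^ 2) *
          Complex.exp (-(chirpWidth ε t t' * (ζ : ℂ) ^ 2))) := by
  have hexp : Complex.exp (-(chirpWidth ε t t' * (ζ : ℂ) ^ 2)) =
      Complex.exp (Complex.I * ((ζ ^ 2 / (4 * t) : ℝ) : ℂ)) *
        Complex.exp (-Complex.I * ((ζ ^ 2 / (4 * t') : ℝ) : ℂ)) *
        ((Real.exp (-(ε * ζ ^ 2)) : ℝ) : ℂ) := by
    rw [Complex.ofReal_exp, ← Complex.exp_add, ← Complex.exp_add, chirpWidth]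
    push_cast
    ring_nf
  have hconj := conj_besselClifford_ofReal ((a + 1) / 2) (-(z / (4 * t')) ^ 2 * ζ ^ 2)
  push_cast at hconj
  simp only [SaKExt, map_mul, ← Complex.exp_conj, Complex.conj_I, Complex.conj_ofReal, hexp]
  push_cast
  rw [hconj]
  ring

/-- The two chirps and the Gaussian cut-off combine into a complex Gaussian, so this is Weber's
integral. -/
theorem norm_weightedInner_SaKExt_le {a : ℝ} (ha : 0 ≤ a) (z : ℝ) {ε : ℝ} (hε : 0 < ε)
    {t t' : ℝ} (ht : t ≠ 0) (ht' : t' ≠ 0) (htt' : t ≠ t') :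
    ‖weightedInner (powMeasure a) (fun ζ => Real.exp (-(ε * ζ ^ 2))) (fun ζ => SaKExt a z ζ t)
        (fun ζ => SaKExt a z ζ t')‖ ≤
      2 ^ (1 - a) / Real.Gamma ((a + 1) / 2) * |t - t'| ^ (-((a + 1) / 2)) := by
  have hG := Real.Gamma_pos_of_pos (show 0 < (a + 1) / 2 by linarith)
  have hweber := norm_integral_besselClifford_mul_besselClifford_powMeasure_le ha
    (hε.trans_eq (re_chirpWidth ε t t').symm) (z / (4 * t)) (z / (4 * t'))
  simp only [weightedInner, exp_mul_SaKExt_mul_conj_SaKExt]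
  rw [integral_const_mul, norm_mul, norm_mul, norm_mul, RCLike.norm_conj, norm_pow,
    Complex.norm_of_nonneg hG.le, norm_Sa0 (by linarith), norm_Sa0 (by linarith)]
  have h4 : (2 : ℝ) ^ (-a) * 2 ^ (-a) * 4 ^ ((a + 1) / 2) = 2 ^ (1 - a) := by
    rw [show (4 : ℝ) = 2 ^ (2 : ℝ) by norm_num, ← Real.rpow_mul two_pos.le,
      ← Real.rpow_add two_pos, ← Real.rpow_add two_pos]
    ring_nf
  have T := abs_pos.2 ht
  have T' := abs_pos.2 ht'
  have hd : 0 < |t - t'| := abs_pos.2 (sub_ne_zero.2 htt')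
  set b := (a + 1) / 2
  calc _ ≤ 2 ^ (-a) / Real.Gamma b * |t| ^ (-b) * (2 ^ (-a) / Real.Gamma b * |t'| ^ (-b)) *
        Real.Gamma b ^ 2 * ((Real.Gamma b)⁻¹ * (|t - t'| / (4 * |t| * |t'|)) ^ (-b)) := by
        gcongr
        refine hweber.trans ?_
        gcongr ?_ * ?_
        exact Real.rpow_le_rpow_of_nonpos (by positivity)
          (div_le_norm_chirpWidth ε ht ht') (by simp only [b]; linarith)
    _ = 2 ^ (-a) * 2 ^ (-a) * 4 ^ b / Real.Gamma b * |t - t'| ^ (-b) := by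
        rw [Real.div_rpow hd.le (by positivity), Real.mul_rpow (by positivity) T'.le,
          Real.mul_rpow four_pos.le T.le, Real.rpow_neg four_pos.le]
        field_simp
    _ = _ := by rw [h4]

theorem lintegral_comp_abs {φ : ℝ → ℝ≥0∞} (hφ : Measurable φ) :
    ∫⁻ u, φ |u| = 2 * ∫⁻ u in Set.Ioi (0 : ℝ), φ u := by
  have hpos : ∫⁻ u in Set.Ioi (0 : ℝ), φ |u| = ∫⁻ u in Set.Ioi (0 : ℝ), φ u :=
    setLIntegral_congr_fun measurableSet_Ioi fun u hu => by rw [abs_of_pos hu]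
  have hneg := (Measure.measurePreserving_neg (volume : Measure ℝ)).setLIntegral_comp_preimage
    measurableSet_Iic (hφ.comp measurable_norm) (s := Set.Iic 0)
  simp only [Set.neg_preimage, Set.neg_Iic, neg_zero, Function.comp_apply, norm_neg,
    Real.norm_eq_abs, setLIntegral_congr Ioi_ae_eq_Ici.symm] at hneg
  rw [← lintegral_add_compl _ (measurableSet_Ioi (a := (0 : ℝ))), Set.compl_Ioi, ← hneg, hpos,
    two_mul]

theorem setLIntegral_comp_abs_sub {φ : ℝ → ℝ≥0∞} (hφ : Measurable φ) {S : Set ℝ}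
    (hS : MeasurableSet S) (t : ℝ) :
    ∫⁻ s in {s | |t - s| ∈ S}, φ |t - s| = 2 * ∫⁻ u in Set.Ioi 0 ∩ S, φ u := by
  have hS' : MeasurableSet {s | |t - s| ∈ S} := by
    have : Measurable fun s => |t - s| := by fun_prop
    exact this hS
  rw [Set.inter_comm, ← Measure.restrict_restrict hS, ← lintegral_indicator hS,
    ← lintegral_indicator hS', ← lintegral_comp_abs (hφ.indicator hS),
    ← lintegral_sub_left_eq_self (fun u => S.indicator φ |u|) t]
  rfl

theorem lintegral_rpow_neg_Ioc {β R : ℝ} (hβ : β < 1) (hR : 0 ≤ R) :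
    ∫⁻ u in Set.Ioc 0 R, ENNReal.ofReal (u ^ (-β)) = ENNReal.ofReal (R ^ (1 - β) / (1 - β)) := by
  have hint := intervalIntegral.intervalIntegrable_rpow' (a := 0) (b := R)
    (show -1 < -β by linarith)
  rw [intervalIntegrable_iff_integrableOn_Ioc_of_le hR] at hint
  have hnonneg : 0 ≤ᵐ[volume.restrict (Set.Ioc 0 R)] fun u => u ^ (-β) := by
    filter_upwards [ae_restrict_mem measurableSet_Ioc] with u hu using Real.rpow_nonneg hu.1.le _
  rw [← ofReal_integral_eq_lintegral_ofReal hint hnonneg, ← intervalIntegral.integral_of_le hR,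
    integral_rpow (Or.inl (by linarith)), Real.zero_rpow (by linarith), sub_zero, neg_add_eq_sub]

theorem lintegral_rpow_neg_two_Ioi {R : ℝ} (hR : 0 < R) :
    ∫⁻ u in Set.Ioi R, ENNReal.ofReal (u ^ (-2 : ℝ)) = ENNReal.ofReal R⁻¹ := by
  have hnonneg : 0 ≤ᵐ[volume.restrict (Set.Ioi R)] fun u => u ^ (-2 : ℝ) := by
    filter_upwards [ae_restrict_mem measurableSet_Ioi] with u hu
      using Real.rpow_nonneg (hR.trans hu).le _
  rw [← ofReal_integral_eq_lintegral_ofReal (integrableOn_Ioi_rpow_of_lt (by norm_num) hR)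
    hnonneg, integral_Ioi_rpow_of_lt (by norm_num) hR]
  norm_num [Real.rpow_neg_one]

/-- The kernel `|u| ^ (-β)` of the one-dimensional Riesz potential. -/
def rieszKernel (β u : ℝ) : ℝ≥0∞ := ENNReal.ofReal (|u| ^ (-β))

@[fun_prop]
theorem measurable_rieszKernel (β : ℝ) : Measurable (rieszKernel β) := by
  unfold rieszKernel
  fun_prop

theorem rieszKernel_sub_comm (β s t : ℝ) : rieszKernel β (s - t) = rieszKernel β (t - s) := by
  rw [rieszKernel, abs_sub_comm, rieszKernel]

theorem setLIntegral_rieszKernel_near {β R : ℝ} (hβ : β < 1) (hR : 0 ≤ R) (t : ℝ) :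
    ∫⁻ s in {s | |t - s| ≤ R}, rieszKernel β (t - s) =
      2 * ENNReal.ofReal (R ^ (1 - β) / (1 - β)) := by
  rw [← lintegral_rpow_neg_Ioc hβ hR, ← Set.Ioi_inter_Iic]
  exact setLIntegral_comp_abs_sub (φ := fun u => ENNReal.ofReal (u ^ (-β))) (by fun_prop)
    measurableSet_Iic t

theorem setLIntegral_rieszKernel_rpow_far {R q : ℝ} (hq : 0 < q) (hR : 0 < R) (t : ℝ) :
    ∫⁻ s in {s | R < |t - s|}, rieszKernel (2 / q) (t - s) ^ q = 2 * ENNReal.ofReal R⁻¹ := by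
  have hpow : ∀ u : ℝ, rieszKernel (2 / q) u ^ q = ENNReal.ofReal (|u| ^ (-2 : ℝ)) := fun u => by
    rw [rieszKernel, ENNReal.ofReal_rpow_of_nonneg (by positivity) hq.le,
      ← Real.rpow_mul (abs_nonneg u), neg_mul, div_mul_cancel₀ _ hq.ne']
  simp only [hpow]
  have hsub : Set.Ioi 0 ∩ Set.Ioi R = Set.Ioi R := by rw [Set.Ioi_inter_Ioi, max_eq_right hR.le]
  rw [← lintegral_rpow_neg_two_Ioi hR, ← hsub]
  exact setLIntegral_comp_abs_sub (φ := fun u => ENNReal.ofReal (u ^ (-2 : ℝ))) (by fun_prop)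
    measurableSet_Ioi t

theorem setLIntegral_mul_rieszKernel_far_le {p q : ℝ} (hpq : p.HolderConjugate q)
    {h : ℝ → ℝ≥0∞} (hh : Measurable h) {R : ℝ} (hR : 0 < R) (t : ℝ) :
    ∫⁻ s in {s | R < |t - s|}, h s * rieszKernel (2 / q) (t - s) ≤
      2 ^ (1 / q) * (∫⁻ s, h s ^ p) ^ (1 / p) * ENNReal.ofReal (R ^ (-(1 / q))) := by
  have hholder := ENNReal.lintegral_mul_le_Lp_mul_Lq (volume.restrict {s | R < |t - s|}) hpq
    hh.aemeasurable (g := fun s => rieszKernel (2 / q) (t - s)) (by fun_prop)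
  have hq := hpq.symm.nonneg
  rw [setLIntegral_rieszKernel_rpow_far hpq.symm.pos hR, ENNReal.mul_rpow_of_nonneg _ _
    (by positivity), ENNReal.ofReal_rpow_of_nonneg (by positivity) (by positivity),
    Real.inv_rpow hR.le, ← Real.rpow_neg hR.le, ← mul_assoc, mul_comm _ (2 ^ (1 / q))] at hholder
  refine hholder.trans ?_
  gcongr
  · exact one_div_nonneg.2 hpq.nonneg
  · exact Measure.restrict_le_self

/-- Inside the ball of radius `R = x ^ (-p)` around `t` the constraint `h ≤ x` is used, outside it
Hölder's inequality; this `R` balances the two contributions. -/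
theorem setLIntegral_le_mul_rieszKernel_le {p q : ℝ} (hpq : p.HolderConjugate q) (hq : 2 < q)
    {h : ℝ → ℝ≥0∞} (hh : Measurable h) {x : ℝ} (hx : 0 < x) (t : ℝ) :
    ∫⁻ s in {s | h s ≤ ENNReal.ofReal x}, h s * rieszKernel (2 / q) (t - s) ≤
      (2 * ENNReal.ofReal (1 / (1 - 2 / q)) + 2 ^ (1 / q) * (∫⁻ s, h s ^ p) ^ (1 / p)) *
        ENNReal.ofReal (x ^ (p - 1)) := by
  have hq0 : 0 < q := by linarith
  have hβ : 0 < 1 - 2 / q := sub_pos.2 ((div_lt_one hq0).2 hq)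
  have hpq' : p / q = p - 1 := by rw [div_eq_iff hq0.ne', hpq.sub_one_mul_conj]
  set K : ℝ → ℝ≥0∞ := fun s => rieszKernel (2 / q) (t - s)
  set R : ℝ := x ^ (-p)
  have hR : 0 < R := by positivity
  have hnear : ∫⁻ s in {s | |t - s| ≤ R}, ENNReal.ofReal x * K s =
      2 * ENNReal.ofReal (1 / (1 - 2 / q)) * ENNReal.ofReal (x ^ (p - 1)) := by
    have hpow : x * R ^ (1 - 2 / q) = x ^ (p - 1) := by
      rw [← Real.rpow_mul hx.le, mul_comm, ← Real.rpow_add_one hx.ne']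
      congr 1
      linear_combination 2 * hpq'
    rw [lintegral_const_mul _ (by fun_prop), setLIntegral_rieszKernel_near (by linarith) hR.le,
      mul_left_comm, ← ENNReal.ofReal_mul hx.le, mul_assoc, ← ENNReal.ofReal_mul (by positivity),
      ← hpow]
    ring_nf
  have hfar := setLIntegral_mul_rieszKernel_far_le hpq hh hR t
  rw [← Real.rpow_mul hx.le, neg_mul_neg, mul_one_div, hpq'] at hfar
  calc ∫⁻ s in {s | h s ≤ ENNReal.ofReal x}, h s * K s
      ≤ (∫⁻ s in {s | h s ≤ ENNReal.ofReal x ∧ |t - s| ≤ R}, h s * K s) +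
          ∫⁻ s in {s | R < |t - s|}, h s * K s := by
        refine (lintegral_mono_set fun s hs => ?_).trans (lintegral_union_le _ _ _)
        exact (le_or_gt |t - s| R).imp (fun h => ⟨hs, h⟩) id
    _ ≤ (∫⁻ s in {s | |t - s| ≤ R}, ENNReal.ofReal x * K s) +
          ∫⁻ s in {s | R < |t - s|}, h s * K s := by
        gcongr ?_ + _
        refine (setLIntegral_mono (by fun_prop) fun s hs => ?_).trans
          (lintegral_mono_set fun s hs => hs.2)
        exact mul_le_mul_left hs.1 _
    _ ≤ _ := by
        rw [hnear, add_mul]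
        gcongr

/-- The Riesz interaction energy of `f` and `g`. -/
def rieszEnergy (β : ℝ) (f g : ℝ → ℝ≥0∞) : ℝ≥0∞ :=
  ∫⁻ t, ∫⁻ s, f s * g t * rieszKernel β (t - s)

theorem rieszEnergy_comm {β : ℝ} {f g : ℝ → ℝ≥0∞} (hf : Measurable f) (hg : Measurable g) :
    rieszEnergy β f g = rieszEnergy β g f := by
  rw [rieszEnergy, lintegral_lintegral_swap (by fun_prop)]
  simp only [rieszEnergy, mul_comm (f _), rieszKernel_sub_comm β]

theorem rieszEnergy_mono {β : ℝ} {f₁ f₂ g₁ g₂ : ℝ → ℝ≥0∞} (hf : f₁ ≤ f₂) (hg : g₁ ≤ g₂) :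
    rieszEnergy β f₁ g₁ ≤ rieszEnergy β f₂ g₂ := by
  unfold rieszEnergy
  gcongr
  exacts [hf _, hg _]

theorem rieszEnergy_const_mul {β : ℝ} {f g : ℝ → ℝ≥0∞} (hf : Measurable f) (hg : Measurable g)
    (c c' : ℝ≥0∞) :
    rieszEnergy β (fun s => c * f s) (fun t => c' * g t) = c * c' * rieszEnergy β f g := by
  have hmeas : Measurable fun z : ℝ × ℝ => f z.2 * g z.1 * rieszKernel β (z.1 - z.2) := by fun_prop
  unfold rieszEnergy
  rw [← lintegral_const_mul _ hmeas.lintegral_prod_right']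
  refine lintegral_congr fun t => ?_
  rw [← lintegral_const_mul _ (by fun_prop)]
  refine lintegral_congr fun s => ?_
  ring

/-- The energy is twice that of the region where the weight at `t` dominates the one at `s`. -/
theorem rieszEnergy_self_le {β : ℝ} {h : ℝ → ℝ≥0∞} (hh : Measurable h) :
    rieszEnergy β h h ≤
      2 * ∫⁻ t, h t * ∫⁻ s in {s | h s ≤ h t}, h s * rieszKernel β (t - s) := by
  set w : ℝ × ℝ → ℝ≥0∞ := fun z => h z.2 * h z.1 * rieszKernel β (z.1 - z.2) with hw_def
  have hw : Measurable w := by fun_prop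
  have hw_swap : ∀ z, w z.swap = w z := fun z => by
    simp only [hw_def, Prod.fst_swap, Prod.snd_swap, rieszKernel_sub_comm β z.1, mul_comm (h z.1)]
  set S : Set (ℝ × ℝ) := {z | h z.2 ≤ h z.1}
  have hS : MeasurableSet S := measurableSet_le (by fun_prop) (by fun_prop)
  have hlower : ∫⁻ z in S, w z =
      ∫⁻ t, h t * ∫⁻ s in {s | h s ≤ h t}, h s * rieszKernel β (t - s) := by
    rw [← lintegral_indicator hS, Measure.volume_eq_prod,
      lintegral_prod _ (hw.indicator hS).aemeasurable]
    refine lintegral_congr fun t => ?_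
    rw [← lintegral_const_mul _ (by fun_prop),
      ← lintegral_indicator (measurableSet_le hh measurable_const)]
    congr with s
    simp only [Set.indicator_apply, S, w, Set.mem_ofPred_eq, mul_left_comm (h t), mul_assoc]
  have hupper : ∫⁻ z in Prod.swap ⁻¹' S, w z = ∫⁻ z in S, w z := by
    simp only [← (Measure.measurePreserving_swap (μ := volume) (ν := volume)
      ).setLIntegral_comp_preimage hS hw, hw_swap, Measure.volume_eq_prod]
  have hcover : S ∪ Prod.swap ⁻¹' S = Set.univ :=
    Set.eq_univ_of_forall fun z => le_total (h z.2) (h z.1)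
  calc rieszEnergy β h h = ∫⁻ z in S ∪ Prod.swap ⁻¹' S, w z := by
        rw [hcover, Measure.restrict_univ, Measure.volume_eq_prod, lintegral_prod _ (by fun_prop)]
        rfl
    _ ≤ (∫⁻ z in S, w z) + ∫⁻ z in Prod.swap ⁻¹' S, w z := lintegral_union_le _ _ _
    _ = _ := by rw [hupper, hlower, two_mul]

/-- The constant in the one-dimensional Hardy–Littlewood–Sobolev inequality. -/
def hlsConst (q : ℝ) : ℝ≥0∞ := 8 * (ENNReal.ofReal (1 / (1 - 2 / q)) + 1)

theorem hlsConst_ne_zero (q : ℝ) : hlsConst q ≠ 0 := by simp [hlsConst]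

theorem hlsConst_ne_top (q : ℝ) : hlsConst q ≠ ∞ := by simp [hlsConst, ENNReal.mul_eq_top]

theorem mul_setLIntegral_le_mul_rieszKernel_le {p q : ℝ} (hpq : p.HolderConjugate q) (hq : 2 < q)
    {h : ℝ → ℝ≥0∞} (hh : Measurable h) (hnorm : ∫⁻ s, h s ^ p ≤ 2) {t : ℝ} (ht : h t ≠ ∞) :
    h t * ∫⁻ s in {s | h s ≤ h t}, h s * rieszKernel (2 / q) (t - s) ≤
      2 * (ENNReal.ofReal (1 / (1 - 2 / q)) + 1) * h t ^ p := by
  rcases eq_or_ne (h t) 0 with h0 | h0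
  · simp [h0]
  have hp := hpq.pos
  have hx : 0 < (h t).toReal := ENNReal.toReal_pos h0 ht
  have hlevel := setLIntegral_le_mul_rieszKernel_le hpq hq hh hx t
  have hroot : 2 ^ (1 / q) * (∫⁻ s, h s ^ p) ^ (1 / p) ≤ 2 := by
    calc 2 ^ (1 / q) * (∫⁻ s, h s ^ p) ^ (1 / p) ≤ 2 ^ (1 / q) * 2 ^ (1 / p) := by gcongr
      _ = 2 := by
        rw [← ENNReal.rpow_add _ _ two_ne_zero ENNReal.ofNat_ne_top, one_div, one_div, add_comm,
          hpq.inv_add_inv_eq_one, ENNReal.rpow_one]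
  have hpow : h t * ENNReal.ofReal ((h t).toReal ^ (p - 1)) = h t ^ p := by
    rw [← ENNReal.ofReal_rpow_of_pos hx, ENNReal.ofReal_toReal ht, ENNReal.rpow_sub _ _ h0 ht,
      ENNReal.rpow_one, ENNReal.mul_div_cancel h0 ht]
  rw [ENNReal.ofReal_toReal ht] at hlevel
  calc h t * ∫⁻ s in {s | h s ≤ h t}, h s * rieszKernel (2 / q) (t - s)
      ≤ h t * ((2 * ENNReal.ofReal (1 / (1 - 2 / q)) + 2) *
          ENNReal.ofReal ((h t).toReal ^ (p - 1))) := by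
        gcongr
        refine hlevel.trans ?_
        gcongr
    _ = _ := by
        rw [← hpow]
        ring

theorem rieszEnergy_self_le_hlsConst {p q : ℝ} (hpq : p.HolderConjugate q) (hq : 2 < q)
    {h : ℝ → ℝ≥0∞} (hh : Measurable h) (hnorm : ∫⁻ s, h s ^ p ≤ 2) :
    rieszEnergy (2 / q) h h ≤ hlsConst q := by
  have hfinite : ∀ᵐ t, h t ≠ ∞ := by
    filter_upwards [ae_lt_top (hh.pow_const p)
      (ne_top_of_le_ne_top ENNReal.ofNat_ne_top hnorm)] with t ht h_top
    simp [h_top, ENNReal.top_rpow_of_pos hpq.pos] at ht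
  calc rieszEnergy (2 / q) h h
      ≤ 2 * ∫⁻ t, h t * ∫⁻ s in {s | h s ≤ h t}, h s * rieszKernel (2 / q) (t - s) :=
        rieszEnergy_self_le hh
    _ ≤ 2 * ∫⁻ t, 2 * (ENNReal.ofReal (1 / (1 - 2 / q)) + 1) * h t ^ p := by
        gcongr 2 * ?_
        refine lintegral_mono_ae ?_
        filter_upwards [hfinite] with t ht
          using mul_setLIntegral_le_mul_rieszKernel_le hpq hq hh hnorm ht
    _ ≤ 2 * (2 * (ENNReal.ofReal (1 / (1 - 2 / q)) + 1) * 2) := by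
        rw [lintegral_const_mul _ (hh.pow_const p)]
        gcongr
    _ = hlsConst q := by
        rw [hlsConst]
        ring

theorem rieszEnergy_eq_zero_of_lintegral_rpow_eq_zero {β p : ℝ} (hp : 0 < p) {f : ℝ → ℝ≥0∞}
    (hf : Measurable f) (hf0 : ∫⁻ s, f s ^ p = 0) (g : ℝ → ℝ≥0∞) : rieszEnergy β f g = 0 := by
  rw [lintegral_eq_zero_iff (hf.pow_const p)] at hf0
  refine lintegral_eq_zero_of_ae_eq_zero (ae_of_all _ fun t => ?_)
  refine lintegral_eq_zero_of_ae_eq_zero ?_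
  filter_upwards [hf0] with s hs
  rw [(ENNReal.rpow_eq_zero_iff_of_pos hp).1 hs, zero_mul, zero_mul, Pi.zero_apply]

theorem lintegral_inv_Lp_mul_rpow_le_one {p : ℝ} (hp : 0 < p) {f : ℝ → ℝ≥0∞} (hf : Measurable f) :
    ∫⁻ s, (((∫⁻ u, f u ^ p) ^ (1 / p))⁻¹ * f s) ^ p ≤ 1 := by
  simp only [ENNReal.mul_rpow_of_nonneg _ _ hp.le, ENNReal.inv_rpow, one_div,
    ENNReal.rpow_inv_rpow hp.ne']
  rw [lintegral_const_mul _ (hf.pow_const p)]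
  exact ENNReal.inv_mul_le_one _

/-- By scaling the energy of `f` and `g` is controlled by that of `max (f / ‖f‖) (g / ‖g‖)` with
itself. -/
theorem rieszEnergy_le_hlsConst_mul {p q : ℝ} (hpq : p.HolderConjugate q) (hq : 2 < q)
    {f g : ℝ → ℝ≥0∞} (hf : Measurable f) (hg : Measurable g) :
    rieszEnergy (2 / q) f g ≤
      hlsConst q * ((∫⁻ s, f s ^ p) ^ (1 / p) * (∫⁻ s, g s ^ p) ^ (1 / p)) := by
  have hp := hpq.pos
  set Nf := (∫⁻ s, f s ^ p) ^ (1 / p) with hNf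
  set Ng := (∫⁻ s, g s ^ p) ^ (1 / p) with hNg
  rcases eq_or_ne Nf 0 with hf0 | hf0
  · rw [hNf, ENNReal.rpow_eq_zero_iff_of_pos (by positivity)] at hf0
    exact (rieszEnergy_eq_zero_of_lintegral_rpow_eq_zero hp hf hf0 g).trans_le zero_le
  rcases eq_or_ne Ng 0 with hg0 | hg0
  · rw [hNg, ENNReal.rpow_eq_zero_iff_of_pos (by positivity)] at hg0
    rw [rieszEnergy_comm hf hg]
    exact (rieszEnergy_eq_zero_of_lintegral_rpow_eq_zero hp hg hg0 f).trans_le zero_le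
  rcases eq_or_ne Nf ∞ with hf_top | hf_top
  · simp [hf_top, ENNReal.top_mul hg0, ENNReal.mul_top (hlsConst_ne_zero q)]
  rcases eq_or_ne Ng ∞ with hg_top | hg_top
  · simp [hg_top, ENNReal.mul_top hf0, ENNReal.mul_top (hlsConst_ne_zero q)]
  have hmax : ∫⁻ s, max (Nf⁻¹ * f s) (Ng⁻¹ * g s) ^ p ≤ 2 := by
    calc ∫⁻ s, max (Nf⁻¹ * f s) (Ng⁻¹ * g s) ^ p
        ≤ ∫⁻ s, ((Nf⁻¹ * f s) ^ p + (Ng⁻¹ * g s) ^ p) := by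
          gcongr with s
          rw [(ENNReal.monotone_rpow_of_nonneg hp.le).map_max]
          exact max_le_add_of_nonneg zero_le zero_le
      _ ≤ 1 + 1 := by
          rw [lintegral_add_left (by fun_prop)]
          gcongr <;> exact lintegral_inv_Lp_mul_rpow_le_one hp ‹_›
      _ = 2 := one_add_one_eq_two
  have hscaled : Nf⁻¹ * Ng⁻¹ * rieszEnergy (2 / q) f g ≤ hlsConst q := by
    rw [← rieszEnergy_const_mul hf hg]
    exact (rieszEnergy_mono (fun s => le_max_left _ _) fun s => le_max_right _ _).trans
      (rieszEnergy_self_le_hlsConst hpq hq ((hf.const_mul _).max (hg.const_mul _)) hmax)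
  rw [← ENNReal.mul_inv (Or.inl hf0) (Or.inl hf_top), mul_comm, ← div_eq_mul_inv] at hscaled
  exact (ENNReal.div_le_iff (mul_ne_zero hf0 hg0) (ENNReal.mul_ne_top hf_top hg_top)).1 hscaled

section KernelOp

variable {α γ : Type*} [MeasurableSpace α] {μ : Measure α} {k : γ → α → ℂ} {f g : α → ℂ} {A : ℝ}

/-- The integral operator with kernel `k`. -/
def kernelOp (μ : Measure α) (k : γ → α → ℂ) (f : α → ℂ) (x : γ) : ℂ := ∫ y, k x y * f y ∂μ

theorem kernelOp_congr_ae (hfg : f =ᵐ[μ] g) : kernelOp μ k f = kernelOp μ k g :=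
  funext fun x => integral_congr_ae (hfg.mono fun y hy => by simp only [hy])

theorem kernelOp_zero : kernelOp μ k 0 = 0 := by
  ext x
  simp [kernelOp]

theorem enorm_kernelOp_le (hA : ∀ x y, ‖k x y‖ ≤ A) (hf : Measurable f) (x : γ) :
    ‖kernelOp μ k f x‖ₑ ≤ ENNReal.ofReal A * ∫⁻ y, ‖f y‖ₑ ∂μ := by
  rw [← lintegral_const_mul _ hf.enorm]
  refine (enorm_integral_le_lintegral_enorm _).trans (lintegral_mono fun y => ?_)
  rw [enorm_mul, ← ofReal_norm (k x y)]
  gcongr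
  exact hA x y

/-- The part of `f` where `‖f‖` is large enough is controlled in `L¹` by the `L^p` norm. -/
theorem setLIntegral_enorm_le_of_lt_mul_rpow {p l M : ℝ} (hp : 1 < p) (hl : 0 < l) (hM : 0 < M)
    (hf : Measurable f) :
    ∫⁻ y in {y | l * ‖f y‖ ^ (p - 1) ≤ M}ᶜ, ‖f y‖ₑ ∂μ ≤
      ENNReal.ofReal (l / M) * ∫⁻ y, ‖f y‖ₑ ^ p ∂μ := by
  rw [← lintegral_const_mul _ (by fun_prop)]
  refine (setLIntegral_mono (g := fun y => ENNReal.ofReal (l / M) * ‖f y‖ₑ ^ p) (by fun_prop)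
    fun y hy => ?_).trans (setLIntegral_le_lintegral _ _)
  have hy : M < l * ‖f y‖ ^ (p - 1) := not_le.1 hy
  have hfy : 0 < ‖f y‖ := by
    refine (norm_nonneg _).lt_of_ne fun h0 => ?_
    rw [← h0, Real.zero_rpow (by linarith), mul_zero] at hy
    exact hy.not_gt hM
  rw [← ofReal_norm, ENNReal.ofReal_rpow_of_pos hfy, ← ENNReal.ofReal_mul (by positivity)]
  refine ENNReal.ofReal_le_ofReal ?_
  rw [Real.rpow_sub_one hfy.ne', ← mul_div_assoc, lt_div_iff₀ hfy] at hy
  rw [div_mul_eq_mul_div, le_div_iff₀ hM]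
  linarith

theorem norm_kernelOp_indicator_le_half (hA0 : 0 < A) (hA : ∀ x y, ‖k x y‖ ≤ A) {p N l : ℝ}
    (hp : 1 < p) (hN : 0 < N) (hl : 0 < l) (hf : Measurable f)
    (hfN : ∫⁻ y, ‖f y‖ₑ ^ p ∂μ ≤ ENNReal.ofReal N) (x : γ) :
    ‖kernelOp μ k ({y | l * ‖f y‖ ^ (p - 1) ≤ 2 * A * N}ᶜ.indicator f) x‖ ≤ l / 2 := by
  have hS : MeasurableSet {y | l * ‖f y‖ ^ (p - 1) ≤ 2 * A * N} :=
    measurableSet_le (by fun_prop) measurable_const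
  rw [← ENNReal.ofReal_le_ofReal_iff (by positivity), ofReal_norm]
  refine (enorm_kernelOp_le hA (hf.indicator hS.compl) x).trans ?_
  simp only [enorm_indicator_eq_indicator_enorm]
  rw [lintegral_indicator hS.compl]
  grw [setLIntegral_enorm_le_of_lt_mul_rpow hp hl (by positivity) hf, hfN]
  rw [← ENNReal.ofReal_mul (by positivity), ← ENNReal.ofReal_mul (by positivity)]
  refine ENNReal.ofReal_le_ofReal (le_of_eq ?_)
  field_simp

variable [MeasurableSpace γ] {ν : Measure γ}

/-- The integral operator with kernel `k` does not increase the `L²` norm. Restricting to integrable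
functions makes the defining integral meaningful for bounded kernels. -/
def IsL2Contraction (μ : Measure α) (ν : Measure γ) (k : γ → α → ℂ) : Prop :=
  ∀ f : α → ℂ, Measurable f → Integrable f μ →
    ∫⁻ x, ‖kernelOp μ k f x‖ₑ ^ (2 : ℝ) ∂ν ≤ ∫⁻ y, ‖f y‖ₑ ^ (2 : ℝ) ∂μ

theorem measurable_kernelOp [SFinite μ] (hk : Measurable (Function.uncurry k)) (hf : Measurable f) :
    Measurable (kernelOp μ k f) := by
  have hmeas : Measurable fun z : γ × α => Function.uncurry k z * f z.2 := by fun_prop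
  exact hmeas.stronglyMeasurable.integral_prod_right.measurable

theorem kernelOp_add (hk : Measurable (Function.uncurry k)) (hA : ∀ x y, ‖k x y‖ ≤ A)
    (hf : Integrable f μ) (hg : Integrable g μ) (x : γ) :
    kernelOp μ k (f + g) x = kernelOp μ k f x + kernelOp μ k g x := by
  have hmul {u : α → ℂ} (hu : Integrable u μ) : Integrable (fun y => k x y * u y) μ :=
    hu.bdd_mul (hk.comp measurable_prodMk_left).aestronglyMeasurable (ae_of_all _ (hA x))
  simp only [kernelOp, Pi.add_apply, mul_add]
  exact integral_add (hmul hf) (hmul hg)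

/-- Chebyshev's inequality for the image of the small part of `f`; the image of the large part is
pointwise at most `l / 2`. -/
theorem measure_lt_norm_kernelOp_mul_le [SFinite μ] (hk : Measurable (Function.uncurry k))
    (hA0 : 0 < A) (hA : ∀ x y, ‖k x y‖ ≤ A) (hL2 : IsL2Contraction μ ν k) {p N l : ℝ} (hp : 1 < p)
    (hN : 0 < N) (hl : 0 < l) (hf : Measurable f) (hfi : Integrable f μ)
    (hfN : ∫⁻ y, ‖f y‖ₑ ^ p ∂μ = ENNReal.ofReal N) :
    ν {x | l < ‖kernelOp μ k f x‖} * ENNReal.ofReal (l ^ 2) ≤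
      4 * ∫⁻ y in {y | l * ‖f y‖ ^ (p - 1) ≤ 2 * A * N}, ‖f y‖ₑ ^ (2 : ℝ) ∂μ := by
  set S : Set α := {y | l * ‖f y‖ ^ (p - 1) ≤ 2 * A * N}
  have hS : MeasurableSet S := measurableSet_le (by fun_prop) measurable_const
  have hlow : Measurable (S.indicator f) := hf.indicator hS
  have hlarge := norm_kernelOp_indicator_le_half (μ := μ) hA0 hA hp hN hl hf hfN.le
  have hsubset : {x | l < ‖kernelOp μ k f x‖} ⊆
      {x | ENNReal.ofReal (l ^ 2 / 4) ≤ ‖kernelOp μ k (S.indicator f) x‖ₑ ^ (2 : ℝ)} := by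
    intro x hx
    have hsplit := kernelOp_add hk hA (hfi.indicator hS) (hfi.indicator hS.compl) x
    rw [Set.indicator_self_add_compl] at hsplit
    rw [Set.mem_ofPred_eq, hsplit] at hx
    have hhalf : l / 2 ≤ ‖kernelOp μ k (S.indicator f) x‖ := by
      linarith [norm_add_le (kernelOp μ k (S.indicator f) x) (kernelOp μ k (Sᶜ.indicator f) x),
        hlarge x]
    rw [Set.mem_ofPred_eq, ← ofReal_norm,
      ENNReal.ofReal_rpow_of_nonneg (norm_nonneg _) zero_le_two, Real.rpow_two]
    refine ENNReal.ofReal_le_ofReal ?_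
    nlinarith
  calc ν {x | l < ‖kernelOp μ k f x‖} * ENNReal.ofReal (l ^ 2)
      ≤ ν {x | ENNReal.ofReal (l ^ 2 / 4) ≤ ‖kernelOp μ k (S.indicator f) x‖ₑ ^ (2 : ℝ)} *
          ENNReal.ofReal (l ^ 2) := by gcongr
    _ = 4 * (ENNReal.ofReal (l ^ 2 / 4) *
          ν {x | ENNReal.ofReal (l ^ 2 / 4) ≤ ‖kernelOp μ k (S.indicator f) x‖ₑ ^ (2 : ℝ)}) := by
        rw [← mul_assoc, ← ENNReal.ofReal_ofNat 4, ← ENNReal.ofReal_mul (by norm_num),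
          mul_div_cancel₀ _ (by norm_num), mul_comm]
    _ ≤ 4 * ∫⁻ x, ‖kernelOp μ k (S.indicator f) x‖ₑ ^ (2 : ℝ) ∂ν := by
        gcongr
        exact mul_meas_ge_le_lintegral₀
          ((measurable_kernelOp hk hlow).enorm.pow_const _).aemeasurable _
    _ ≤ 4 * ∫⁻ y, ‖S.indicator f y‖ₑ ^ (2 : ℝ) ∂μ := by
        gcongr
        exact hL2 _ hlow (hfi.indicator hS)
    _ = 4 * ∫⁻ y in S, ‖f y‖ₑ ^ (2 : ℝ) ∂μ := by
        rw [← lintegral_indicator hS]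
        congr with y
        by_cases hy : y ∈ S <;> simp [hy]

theorem setLIntegral_rpow_sub_three {p r : ℝ} (hpr : p.HolderConjugate r) (hr : 2 < r) {M c : ℝ}
    (hM : 0 < M) (hc : 0 < c) :
    ∫⁻ l in {l | l * c ^ (p - 1) ≤ M} ∩ Set.Ioi 0, ENNReal.ofReal (l ^ (r - 3)) =
      ENNReal.ofReal (M ^ (r - 2) / (r - 2)) * ENNReal.ofReal (c ^ (p - 2)) := by
  have hregion : {l | l * c ^ (p - 1) ≤ M} ∩ Set.Ioi 0 = Set.Ioc 0 (M / c ^ (p - 1)) := by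
    ext l
    simp only [Set.mem_inter_iff, Set.mem_ofPred_eq, Set.mem_Ioi, Set.mem_Ioc,
      le_div_iff₀ (Real.rpow_pos_of_pos hc _), and_comm]
  have hexp : (p - 1) * (r - 2) = 2 - p := by linear_combination hpr.sub_one_mul_conj
  have : 0 < r - 2 := by linarith
  have hint := lintegral_rpow_neg_Ioc (β := 3 - r) (R := M / c ^ (p - 1)) (by linarith)
    (by positivity)
  rw [neg_sub, show 1 - (3 - r) = r - 2 by ring] at hint
  rw [hregion, hint, ← ENNReal.ofReal_mul (by positivity), Real.div_rpow hM.le (by positivity),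
    ← Real.rpow_mul hc.le, hexp, ← neg_sub 2 p, Real.rpow_neg hc.le]
  ring_nf

theorem setLIntegral_indicator_rpow_mul_sq_le {p r : ℝ} (hpr : p.HolderConjugate r) (hr : 2 < r)
    {M : ℝ} (hM : 0 < M) (w : ℂ) :
    ∫⁻ l in Set.Ioi 0, {l | l * ‖w‖ ^ (p - 1) ≤ M}.indicator
        (fun l => 4 * ENNReal.ofReal (l ^ (r - 3)) * ‖w‖ₑ ^ (2 : ℝ)) l ≤
      ENNReal.ofReal (4 * (M ^ (r - 2) / (r - 2))) * ‖w‖ₑ ^ p := by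
  rcases eq_or_ne w 0 with rfl | hw
  · simp
  have hc : 0 < ‖w‖ := norm_pos_iff.2 hw
  have hS : MeasurableSet {l : ℝ | l * ‖w‖ ^ (p - 1) ≤ M} :=
    measurableSet_le (by fun_prop) measurable_const
  rw [lintegral_indicator hS, Measure.restrict_restrict hS, lintegral_mul_const _ (by fun_prop),
    lintegral_const_mul _ (by fun_prop), setLIntegral_rpow_sub_three hpr hr hM hc,
    ENNReal.ofReal_mul zero_le_four, ENNReal.ofReal_ofNat, ← ofReal_norm,
    ENNReal.ofReal_rpow_of_pos hc, ENNReal.ofReal_rpow_of_pos hc, Real.rpow_sub hc, mul_assoc,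
    mul_assoc, mul_assoc, ← ENNReal.ofReal_mul (by positivity), Real.rpow_two,
    div_mul_cancel₀ _ (by positivity)]

/-- Layer-cake integration of `measure_lt_norm_kernelOp_mul_le`. -/
theorem lintegral_enorm_kernelOp_rpow_le [SFinite μ] (hk : Measurable (Function.uncurry k))
    (hA0 : 0 < A) (hA : ∀ x y, ‖k x y‖ ≤ A) (hL2 : IsL2Contraction μ ν k) {p r N : ℝ}
    (hpr : p.HolderConjugate r) (hr : 2 < r) (hN : 0 < N) (hf : Measurable f)
    (hfi : Integrable f μ) (hfN : ∫⁻ y, ‖f y‖ₑ ^ p ∂μ = ENNReal.ofReal N) :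
    ∫⁻ x, ‖kernelOp μ k f x‖ₑ ^ r ∂ν ≤
      ENNReal.ofReal (r * (4 * ((2 * A * N) ^ (r - 2) / (r - 2) * N))) := by
  have : 0 < r - 2 := by linarith
  set M := 2 * A * N
  have hM : 0 < M := by positivity
  have hlayer : ∫⁻ x, ‖kernelOp μ k f x‖ₑ ^ r ∂ν = ENNReal.ofReal r *
      ∫⁻ l in Set.Ioi 0, ν {x | l < ‖kernelOp μ k f x‖} * ENNReal.ofReal (l ^ (r - 1)) := by
    rw [← lintegral_rpow_eq_lintegral_meas_lt_mul ν (ae_of_all _ fun x => norm_nonneg _)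
      (measurable_kernelOp hk hf).norm.aemeasurable (by linarith)]
    simp only [← ofReal_norm, ENNReal.ofReal_rpow_of_nonneg (norm_nonneg _) hpr.symm.nonneg]
  set G : ℝ → α → ℝ≥0∞ := fun l y =>
    {z : ℝ × α | z.1 * ‖f z.2‖ ^ (p - 1) ≤ M}.indicator
      (fun z => 4 * ENNReal.ofReal (z.1 ^ (r - 3)) * ‖f z.2‖ₑ ^ (2 : ℝ)) (l, y)
  have hG : Measurable (Function.uncurry G) :=
    (by fun_prop : Measurable _).indicator (measurableSet_le (by fun_prop) measurable_const)
  have hlevel : ∀ l ∈ Set.Ioi (0 : ℝ),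
      ν {x | l < ‖kernelOp μ k f x‖} * ENNReal.ofReal (l ^ (r - 1)) ≤ ∫⁻ y, G l y ∂μ := by
    intro l (hl : 0 < l)
    rw [show r - 1 = 2 + (r - 3) by ring, Real.rpow_add hl, Real.rpow_two,
      ENNReal.ofReal_mul (by positivity), ← mul_assoc]
    grw [measure_lt_norm_kernelOp_mul_le hk hA0 hA hL2 hpr.lt hN hl hf hfi hfN]
    rw [← lintegral_const_mul _ (by fun_prop), ← lintegral_mul_const _ (by fun_prop),
      ← lintegral_indicator (measurableSet_le (by fun_prop) measurable_const)]
    refine lintegral_mono fun y => ?_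
    simp only [G, Set.indicator_apply, Set.mem_ofPred_eq, mul_right_comm, M, le_refl]
  calc ∫⁻ x, ‖kernelOp μ k f x‖ₑ ^ r ∂ν
      ≤ ENNReal.ofReal r * ∫⁻ l in Set.Ioi 0, ∫⁻ y, G l y ∂μ := by
        rw [hlayer]
        gcongr ENNReal.ofReal r * ?_
        exact setLIntegral_mono' measurableSet_Ioi hlevel
    _ = ENNReal.ofReal r * ∫⁻ y, (∫⁻ l in Set.Ioi 0, G l y) ∂μ := by
        rw [lintegral_lintegral_swap hG.aemeasurable]
    _ ≤ ENNReal.ofReal r * ∫⁻ y, ENNReal.ofReal (4 * (M ^ (r - 2) / (r - 2))) * ‖f y‖ₑ ^ p ∂μ := by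
        gcongr with y
        exact setLIntegral_indicator_rpow_mul_sq_le hpr hr hM (f y)
    _ = _ := by
        rw [lintegral_const_mul _ (by fun_prop), hfN, ← ENNReal.ofReal_mul (by positivity),
          ← ENNReal.ofReal_mul hpr.symm.nonneg, mul_assoc 4]

/-- The norm of an operator obtained by interpolating between an `L¹ → L^∞` bound and an
`L²` contraction; the general formula degenerates at `r = 2`. -/
def marcinkiewiczConst (r : ℝ) : ℝ := if r = 2 then 1 else (4 * r / (r - 2) * 2 ^ (r - 2)) ^ (1 / r)

theorem marcinkiewiczConst_pos {r : ℝ} (hr : 2 ≤ r) : 0 < marcinkiewiczConst r := by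
  rcases hr.eq_or_lt with rfl | hr
  · simp [marcinkiewiczConst]
  · have := sub_pos.2 hr
    rw [marcinkiewiczConst, if_neg hr.ne']
    positivity

theorem lintegral_enorm_kernelOp_rpow_le_mul [SFinite μ] (hk : Measurable (Function.uncurry k))
    (hA0 : 0 < A) (hA : ∀ x y, ‖k x y‖ ≤ A) (hL2 : IsL2Contraction μ ν k) {p r : ℝ}
    (hpr : p.HolderConjugate r) (hr : 2 ≤ r) (hf : Measurable f) (hfi : Integrable f μ) :
    (∫⁻ x, ‖kernelOp μ k f x‖ₑ ^ r ∂ν) ^ (1 / r) ≤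
      ENNReal.ofReal (marcinkiewiczConst r * A ^ (1 - 2 / r)) *
        (∫⁻ y, ‖f y‖ₑ ^ p ∂μ) ^ (1 / p) := by
  have hr0 : 0 < r := by linarith
  have hp := hpr.pos
  have hconst := marcinkiewiczConst_pos hr
  rcases hr.eq_or_lt with rfl | hr2
  · obtain rfl : p = 2 := by rw [hpr.symm.conjugate_eq]; norm_num
    simpa [marcinkiewiczConst] using
      ENNReal.rpow_le_rpow (hL2 f hf hfi) (by norm_num : 0 ≤ (1 / 2 : ℝ))
  rcases eq_or_ne (∫⁻ y, ‖f y‖ₑ ^ p ∂μ) 0 with h0 | h0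
  · have hf0 : f =ᵐ[μ] 0 := by
      rw [lintegral_eq_zero_iff (by fun_prop)] at h0
      filter_upwards [h0] with y hy
      simpa [hp, hp.not_gt] using hy
    simp [kernelOp_congr_ae hf0, kernelOp_zero, hr0]
  rcases eq_or_ne (∫⁻ y, ‖f y‖ₑ ^ p ∂μ) ∞ with h_top | h_top
  · have : 0 < marcinkiewiczConst r * A ^ (1 - 2 / r) := by positivity
    simp [h_top, hp, ENNReal.mul_top, this]
  obtain ⟨N, hN⟩ : ∃ N, N = (∫⁻ y, ‖f y‖ₑ ^ p ∂μ).toReal := ⟨_, rfl⟩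
  have hN0 : 0 < N := hN ▸ ENNReal.toReal_pos h0 h_top
  have hfN : ∫⁻ y, ‖f y‖ₑ ^ p ∂μ = ENNReal.ofReal N := by rw [hN, ENNReal.ofReal_toReal h_top]
  have : 0 < r - 2 := by linarith
  calc (∫⁻ x, ‖kernelOp μ k f x‖ₑ ^ r ∂ν) ^ (1 / r)
      ≤ ENNReal.ofReal (r * (4 * ((2 * A * N) ^ (r - 2) / (r - 2) * N))) ^ (1 / r) := by
        gcongr
        exact lintegral_enorm_kernelOp_rpow_le hk hA0 hA hL2 hpr hr2 hN0 hf hfi hfN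
    _ = ENNReal.ofReal (4 * r / (r - 2) * 2 ^ (r - 2) * A ^ (r - 2) * N ^ (r - 1)) ^ (1 / r) := by
        rw [Real.mul_rpow (by positivity) hN0.le, Real.mul_rpow zero_le_two hA0.le,
          show r - 1 = r - 2 + 1 by ring, Real.rpow_add_one hN0.ne']
        ring_nf
    _ = _ := by
        rw [hfN, ENNReal.ofReal_rpow_of_pos hN0, ← ENNReal.ofReal_mul (by positivity),
          ENNReal.ofReal_rpow_of_pos (by positivity), Real.mul_rpow (by positivity) (by positivity),
          Real.mul_rpow (by positivity) (by positivity), marcinkiewiczConst, if_neg hr2.ne',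
          ← Real.rpow_mul hA0.le, ← Real.rpow_mul hN0.le]
        congr 3
        · field_simp
        · rw [hpr.symm.conjugate_eq]
          field_simp

end KernelOp

section TTStar

variable {α γ : Type*} [MeasurableSpace α] [MeasurableSpace γ] {μ : Measure α}
  {ν : Measure γ} {g : α → γ → ℂ} {B : γ → ℝ} {χ : α → ℝ}

theorem integrable_mul_mul_conj (hg : Measurable (Function.uncurry g)) (hgB : ∀ x y, ‖g x y‖ ≤ B y)
    (hB : Integrable B ν) (hχ : Integrable χ μ) :
    Integrable (fun w : α × (γ × γ) =>
      (χ w.1 : ℂ) * (g w.1 w.2.1 * (starRingEnd ℂ) (g w.1 w.2.2))) (μ.prod (ν.prod ν)) := by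
  refine (hχ.mul_prod (hB.mul_prod hB)).mono ?_ (ae_of_all _ fun w => ?_)
  · have hχ' : AEStronglyMeasurable (fun w : α × (γ × γ) => (χ w.1 : ℂ)) (μ.prod (ν.prod ν)) :=
      (Complex.continuous_ofReal.comp_aestronglyMeasurable hχ.1).comp_fst
    have hcorr : Measurable fun w : α × (γ × γ) =>
        Function.uncurry g (w.1, w.2.1) * (starRingEnd ℂ) (Function.uncurry g (w.1, w.2.2)) := by
      fun_prop
    exact hχ'.mul hcorr.aestronglyMeasurable
  · simp only [norm_mul, RCLike.norm_conj, Complex.norm_real]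
    gcongr <;> exact (hgB _ _).trans (Real.le_norm_self _)

variable [SFinite μ] [SFinite ν]

theorem integrable_weightedInner (hg : Measurable (Function.uncurry g))
    (hgB : ∀ x y, ‖g x y‖ ≤ B y) (hB : Integrable B ν) (hχ : Integrable χ μ) :
    Integrable (fun z : γ × γ => weightedInner μ χ (fun x => g x z.1) fun x => g x z.2)
      (ν.prod ν) :=
  (integrable_mul_mul_conj hg hgB hB hχ).integral_prod_right

/-- The `TT*` identity: the weighted `L²` norm of `∫ g x y dy` is a double integral of the
correlations of `g` in the variable `x`. -/
theorem integral_mul_norm_integral_sq (hg : Measurable (Function.uncurry g))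
    (hgB : ∀ x y, ‖g x y‖ ≤ B y) (hB : Integrable B ν) (hχ : Integrable χ μ) :
    ((∫ x, χ x * ‖∫ y, g x y ∂ν‖ ^ 2 ∂μ : ℝ) : ℂ) =
      ∫ z : γ × γ, weightedInner μ χ (fun x => g x z.1) (fun x => g x z.2) ∂(ν.prod ν) := by
  simp only [weightedInner]
  rw [← integral_integral_swap (integrable_mul_mul_conj hg hgB hB hχ), ← integral_complex_ofReal]
  congr with x
  rw [integral_const_mul, integral_prod_mul (g x) fun y => (starRingEnd ℂ) (g x y), integral_conj,
    Complex.mul_conj, Complex.normSq_eq_norm_sq, Complex.ofReal_mul]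

theorem lintegral_mul_enorm_integral_sq (hg : Measurable (Function.uncurry g))
    (hgB : ∀ x y, ‖g x y‖ ≤ B y) (hB : Integrable B ν) (hχ : Integrable χ μ) (hχ0 : ∀ x, 0 ≤ χ x) :
    ∫⁻ x, ENNReal.ofReal (χ x) * ‖∫ y, g x y ∂ν‖ₑ ^ (2 : ℝ) ∂μ =
      ‖∫ z : γ × γ, weightedInner μ χ (fun x => g x z.1) (fun x => g x z.2) ∂(ν.prod ν)‖ₑ := by
  have hbound (x : α) : ‖∫ y, g x y ∂ν‖ ≤ ∫ y, B y ∂ν :=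
    norm_integral_le_of_norm_le hB (ae_of_all _ (hgB x))
  have hsm : AEStronglyMeasurable (fun x => ‖∫ y, g x y ∂ν‖ ^ 2) μ :=
    (hg.stronglyMeasurable.integral_prod_right.norm.pow 2).aestronglyMeasurable
  have hint : Integrable (fun x => χ x * ‖∫ y, g x y ∂ν‖ ^ 2) μ :=
    hχ.mul_bdd hsm (c := (∫ y, B y ∂ν) ^ 2) (ae_of_all _ fun x => by
      rw [norm_pow, norm_norm]
      gcongr
      exact hbound x)
  have hnonneg (x : α) : 0 ≤ χ x * ‖∫ y, g x y ∂ν‖ ^ 2 := mul_nonneg (hχ0 x) (by positivity)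
  rw [← integral_mul_norm_integral_sq hg hgB hB hχ, ← ofReal_norm,
    Complex.norm_of_nonneg (integral_nonneg hnonneg),
    ofReal_integral_eq_lintegral_ofReal hint (ae_of_all _ hnonneg)]
  congr with x
  rw [ENNReal.ofReal_mul (hχ0 x), ENNReal.rpow_two, ← ofReal_norm,
    ENNReal.ofReal_pow (norm_nonneg _)]

end TTStar

theorem lintegral_le_of_forall_lintegral_mul_le {α : Type*} [MeasurableSpace α] {μ : Measure α}
    {h : α → ℝ≥0∞} (hh : Measurable h) {χ : ℕ → α → ℝ≥0∞} (hχ : ∀ n, Measurable (χ n))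
    (hlim : ∀ x, Tendsto (fun n => χ n x) atTop (𝓝 1)) {M : ℝ≥0∞}
    (hM : ∀ n, ∫⁻ x, χ n x * h x ∂μ ≤ M) : ∫⁻ x, h x ∂μ ≤ M := by
  have hliminf (x : α) : liminf (fun n => χ n x * h x) atTop = h x := by
    simpa using (ENNReal.Tendsto.mul_const (hlim x) (Or.inl one_ne_zero)).liminf_eq
  calc ∫⁻ x, h x ∂μ = ∫⁻ x, liminf (fun n => χ n x * h x) atTop ∂μ := by simp only [hliminf]
    _ ≤ liminf (fun n => ∫⁻ x, χ n x * h x ∂μ) atTop :=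
        lintegral_liminf_le fun n => (hχ n).mul hh
    _ ≤ M := (liminf_le_liminf (Eventually.of_forall hM)).trans (by simp)

section IsL2Contraction

variable {α γ δ : Type*} [MeasurableSpace α] [MeasurableSpace γ] [MeasurableSpace δ]
  {μ : Measure α} [SFinite μ] {ν : Measure γ} {χ : α → ℝ} {A A' : ℝ}

/-- Schur's test for a Hermitian kernel. -/
theorem enorm_integral_mul_conj_mul_le {K : α → α → ℂ} (hK : Measurable (Function.uncurry K))
    (hsymm : ∀ x y, (starRingEnd ℂ) (K x y) = K y x) (hrow : ∀ x, ∫⁻ y, ‖K x y‖ₑ ∂μ ≤ 1) {f : α → ℂ}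
    (hf : Measurable f) :
    ‖∫ z : α × α, K z.1 z.2 * (f z.1 * (starRingEnd ℂ) (f z.2)) ∂(μ.prod μ)‖ₑ ≤
      ∫⁻ x, ‖f x‖ₑ ^ (2 : ℝ) ∂μ := by
  set E : α × α → ℝ≥0∞ := fun z => ‖Function.uncurry K z‖ₑ * ‖f z.1‖ₑ ^ (2 : ℝ) with hE
  have hEm : Measurable E := by fun_prop
  have hrows : ∫⁻ z, E z ∂(μ.prod μ) ≤ ∫⁻ x, ‖f x‖ₑ ^ (2 : ℝ) ∂μ := by
    rw [lintegral_prod _ hEm.aemeasurable]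
    refine lintegral_mono fun x => ?_
    simp only [hE, Function.uncurry_apply_pair]
    rw [lintegral_mul_const _ (hK.of_uncurry_left.enorm)]
    exact mul_le_of_le_one_left' (hrow x)
  have hpoint (z : α × α) : ‖K z.1 z.2 * (f z.1 * (starRingEnd ℂ) (f z.2))‖ₑ ≤
      E z / 2 + E z.swap / 2 := by
    have hyoung := ENNReal.young_inequality ‖f z.1‖ₑ ‖f z.2‖ₑ Real.HolderConjugate.two_two
    rw [enorm_mul, enorm_mul, enorm_conj]
    simp only [hE, Function.uncurry_def, Prod.fst_swap, Prod.snd_swap, ← hsymm z.1 z.2, enorm_conj,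
      mul_div_assoc, ← mul_add]
    simpa using mul_le_mul_right hyoung ‖K z.1 z.2‖ₑ
  calc _ ≤ ∫⁻ z, E z / 2 + E z.swap / 2 ∂(μ.prod μ) :=
        (enorm_integral_le_lintegral_enorm _).trans (lintegral_mono hpoint)
    _ = (∫⁻ z, E z ∂(μ.prod μ)) / 2 + (∫⁻ z, E z ∂(μ.prod μ)) / 2 := by
        rw [lintegral_add_left (by fun_prop), lintegral_prod_swap fun z => E z / 2]
        simp only [div_eq_mul_inv]
        rw [lintegral_mul_const _ hEm]
    _ ≤ ∫⁻ x, ‖f x‖ₑ ^ (2 : ℝ) ∂μ := by rwa [ENNReal.add_halves]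

theorem lintegral_mul_enorm_kernelOp_sq_le [SFinite ν] {k : γ → α → ℂ}
    (hk : Measurable (Function.uncurry k)) (hA : ∀ x y, ‖k x y‖ ≤ A) {χ : γ → ℝ}
    (hχm : Measurable χ) (hχ : Integrable χ ν) (hχ0 : ∀ x, 0 ≤ χ x)
    (hrow : ∀ y, ∫⁻ y', ‖weightedInner ν χ (fun x => k x y) (fun x => k x y')‖ₑ ∂μ ≤ 1)
    {f : α → ℂ} (hf : Measurable f) (hfi : Integrable f μ) :
    ∫⁻ x, ENNReal.ofReal (χ x) * ‖kernelOp μ k f x‖ₑ ^ (2 : ℝ) ∂ν ≤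
      ∫⁻ y, ‖f y‖ₑ ^ (2 : ℝ) ∂μ := by
  have hkf : Measurable (Function.uncurry fun x y => k x y * f y) := hk.mul (by fun_prop)
  have hbound (x : γ) (y : α) : ‖k x y * f y‖ ≤ A * ‖f y‖ := by
    rw [norm_mul]
    gcongr
    exact hA x y
  simp only [kernelOp]
  rw [lintegral_mul_enorm_integral_sq hkf hbound (hfi.norm.const_mul A) hχ hχ0]
  simp only [weightedInner_mul_const]
  refine enorm_integral_mul_conj_mul_le
    (K := fun y y' => weightedInner ν χ (fun x => k x y) fun x => k x y')
    ?_ (fun y y' => conj_weightedInner _ _) hrow hf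
  have hfst : Measurable fun w : (α × α) × γ => Function.uncurry k (w.2, w.1.1) := by fun_prop
  have hsnd : Measurable fun w : (α × α) × γ => Function.uncurry k (w.2, w.1.2) := by fun_prop
  exact measurable_weightedInner hχm hfst hsnd

variable {ρ : Measure δ} [SFinite ρ] {k : γ → α → ℂ} {k' : δ → α → ℂ}

theorem kernelOp_weightedInner (hk : Measurable (Function.uncurry k))
    (hk' : Measurable (Function.uncurry k')) (hA : ∀ x y, ‖k x y‖ ≤ A) (hA' : ∀ x y, ‖k' x y‖ ≤ A')
    (hχ : Integrable χ μ) {f : δ → ℂ} (hfi : Integrable f ρ) (x : γ) :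
    kernelOp ρ (fun x x' => weightedInner μ χ (k x) (k' x')) f x =
      kernelOp μ k (fun y => (χ y : ℂ) * (starRingEnd ℂ) (kernelOp ρ (fun y x' => k' x' y)
        (fun x' => (starRingEnd ℂ) (f x')) y)) x := by
  have hint : Integrable (fun w : δ × α =>
      (k x w.2 * (starRingEnd ℂ) (k' w.1 w.2)) * (f w.1 * (χ w.2 : ℂ))) (ρ.prod μ) := by
    have hmeas : Measurable fun w : δ × α =>
        Function.uncurry k (x, w.2) * (starRingEnd ℂ) (Function.uncurry k' w) := by fun_prop
    refine (hfi.mul_prod hχ.ofReal).bdd_mul (c := A * A') hmeas.aestronglyMeasurable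
      (ae_of_all _ fun w => ?_)
    rw [norm_mul, RCLike.norm_conj]
    exact mul_le_mul (hA _ _) (hA' _ _) (norm_nonneg _) ((norm_nonneg _).trans (hA x w.2))
  simp only [kernelOp, weightedInner, ← integral_conj, ← integral_mul_const, ← integral_const_mul,
    map_mul, Complex.conj_conj]
  calc _ = ∫ x', ∫ y, (k x y * (starRingEnd ℂ) (k' x' y)) * (f x' * (χ y : ℂ)) ∂μ ∂ρ := by
        congr with x'
        congr with y
        ring
    _ = ∫ y, ∫ x', (k x y * (starRingEnd ℂ) (k' x' y)) * (f x' * (χ y : ℂ)) ∂ρ ∂μ :=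
        integral_integral_swap hint
    _ = _ := by
        congr with y
        congr with x'
        ring

theorem IsL2Contraction.weightedInner (hL2 : IsL2Contraction μ ν k)
    (hL2' : IsL2Contraction ρ μ fun y x' => k' x' y) (hk : Measurable (Function.uncurry k))
    (hk' : Measurable (Function.uncurry k')) (hA : ∀ x y, ‖k x y‖ ≤ A) (hA' : ∀ x y, ‖k' x y‖ ≤ A')
    (hχm : Measurable χ) (hχ : Integrable χ μ) (hχ1 : ∀ y, |χ y| ≤ 1) :
    IsL2Contraction ρ ν fun x x' => weightedInner μ χ (k x) (k' x') := by
  intro f hf hfi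
  have hfconj : Integrable (fun x' => (starRingEnd ℂ) (f x')) ρ :=
    hfi.congr' (by fun_prop) (ae_of_all _ fun x' => (RCLike.norm_conj _).symm)
  set v := kernelOp ρ (fun y x' => k' x' y) fun x' => (starRingEnd ℂ) (f x')
  have hv : Measurable v := measurable_kernelOp (hk'.comp measurable_swap) (by fun_prop)
  have hvbound (y : α) : ‖v y‖ ≤ ∫ x', A' * ‖f x'‖ ∂ρ :=
    norm_integral_le_of_norm_le (hfi.norm.const_mul A') (ae_of_all _ fun x' => by
      rw [norm_mul, RCLike.norm_conj]
      gcongr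
      exact hA' x' y)
  have hχv : Integrable (fun y => (χ y : ℂ) * (starRingEnd ℂ) (v y)) μ :=
    hχ.ofReal.mul_bdd (by fun_prop) (ae_of_all _ fun y => (RCLike.norm_conj _).trans_le (hvbound y))
  simp only [kernelOp_weightedInner hk hk' hA hA' hχ hfi]
  calc _ ≤ ∫⁻ y, ‖(χ y : ℂ) * (starRingEnd ℂ) (v y)‖ₑ ^ (2 : ℝ) ∂μ := hL2 _ (by fun_prop) hχv
    _ ≤ ∫⁻ y, ‖v y‖ₑ ^ (2 : ℝ) ∂μ := by
        gcongr with y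
        rw [enorm_mul, enorm_conj]
        refine mul_le_of_le_one_left' ?_
        rw [← ofReal_norm, Complex.norm_real]
        exact ENNReal.ofReal_le_one.2 (hχ1 y)
    _ ≤ ∫⁻ x', ‖(starRingEnd ℂ) (f x')‖ₑ ^ (2 : ℝ) ∂ρ := hL2' _ (by fun_prop) hfconj
    _ = ∫⁻ x', ‖f x'‖ₑ ^ (2 : ℝ) ∂ρ := by simp only [enorm_conj]

end IsL2Contraction

section FreeKernel

variable (d : ℕ)

/-- The modulus of the free Schrödinger kernel at time `t`. -/
def freeAmplitude (t : ℝ) : ℝ := (4 * Real.pi * |t|) ^ (-((d : ℝ) / 2))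

theorem freeAmplitude_nonneg (t : ℝ) : 0 ≤ freeAmplitude d t := by
  unfold freeAmplitude
  positivity

theorem freeAmplitude_pos {t : ℝ} (ht : t ≠ 0) : 0 < freeAmplitude d t := by
  unfold freeAmplitude
  positivity

theorem norm_cpow_neg_div_two (t : ℝ) :
    ‖(4 * (Real.pi : ℂ) * Complex.I * (t : ℂ)) ^ (-(d : ℂ) / 2)‖ = freeAmplitude d t := by
  rw [show -(d : ℂ) / 2 = ((-((d : ℝ) / 2) : ℝ) : ℂ) by push_cast; ring, Complex.norm_cpow_real,
    freeAmplitude]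
  simp [abs_of_pos Real.pi_pos]

theorem norm_Sfree (x y : Fin d → ℝ) (t : ℝ) : ‖Sfree d x y t‖ = freeAmplitude d t := by
  rw [Sfree, norm_mul, norm_cpow_neg_div_two, mul_div_assoc, ← Complex.ofReal_div, mul_comm I,
    Complex.norm_exp_ofReal_mul_I, mul_one]

theorem Sfree_comm (x y : Fin d → ℝ) (t : ℝ) : Sfree d x y t = Sfree d y x t := by
  simp only [Sfree, sub_sq_comm (x _)]

@[fun_prop]
theorem measurable_Sfree {β : Type*} [MeasurableSpace β] {f g : β → Fin d → ℝ} {h : β → ℝ}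
    (hf : Measurable f) (hg : Measurable g) (hh : Measurable h) :
    Measurable fun w => Sfree d (f w) (g w) (h w) := by
  unfold Sfree
  fun_prop

/-- The Gaussian `exp(-ε|y|²)`; it makes the oscillatory integrals absolutely convergent and is
removed in the limit `ε → 0`. -/
def gaussianCutoff (ε : ℝ) (y : Fin d → ℝ) : ℝ := Real.exp (-(ε * ∑ i, y i ^ 2))

@[fun_prop]
theorem measurable_gaussianCutoff (ε : ℝ) : Measurable (gaussianCutoff d ε) := by
  unfold gaussianCutoff
  fun_prop

theorem gaussianCutoff_nonneg (ε : ℝ) (y : Fin d → ℝ) : 0 ≤ gaussianCutoff d ε y :=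
  (Real.exp_pos _).le

theorem abs_gaussianCutoff_le_one {ε : ℝ} (hε : 0 ≤ ε) (y : Fin d → ℝ) :
    |gaussianCutoff d ε y| ≤ 1 := by
  rw [abs_of_nonneg (gaussianCutoff_nonneg d ε y), gaussianCutoff, Real.exp_le_one_iff,
    neg_nonpos]
  positivity

theorem ofReal_gaussianCutoff (ε : ℝ) (y : Fin d → ℝ) :
    (gaussianCutoff d ε y : ℂ) =
      Complex.exp (-(ε : ℂ) * ∑ i, (y i : ℂ) ^ 2 + ∑ i, (0 : Fin d → ℂ) i * (y i : ℂ)) := by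
  simp [gaussianCutoff]

theorem integrable_gaussianCutoff {ε : ℝ} (hε : 0 < ε) : Integrable (gaussianCutoff d ε) := by
  have h := GaussianFourier.integrable_cexp_neg_mul_sum_add (ι := Fin d) (b := (ε : ℂ))
    (by simpa using hε) 0
  simp only [← ofReal_gaussianCutoff] at h
  exact h.re

theorem lintegral_gaussianCutoff {ε : ℝ} (hε : 0 < ε) :
    ∫⁻ y, ENNReal.ofReal (gaussianCutoff d ε y) =
      ENNReal.ofReal ((Real.pi / ε) ^ ((d : ℝ) / 2)) := by
  rw [← ofReal_integral_eq_lintegral_ofReal (integrable_gaussianCutoff d hε)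
    (ae_of_all _ (gaussianCutoff_nonneg d ε))]
  have h := GaussianFourier.integral_cexp_neg_mul_sum_add (ι := Fin d) (b := (ε : ℂ))
    (by simpa using hε) 0
  simp only [← ofReal_gaussianCutoff] at h
  rw [integral_complex_ofReal] at h
  congr 1
  rw [← Complex.ofReal_inj, h, Complex.ofReal_cpow (by positivity)]
  simp

theorem tendsto_ofReal_exp_neg_one_div_mul (s : ℝ) :
    Tendsto (fun n : ℕ => ENNReal.ofReal (Real.exp (-(1 / ((n : ℝ) + 1) * s)))) atTop (𝓝 1) := by
  simpa using ENNReal.tendsto_ofReal ((Real.continuous_exp.tendsto _).comp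
    (tendsto_one_div_add_atTop_nhds_zero_nat.mul_const s).neg)

/-- The damped correlation in `y` of the free kernels issued from `x` at time `t` and from `x'` at
time `t'`, i.e. a regularised kernel of the propagator over the time `t - t'`. -/
def freeCorrelation (ε t t' : ℝ) (x x' : Fin d → ℝ) : ℂ :=
  weightedInner volume (gaussianCutoff d ε) (fun y => Sfree d x y t) fun y => Sfree d x' y t'

@[fun_prop]
theorem measurable_freeCorrelation (ε : ℝ) {β : Type*} [MeasurableSpace β]
    {f g : β → Fin d → ℝ} {h k : β → ℝ} (hf : Measurable f) (hg : Measurable g) (hh : Measurable h)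
    (hk : Measurable k) : Measurable fun w => freeCorrelation d ε (h w) (k w) (f w) (g w) :=
  measurable_weightedInner (by fun_prop) (by fun_prop : Measurable _) (by fun_prop : Measurable _)

variable {d} {ε t t' : ℝ}

/-- Completing the square in the product of the two chirps and the cutoff. -/
theorem gaussianCutoff_mul_Sfree_mul_conj_Sfree (x x' y : Fin d → ℝ) :
    (gaussianCutoff d ε y : ℂ) * (Sfree d x y t * (starRingEnd ℂ) (Sfree d x' y t')) =
      Sfree d x 0 t * (starRingEnd ℂ) (Sfree d x' 0 t') *
        Complex.exp (-chirpWidth ε t t' * ∑ i, (y i : ℂ) ^ 2 +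
          ∑ i, -((x i / (2 * t) - x' i / (2 * t') : ℝ) : ℂ) * Complex.I * (y i : ℂ)) := by
  have hsq (u : Fin d → ℝ) : ((∑ i, (u i - y i) ^ 2 : ℝ) : ℂ) =
      (∑ i, (u i : ℂ) ^ 2) - 2 * (∑ i, (u i : ℂ) * y i) + ∑ i, (y i : ℂ) ^ 2 := by
    push_cast
    rw [Finset.mul_sum, ← Finset.sum_sub_distrib, ← Finset.sum_add_distrib]
    exact Finset.sum_congr rfl fun i _ => by ring
  have hcross : ∑ i, -((x i / (2 * t) - x' i / (2 * t') : ℝ) : ℂ) * Complex.I * (y i : ℂ) =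
      -Complex.I * ((∑ i, (x i : ℂ) * y i) / (2 * t) - (∑ i, (x' i : ℂ) * y i) / (2 * t')) := by
    rw [Finset.sum_div, Finset.sum_div, ← Finset.sum_sub_distrib, Finset.mul_sum]
    exact Finset.sum_congr rfl fun i _ => by push_cast; ring
  have hexp (A C D E F G : ℂ) (h : C + D + E = F + G + A) (P Q : ℂ) :
      Complex.exp C * (P * Complex.exp D * (Q * Complex.exp E)) =
        P * Complex.exp F * (Q * Complex.exp G) * Complex.exp A := by
    have h' := congrArg Complex.exp h
    simp only [Complex.exp_add] at h'
    linear_combination P * Q * h'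
  simp only [Sfree, gaussianCutoff, Complex.ofReal_exp, map_mul, ← Complex.exp_conj, map_div₀,
    Complex.conj_I, Complex.conj_ofReal, Pi.zero_apply, sub_zero]
  refine hexp _ _ _ _ _ _ ?_ _ _
  rw [hsq, hsq, hcross, chirpWidth]
  push_cast
  ring

theorem norm_freeCorrelation (hε : 0 < ε) (x x' : Fin d → ℝ) :
    ‖freeCorrelation d ε t t' x x'‖ = freeAmplitude d t * freeAmplitude d t' *
      ((Real.pi / ‖chirpWidth ε t t'‖) ^ ((d : ℝ) / 2) *
        Real.exp (-((1 / chirpWidth ε t t').re / 4 *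
          ∑ i, (x i / (2 * t) - x' i / (2 * t')) ^ 2))) := by
  have hre : 0 < (chirpWidth ε t t').re := by rwa [re_chirpWidth]
  have hsq : ∑ i, (-((x i / (2 * t) - x' i / (2 * t') : ℝ) : ℂ) * Complex.I) ^ 2 =
      ((-∑ i, (x i / (2 * t) - x' i / (2 * t')) ^ 2 : ℝ) : ℂ) := by
    push_cast
    rw [← Finset.sum_neg_distrib]
    exact Finset.sum_congr rfl fun i _ => by rw [mul_pow, Complex.I_sq]; ring
  simp only [freeCorrelation, weightedInner, gaussianCutoff_mul_Sfree_mul_conj_Sfree]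
  rw [integral_const_mul, GaussianFourier.integral_cexp_neg_mul_sum_add hre, hsq, norm_mul,
    norm_mul, RCLike.norm_conj, norm_Sfree, norm_Sfree, norm_mul, Fintype.card_fin,
    show (d : ℂ) / 2 = (((d : ℝ) / 2 : ℝ) : ℂ) by push_cast; rfl, Complex.norm_cpow_real,
    norm_div, Complex.norm_real, Real.norm_of_nonneg Real.pi_pos.le, Complex.norm_exp,
    div_eq_mul_one_div _ (4 * _), Complex.re_ofReal_mul, show 1 / (4 * chirpWidth ε t t') =
      ((1 / 4 : ℝ) : ℂ) * (1 / chirpWidth ε t t') by push_cast; ring, Complex.re_ofReal_mul]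
  congr 3
  ring

theorem norm_freeCorrelation_le (hε : 0 < ε) (ht : t ≠ 0) (ht' : t' ≠ 0) (htt' : t ≠ t')
    (x x' : Fin d → ℝ) : ‖freeCorrelation d ε t t' x x'‖ ≤ freeAmplitude d (t - t') := by
  have hre : 0 ≤ (1 / chirpWidth ε t t').re := by
    rw [one_div, Complex.inv_re, re_chirpWidth]
    exact div_nonneg hε.le (Complex.normSq_nonneg _)
  have := sub_ne_zero.2 htt'
  have hexp : Real.exp (-((1 / chirpWidth ε t t').re / 4 *
      ∑ i, (x i / (2 * t) - x' i / (2 * t')) ^ 2)) ≤ 1 := by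
    rw [Real.exp_le_one_iff, neg_nonpos]
    positivity
  rw [norm_freeCorrelation hε]
  calc
    _ ≤ freeAmplitude d t * freeAmplitude d t' *
        ((Real.pi / (|t - t'| / (4 * |t| * |t'|))) ^ ((d : ℝ) / 2) * 1) := by
      have := div_le_norm_chirpWidth ε ht ht'
      have := freeAmplitude_nonneg d t
      have := freeAmplitude_nonneg d t'
      gcongr
    _ = freeAmplitude d (t - t') := by
      simp only [freeAmplitude]
      rw [mul_one, ← Real.mul_rpow (by positivity) (by positivity), Real.rpow_neg (by positivity),
        Real.rpow_neg (by positivity), inv_mul_eq_div, ← Real.div_rpow (by positivity)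
        (by positivity), ← Real.inv_rpow (by positivity)]
      congr 1
      field_simp

/-- At equal times the correlation is a Gaussian in `x - x'` of total mass one. -/
theorem lintegral_enorm_freeCorrelation_self (hε : 0 < ε) (ht : t ≠ 0) (x : Fin d → ℝ) :
    ∫⁻ x', ‖freeCorrelation d ε t t x x'‖ₑ = 1 := by
  have hA := freeAmplitude_nonneg d t
  have hδ : 0 < 1 / (16 * t ^ 2 * ε) := by positivity
  have henorm (x' : Fin d → ℝ) : ‖freeCorrelation d ε t t x x'‖ₑ =
      ENNReal.ofReal (freeAmplitude d t * freeAmplitude d t * (Real.pi / ε) ^ ((d : ℝ) / 2)) *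
        ENNReal.ofReal (gaussianCutoff d (1 / (16 * t ^ 2 * ε)) (x - x')) := by
    rw [← ofReal_norm, norm_freeCorrelation hε, chirpWidth_self, ← ENNReal.ofReal_mul
      (by positivity), Complex.norm_real, Real.norm_of_nonneg hε.le, mul_assoc (_ * _),
      ← Complex.ofReal_one, ← Complex.ofReal_div, Complex.ofReal_re, gaussianCutoff,
      Finset.mul_sum, Finset.mul_sum]
    congr! 6 with i
    rw [Pi.sub_apply]
    field_simp
    ring
  have hmeas : Measurable fun x' =>
      ENNReal.ofReal (gaussianCutoff d (1 / (16 * t ^ 2 * ε)) (x - x')) := by fun_prop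
  simp only [henorm]
  rw [lintegral_const_mul _ hmeas, lintegral_sub_left_eq_self
    (fun y => ENNReal.ofReal (gaussianCutoff d (1 / (16 * t ^ 2 * ε)) y)) x,
    lintegral_gaussianCutoff d hδ, ← ENNReal.ofReal_mul (by positivity), ← ENNReal.ofReal_one]
  congr 1
  rw [freeAmplitude, Real.rpow_neg (by positivity), ← mul_inv, mul_assoc,
    ← Real.mul_rpow (by positivity) (by positivity), ← Real.mul_rpow (by positivity)
    (by positivity), show Real.pi / ε * (Real.pi / (1 / (16 * t ^ 2 * ε))) =
      4 * Real.pi * |t| * (4 * Real.pi * |t|) by rw [← sq_abs t]; field_simp; ring]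
  exact inv_mul_cancel₀ (by positivity)

theorem isL2Contraction_Sfree (ht : t ≠ 0) :
    IsL2Contraction volume volume fun x y : Fin d → ℝ => Sfree d x y t := by
  intro f hf hfi
  have hSfree : Measurable (Function.uncurry fun x y => Sfree d x y t) := by
    simp only [Function.uncurry_def]
    fun_prop
  refine lintegral_le_of_forall_lintegral_mul_le ((measurable_kernelOp hSfree hf).enorm.pow_const _)
    (χ := fun n x => ENNReal.ofReal (gaussianCutoff d (1 / ((n : ℝ) + 1)) x)) (fun n => by fun_prop)
    (fun x => tendsto_ofReal_exp_neg_one_div_mul _) fun n => ?_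
  have hε : 0 < 1 / ((n : ℝ) + 1) := by positivity
  refine lintegral_mul_enorm_kernelOp_sq_le hSfree (fun x y => (norm_Sfree d x y t).le)
    (by fun_prop) (integrable_gaussianCutoff d hε) (gaussianCutoff_nonneg d _) (fun y => ?_) hf hfi
  simp only [fun x y => Sfree_comm d x y t]
  exact (lintegral_enorm_freeCorrelation_self hε ht y).le

theorem isL2Contraction_freeCorrelation (hε : 0 < ε) (ht : t ≠ 0) (ht' : t' ≠ 0) :
    IsL2Contraction volume volume (freeCorrelation d ε t t') := by
  refine IsL2Contraction.weightedInner (k := fun x y => Sfree d x y t)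
    (k' := fun x y => Sfree d x y t') (A := freeAmplitude d t) (A' := freeAmplitude d t')
    (isL2Contraction_Sfree ht) ?_ (by fun_prop : Measurable _) (by fun_prop : Measurable _)
    (fun x y => (norm_Sfree d x y t).le) (fun x y => (norm_Sfree d x y t').le) (by fun_prop)
    (integrable_gaussianCutoff d hε) (abs_gaussianCutoff_le_one d hε.le)
  simp only [fun x y => Sfree_comm d x y t']
  exact isL2Contraction_Sfree ht'

variable {p r : ℝ} {f : (Fin d → ℝ) → ℂ}

theorem lintegral_enorm_kernelOp_Sfree_rpow_le (ht : t ≠ 0) (hpr : p.HolderConjugate r)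
    (hr : 2 ≤ r) (hf : Measurable f) (hfi : Integrable f) :
    (∫⁻ x, ‖kernelOp volume (fun x y => Sfree d x y t) f x‖ₑ ^ r) ^ (1 / r) ≤
      ENNReal.ofReal (marcinkiewiczConst r * freeAmplitude d t ^ (1 - 2 / r)) *
        (∫⁻ x, ‖f x‖ₑ ^ p) ^ (1 / p) :=
  lintegral_enorm_kernelOp_rpow_le_mul (by fun_prop : Measurable _) (freeAmplitude_pos d ht)
    (fun x y => (norm_Sfree d x y t).le) (isL2Contraction_Sfree ht) hpr hr hf hfi

theorem lintegral_enorm_kernelOp_freeCorrelation_rpow_le (hε : 0 < ε) (ht : t ≠ 0) (ht' : t' ≠ 0)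
    (htt' : t ≠ t') (hpr : p.HolderConjugate r) (hr : 2 ≤ r) (hf : Measurable f)
    (hfi : Integrable f) :
    (∫⁻ x, ‖kernelOp volume (freeCorrelation d ε t t') f x‖ₑ ^ r) ^ (1 / r) ≤
      ENNReal.ofReal (marcinkiewiczConst r * freeAmplitude d (t - t') ^ (1 - 2 / r)) *
        (∫⁻ x, ‖f x‖ₑ ^ p) ^ (1 / p) :=
  lintegral_enorm_kernelOp_rpow_le_mul (by fun_prop : Measurable _)
    (freeAmplitude_pos d (sub_ne_zero.2 htt')) (norm_freeCorrelation_le hε ht ht' htt')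
    (isL2Contraction_freeCorrelation hε ht ht') hpr hr hf hfi

end FreeKernel

section MixedNorm

variable {α β : Type*} [MeasurableSpace α] {μ : Measure α} {p q r s : ℝ} {V W : α → β → ℝ≥0∞}
  {M : ℝ≥0∞}

/-- The extremiser in the duality between mixed norms: pairing it with `V` attains equality in both
Hölder inequalities. -/
def dualTest (μ : Measure α) (q r : ℝ) (V : α → β → ℝ≥0∞) (x : α) (t : β) : ℝ≥0∞ :=
  V x t ^ (r - 1) *
    if ∫⁻ x, V x t ^ r ∂μ = 0 then 0 else (∫⁻ x, V x t ^ r ∂μ) ^ ((q - r) / r)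

theorem dualTest_eq_zero (hr : 1 < r) {x : α} {t : β} (h : V x t = 0) :
    dualTest μ q r V x t = 0 := by
  rw [dualTest, h, ENNReal.zero_rpow_of_pos (by linarith), zero_mul]

theorem dualTest_ne_top (hr : 1 < r) {x : α} {t : β} (h : V x t ≠ ⊤)
    (hN : ∫⁻ x, V x t ^ r ∂μ ≠ ⊤) : dualTest μ q r V x t ≠ ⊤ := by
  refine ENNReal.mul_ne_top (ENNReal.rpow_ne_top_of_nonneg (by linarith) h) ?_
  split_ifs with h0
  · exact ENNReal.zero_ne_top
  · exact ENNReal.rpow_ne_top_of_ne_zero h0 hN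

theorem lintegral_rpow_le_of_le (hr : 0 < r) {L : ℝ≥0∞} {A : Set α} (hA : MeasurableSet A)
    {t : β} (hVL : ∀ x, V x t ≤ L) (hVA : ∀ x ∉ A, V x t = 0) :
    ∫⁻ x, V x t ^ r ∂μ ≤ L ^ r * μ A := by
  rw [← lintegral_indicator_const hA]
  refine lintegral_mono fun x => ?_
  by_cases hx : x ∈ A
  · simpa only [Set.indicator_of_mem hx] using ENNReal.rpow_le_rpow (hVL x) hr.le
  · simp [hVA x hx, hr]

variable [MeasurableSpace β] {ν : Measure β}

/-- The mixed norm of `V x t` that is `L^r(μ)` in `x` and then `L^q(ν)` in `t`. -/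
def mixedNorm (μ : Measure α) (ν : Measure β) (q r : ℝ) (V : α → β → ℝ≥0∞) : ℝ≥0∞ :=
  (∫⁻ t, (∫⁻ x, V x t ^ r ∂μ) ^ (q / r) ∂ν) ^ (1 / q)

theorem measurable_lintegral_rpow [SFinite μ] (r : ℝ) (hV : Measurable (Function.uncurry V)) :
    Measurable fun t => ∫⁻ x, V x t ^ r ∂μ :=
  (hV.pow_const r).lintegral_prod_left'

theorem mixedNorm_eq_lintegral_rpow (μ : Measure α) (ν : Measure β) (q r : ℝ)
    (V : α → β → ℝ≥0∞) :
    mixedNorm μ ν q r V = (∫⁻ t, ((∫⁻ x, V x t ^ r ∂μ) ^ (1 / r)) ^ q ∂ν) ^ (1 / q) := by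
  simp only [mixedNorm, ← ENNReal.rpow_mul, one_div_mul_eq_div]

theorem mixedNorm_le_of_tendsto_of_monotone [SFinite μ] (hq : 0 < q) (hr : 0 < r)
    {Vn : ℕ → α → β → ℝ≥0∞} (hVn : ∀ n, Measurable (Function.uncurry (Vn n)))
    (hmono : Monotone Vn) (hlim : ∀ᵐ t ∂ν, ∀ x, Tendsto (fun n => Vn n x t) atTop (𝓝 (V x t)))
    (hM : ∀ n, mixedNorm μ ν q r (Vn n) ≤ M) : mixedNorm μ ν q r V ≤ M := by
  have hqr : 0 ≤ q / r := by positivity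
  refine le_of_tendsto' ((ENNReal.continuous_rpow_const.tendsto _).comp
    (lintegral_tendsto_of_tendsto_of_monotone
    (fun n => ((measurable_lintegral_rpow r (hVn n)).pow_const (q / r)).aemeasurable)
    (ae_of_all _ fun t m n hmn => ?_) ?_)) hM
  · exact ENNReal.rpow_le_rpow (lintegral_mono fun x =>
      ENNReal.rpow_le_rpow (hmono hmn x t) hr.le) hqr
  · filter_upwards [hlim] with t ht
    refine (ENNReal.continuous_rpow_const.tendsto _).comp
      (lintegral_tendsto_of_tendsto_of_monotone
      (fun n => (((hVn n).of_uncurry_right).pow_const r).aemeasurable) ?_ ?_)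
    · exact ae_of_all _ fun x m n hmn => ENNReal.rpow_le_rpow (hmono hmn x t) hr.le
    · exact ae_of_all _ fun x => (ENNReal.continuous_rpow_const.tendsto _).comp (ht x)

theorem measurable_dualTest [SFinite μ] (q r : ℝ) (hV : Measurable (Function.uncurry V)) :
    Measurable (Function.uncurry (dualTest μ q r V)) := by
  have hN := measurable_lintegral_rpow (μ := μ) r hV
  have hite : Measurable fun t => if ∫⁻ x, V x t ^ r ∂μ = 0 then (0 : ℝ≥0∞)
      else (∫⁻ x, V x t ^ r ∂μ) ^ ((q - r) / r) :=
    Measurable.ite (measurableSet_eq_fun hN measurable_const) measurable_const (hN.pow_const _)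
  exact (hV.pow_const (r - 1)).mul (hite.comp measurable_snd)

theorem lintegral_mul_dualTest (hq : 0 < q) (hr : 1 ≤ r) (hV : Measurable (Function.uncurry V))
    {t : β} (hN : ∫⁻ x, V x t ^ r ∂μ ≠ ⊤) :
    ∫⁻ x, V x t * dualTest μ q r V x t ∂μ = (∫⁻ x, V x t ^ r ∂μ) ^ (q / r) := by
  have : 0 < r := by linarith
  have hpow (v : ℝ≥0∞) : v * v ^ (r - 1) = v ^ r := by
    nth_rw 1 [← ENNReal.rpow_one v]
    rw [← ENNReal.rpow_add_of_nonneg _ _ zero_le_one (by linarith), add_sub_cancel]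
  simp only [dualTest, ← mul_assoc, hpow]
  rw [lintegral_mul_const _ (hV.of_uncurry_right.pow_const r)]
  split_ifs with h0
  · rw [h0, ENNReal.zero_rpow_of_pos (by positivity), zero_mul]
  · nth_rw 1 [← ENNReal.rpow_one (∫⁻ x, V x t ^ r ∂μ)]
    rw [← ENNReal.rpow_add _ _ h0 hN]
    congr 1
    field_simp
    ring

theorem lintegral_dualTest_rpow (hpq : p.HolderConjugate q) (hsr : s.HolderConjugate r)
    (hV : Measurable (Function.uncurry V)) {t : β} (hN : ∫⁻ x, V x t ^ r ∂μ ≠ ⊤) :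
    (∫⁻ x, dualTest μ q r V x t ^ s ∂μ) ^ (p / s) = (∫⁻ x, V x t ^ r ∂μ) ^ (q / r) := by
  have hpow (v : ℝ≥0∞) : (v ^ (r - 1)) ^ s = v ^ r := by
    rw [← ENNReal.rpow_mul, hsr.symm.sub_one_mul_conj]
  simp only [dualTest, ENNReal.mul_rpow_of_nonneg _ _ hsr.pos.le, hpow]
  rw [lintegral_mul_const _ (hV.of_uncurry_right.pow_const r)]
  have := hpq.pos
  have := hsr.pos
  have := hpq.symm.pos
  have := hsr.symm.pos
  split_ifs with h0
  · rw [h0, zero_mul, ENNReal.zero_rpow_of_pos (by positivity),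
      ENNReal.zero_rpow_of_pos (by positivity)]
  · nth_rw 1 [← ENNReal.rpow_one (∫⁻ x, V x t ^ r ∂μ)]
    rw [← ENNReal.rpow_mul, ← ENNReal.rpow_add _ _ h0 hN, ← ENNReal.rpow_mul]
    congr 1
    have := hpq.symm.sub_one_pos
    have := hsr.symm.sub_one_pos
    rw [hsr.symm.conjugate_eq, hpq.symm.conjugate_eq]
    field_simp
    ring

theorem lintegral_dualTest_le (hsr : s.HolderConjugate r)
    (hV : Measurable (Function.uncurry V)) {A : Set α} (hA : MeasurableSet A) {t : β}
    (hVA : ∀ x ∉ A, V x t = 0) (hN : ∫⁻ x, V x t ^ r ∂μ ≠ ⊤) :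
    ∫⁻ x, dualTest μ q r V x t ∂μ ≤
      (∫⁻ x, V x t ^ r ∂μ) ^ ((q - 1) / r) * μ A ^ (1 / r) := by
  have hr0 := hsr.symm.pos
  have hVt : Measurable fun x => V x t ^ (r - 1) := hV.of_uncurry_right.pow_const _
  have hpow (v : ℝ≥0∞) : (v ^ (r - 1)) ^ s = v ^ r := by
    rw [← ENNReal.rpow_mul, hsr.symm.sub_one_mul_conj]
  have hholder : ∫⁻ x, V x t ^ (r - 1) ∂μ ≤
      (∫⁻ x, V x t ^ r ∂μ) ^ (1 / s) * μ A ^ (1 / r) := by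
    calc ∫⁻ x, V x t ^ (r - 1) ∂μ = ∫⁻ x, V x t ^ (r - 1) * A.indicator 1 x ∂μ := by
          refine lintegral_congr fun x => ?_
          by_cases hx : x ∈ A
          · simp [hx]
          · simp [hVA x hx, hsr.symm.sub_one_pos]
      _ ≤ (∫⁻ x, (V x t ^ (r - 1)) ^ s ∂μ) ^ (1 / s) * (∫⁻ x, A.indicator 1 x ^ r ∂μ) ^ (1 / r) :=
          ENNReal.lintegral_mul_le_Lp_mul_Lq μ hsr hVt.aemeasurable
            (measurable_one.indicator hA).aemeasurable
      _ = (∫⁻ x, V x t ^ r ∂μ) ^ (1 / s) * μ A ^ (1 / r) := by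
          have hind (x : α) : (A.indicator 1 x : ℝ≥0∞) ^ r = A.indicator 1 x := by
            by_cases hx : x ∈ A <;> simp [hx, hr0]
          simp only [hpow, hind, lintegral_indicator_one hA]
  simp only [dualTest]
  rw [lintegral_mul_const _ hVt]
  split_ifs with h0
  · simp
  · refine (mul_le_mul_left hholder _).trans_eq ?_
    rw [mul_right_comm, ← ENNReal.rpow_add _ _ h0 hN]
    congr 2
    rw [hsr.symm.conjugate_eq]
    field_simp
    ring

theorem mixedNorm_le_of_lintegral_mul_dualTest_le (hpq : p.HolderConjugate q)
    (hsr : s.HolderConjugate r) (hW : Measurable (Function.uncurry W))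
    (hN : ∀ t, ∫⁻ x, W x t ^ r ∂μ ≠ ⊤) (hI : ∫⁻ t, (∫⁻ x, W x t ^ r ∂μ) ^ (q / r) ∂ν ≠ ⊤)
    (hM : ∫⁻ t, ∫⁻ x, W x t * dualTest μ q r W x t ∂μ ∂ν ≤
      M * mixedNorm μ ν p s (dualTest μ q r W)) : mixedNorm μ ν q r W ≤ M := by
  simp only [lintegral_mul_dualTest hpq.symm.pos hsr.symm.lt.le hW (hN _), mixedNorm,
    lintegral_dualTest_rpow hpq hsr hW (hN _)] at hM
  rw [mixedNorm]
  set I := ∫⁻ t, (∫⁻ x, W x t ^ r ∂μ) ^ (q / r) ∂ν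
  rcases eq_or_ne I 0 with hI0 | hI0
  · rw [hI0, ENNReal.zero_rpow_of_pos (one_div_pos.2 hpq.symm.pos)]
    exact zero_le
  · refine (ENNReal.mul_le_mul_iff_left (by simp [hI0, hI])
      (ENNReal.rpow_ne_top_of_ne_zero hI0 hI)).1 (le_of_eq_of_le ?_ hM)
    rw [← ENNReal.rpow_add _ _ hI0 hI, one_div, one_div, add_comm, hpq.inv_add_inv_eq_one,
      ENNReal.rpow_one]

/-- The test functions against which mixed norms are computed by duality: finite, with integrable
slices and integrable, and supported in the set of times `B`. -/
structure IsTestFunction (μ : Measure α) (ν : Measure β) (B : Set β) (g : α → β → ℝ≥0∞) :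
    Prop where
  measurable : Measurable (Function.uncurry g)
  ne_top : ∀ x t, g x t ≠ ⊤
  lintegral_slice_ne_top : ∀ t, ∫⁻ x, g x t ∂μ ≠ ⊤
  lintegral_ne_top : ∫⁻ t, ∫⁻ x, g x t ∂μ ∂ν ≠ ⊤
  eq_zero : ∀ x, ∀ t ∉ B, g x t = 0

theorem lintegral_ne_top_of_le {f : β → ℝ≥0∞} {L : ℝ≥0∞} (hL : L ≠ ⊤) {B : Set β}
    (hB : MeasurableSet B) (hBν : ν B ≠ ⊤) (hfL : ∀ t, f t ≤ L) (hfB : ∀ t ∉ B, f t = 0) :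
    ∫⁻ t, f t ∂ν ≠ ⊤ := by
  refine ne_top_of_le_ne_top (ENNReal.mul_ne_top hL hBν) ?_
  rw [← lintegral_indicator_const hB]
  refine lintegral_mono fun t => ?_
  by_cases ht : t ∈ B
  · simpa only [Set.indicator_of_mem ht] using hfL t
  · simp [hfB t ht]

theorem isTestFunction_dualTest [SFinite μ] (hq : 1 < q) (hsr : s.HolderConjugate r)
    {L : ℝ≥0∞} (hL : L ≠ ⊤) {A : Set α} (hA : MeasurableSet A) (hAμ : μ A ≠ ⊤) {B : Set β}
    (hB : MeasurableSet B) (hBν : ν B ≠ ⊤) (hV : Measurable (Function.uncurry V))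
    (hVL : ∀ x t, V x t ≤ L) (hVA : ∀ x ∉ A, ∀ t, V x t = 0) (hVB : ∀ x, ∀ t ∉ B, V x t = 0) :
    IsTestFunction μ ν B (dualTest μ q r V) := by
  have hr := hsr.symm.lt
  have hr0 := hsr.symm.pos
  have hNle (t) := lintegral_rpow_le_of_le (μ := μ) hr0 hA (hVL · t) fun x hx => hVA x hx t
  have hLA : L ^ r * μ A ≠ ⊤ := ENNReal.mul_ne_top (ENNReal.rpow_ne_top_of_nonneg hr0.le hL) hAμ
  have hN (t) : ∫⁻ x, V x t ^ r ∂μ ≠ ⊤ := ne_top_of_le_ne_top hLA (hNle t)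
  have hqr : 0 ≤ (q - 1) / r := div_nonneg (by linarith) hr0.le
  have hslice (t) : ∫⁻ x, dualTest μ q r V x t ∂μ ≤
      (L ^ r * μ A) ^ ((q - 1) / r) * μ A ^ (1 / r) :=
    (lintegral_dualTest_le hsr hV hA (fun x hx => hVA x hx t) (hN t)).trans <| by
      gcongr
      exact hNle t
  have hbound : (L ^ r * μ A) ^ ((q - 1) / r) * μ A ^ (1 / r) ≠ ⊤ :=
    ENNReal.mul_ne_top (ENNReal.rpow_ne_top_of_nonneg hqr hLA)
      (ENNReal.rpow_ne_top_of_nonneg (by positivity) hAμ)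
  have hzero (x) (t) (ht : t ∉ B) : dualTest μ q r V x t = 0 := dualTest_eq_zero hr (hVB x t ht)
  exact
    { measurable := measurable_dualTest q r hV
      ne_top := fun x t => dualTest_ne_top hr (ne_top_of_le_ne_top hL (hVL x t)) (hN t)
      lintegral_slice_ne_top := fun t => ne_top_of_le_ne_top hbound (hslice t)
      lintegral_ne_top := lintegral_ne_top_of_le hbound hB hBν hslice fun t ht => by
        simp [hzero _ t ht]
      eq_zero := hzero }

theorem mixedNorm_le_of_bounded_of_forall_lintegral_mul_le [SFinite μ]
    (hpq : p.HolderConjugate q) (hsr : s.HolderConjugate r)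
    {L : ℝ≥0∞} (hL : L ≠ ⊤) {A : Set α} (hA : MeasurableSet A) (hAμ : μ A ≠ ⊤) {B : Set β}
    (hB : MeasurableSet B) (hBν : ν B ≠ ⊤) (hV : Measurable (Function.uncurry V))
    (hVL : ∀ x t, V x t ≤ L) (hVA : ∀ x ∉ A, ∀ t, V x t = 0) (hVB : ∀ x, ∀ t ∉ B, V x t = 0)
    (hM : ∀ g, IsTestFunction μ ν B g →
      ∫⁻ t, ∫⁻ x, V x t * g x t ∂μ ∂ν ≤ M * mixedNorm μ ν p s g) :
    mixedNorm μ ν q r V ≤ M := by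
  have hr0 := hsr.symm.pos
  have hqr : 0 < q / r := div_pos hpq.symm.pos hr0
  have hNle (t) := lintegral_rpow_le_of_le (μ := μ) hr0 hA (hVL · t) fun x hx => hVA x hx t
  have hLA : L ^ r * μ A ≠ ⊤ := ENNReal.mul_ne_top (ENNReal.rpow_ne_top_of_nonneg hr0.le hL) hAμ
  refine mixedNorm_le_of_lintegral_mul_dualTest_le hpq hsr hV
    (fun t => ne_top_of_le_ne_top hLA (hNle t)) ?_
    (hM _ (isTestFunction_dualTest hpq.symm.lt hsr hL hA hAμ hB hBν hV hVL hVA hVB))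
  refine lintegral_ne_top_of_le (ENNReal.rpow_ne_top_of_nonneg hqr.le hLA) hB hBν
    (fun t => ENNReal.rpow_le_rpow (hNle t) hqr.le) fun t ht => ?_
  simp [hVB _ t ht, hr0, hqr]

theorem mixedNorm_le_of_forall_lintegral_mul_le [SigmaFinite μ] (hpq : p.HolderConjugate q)
    (hsr : s.HolderConjugate r) {B : ℕ → Set β} (hB : ∀ n, MeasurableSet (B n))
    (hBν : ∀ n, ν (B n) ≠ ⊤) (hBmono : Monotone B) (hBae : ∀ᵐ t ∂ν, ∃ n, t ∈ B n)
    (hV : Measurable (Function.uncurry V))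
    (hM : ∀ n g, IsTestFunction μ ν (B n) g →
      ∫⁻ t, ∫⁻ x, V x t * g x t ∂μ ∂ν ≤ M * mixedNorm μ ν p s g) :
    mixedNorm μ ν q r V ≤ M := by
  set A := spanningSets μ
  have hA := measurableSet_spanningSets μ
  let Vn (n : ℕ) (x : α) (t : β) : ℝ≥0∞ :=
    (A n ×ˢ B n).indicator (fun z => min (V z.1 z.2) n) (x, t)
  have hVn (n) : Measurable (Function.uncurry (Vn n)) :=
    (hV.min measurable_const).indicator ((hA n).prod (hB n))
  have hVnV (n x t) : Vn n x t ≤ V x t :=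
    Set.indicator_le' (fun _ _ => min_le_left _ _) (fun _ _ => zero_le) (x, t)
  refine mixedNorm_le_of_tendsto_of_monotone hpq.symm.pos hsr.symm.pos hVn ?_ ?_ fun n => ?_
  · intro m n hmn x t
    have hsub : A m ×ˢ B m ⊆ A n ×ˢ B n :=
      Set.prod_mono (monotone_spanningSets μ hmn) (hBmono hmn)
    have hcast : (m : ℝ≥0∞) ≤ n := by exact_mod_cast hmn
    refine Set.indicator_apply_le' (fun h => ?_) fun _ => zero_le
    exact (min_le_min_left (V x t) hcast).trans_eq
      (Set.indicator_of_mem (hsub h) fun z : α × β => min (V z.1 z.2) n).symm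
  · filter_upwards [hBae] with t ⟨m, hm⟩ x
    have hmin : Tendsto (fun n : ℕ => min (V x t) n) atTop (𝓝 (V x t)) := by
      simpa using tendsto_const_nhds.min ENNReal.tendsto_nat_nhds_top
    refine hmin.congr' ?_
    filter_upwards [eventually_ge_atTop m, eventually_ge_atTop (spanningSetsIndex μ x)]
      with n hmn hxn
    exact (Set.indicator_of_mem (Set.mk_mem_prod (mem_spanningSets_of_index_le μ x hxn)
      (hBmono hmn hm)) fun z : α × β => min (V z.1 z.2) n).symm
  · refine mixedNorm_le_of_bounded_of_forall_lintegral_mul_le hpq hsr (ENNReal.natCast_ne_top n)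
      (hA n) (measure_spanningSets_lt_top μ n).ne (hB n) (hBν n) (hVn n) (fun x t => ?_)
      (fun x hx t => ?_) (fun x t ht => ?_)
      fun g hg => (lintegral_mono fun t => lintegral_mono fun x => ?_).trans (hM n g hg)
    · exact Set.indicator_le' (fun _ _ => min_le_right _ _) (fun _ _ => zero_le) (x, t)
    · exact Set.indicator_of_notMem (fun h => hx h.1) _
    · exact Set.indicator_of_notMem (fun h => ht h.2) _
    · exact mul_le_mul_left (hVnV n x t) _

end MixedNorm

section MixedNormInequalities

variable {α β ι : Type*} [MeasurableSpace α] [MeasurableSpace β] [MeasurableSpace ι]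
  {μ : Measure α} {ν : Measure β} {κ : Measure ι} {p q r s : ℝ} {V W : α → β → ℝ≥0∞}

theorem mixedNorm_mono_ae (hq : 0 ≤ q) (hr : 0 ≤ r) (h : ∀ᵐ t ∂ν, ∀ x, V x t ≤ W x t) :
    mixedNorm μ ν q r V ≤ mixedNorm μ ν q r W := by
  have : 0 ≤ q / r := by positivity
  refine ENNReal.rpow_le_rpow (lintegral_mono_ae ?_) (by positivity)
  filter_upwards [h] with t ht
  gcongr with x
  exact ht x

theorem mixedNorm_add_le [SFinite μ] (hq : 1 ≤ q) (hr : 1 ≤ r)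
    (hV : Measurable (Function.uncurry V))
    (hW : Measurable (Function.uncurry W)) :
    mixedNorm μ ν q r (fun x t => V x t + W x t) ≤ mixedNorm μ ν q r V + mixedNorm μ ν q r W := by
  simp only [mixedNorm_eq_lintegral_rpow]
  calc _ ≤ (∫⁻ t, ((∫⁻ x, V x t ^ r ∂μ) ^ (1 / r) + (∫⁻ x, W x t ^ r ∂μ) ^ (1 / r)) ^ q ∂ν) ^
        (1 / q) := by
        gcongr with t
        exact ENNReal.lintegral_Lp_add_le hV.of_uncurry_right.aemeasurable
          hW.of_uncurry_right.aemeasurable hr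
    _ ≤ _ := ENNReal.lintegral_Lp_add_le
        ((measurable_lintegral_rpow r hV).pow_const _).aemeasurable
        ((measurable_lintegral_rpow r hW).pow_const _).aemeasurable hq

theorem lintegral_mul_le_mixedNorm_mul_mixedNorm [SFinite μ] (hpq : p.HolderConjugate q)
    (hsr : s.HolderConjugate r) (hV : Measurable (Function.uncurry V))
    (hW : Measurable (Function.uncurry W)) :
    ∫⁻ t, ∫⁻ x, V x t * W x t ∂μ ∂ν ≤ mixedNorm μ ν q r V * mixedNorm μ ν p s W := by
  simp only [mixedNorm_eq_lintegral_rpow]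
  calc _ ≤ ∫⁻ t, (∫⁻ x, V x t ^ r ∂μ) ^ (1 / r) * (∫⁻ x, W x t ^ s ∂μ) ^ (1 / s) ∂ν := by
        gcongr with t
        exact ENNReal.lintegral_mul_le_Lp_mul_Lq μ hsr.symm hV.of_uncurry_right.aemeasurable
          hW.of_uncurry_right.aemeasurable
    _ ≤ _ := ENNReal.lintegral_mul_le_Lp_mul_Lq ν hpq.symm
        ((measurable_lintegral_rpow r hV).pow_const _).aemeasurable
        ((measurable_lintegral_rpow s hW).pow_const _).aemeasurable

theorem measurable_mixedNorm [SFinite μ] [SFinite ν] {V : ι → α → β → ℝ≥0∞} (q r : ℝ)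
    (hV : Measurable fun w : (α × β) × ι => V w.2 w.1.1 w.1.2) :
    Measurable fun i => mixedNorm μ ν q r (V i) := by
  have hmeas : Measurable fun w : (ι × β) × α => V w.1.1 w.2 w.1.2 ^ r :=
    (hV.comp (by fun_prop : Measurable fun w : (ι × β) × α => ((w.2, w.1.2), w.1.1))).pow_const r
  exact ((hmeas.lintegral_prod_right'.pow_const (q / r)).lintegral_prod_right').pow_const _

theorem mixedNorm_lintegral_le [SigmaFinite μ] [SigmaFinite ν] [SFinite κ]
    (hpq : p.HolderConjugate q) (hsr : s.HolderConjugate r) {V : ι → α → β → ℝ≥0∞}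
    (hV : Measurable fun w : (α × β) × ι => V w.2 w.1.1 w.1.2) :
    mixedNorm μ ν q r (fun x t => ∫⁻ i, V i x t ∂κ) ≤ ∫⁻ i, mixedNorm μ ν q r (V i) ∂κ := by
  have hslice (i : ι) : Measurable (Function.uncurry (V i)) :=
    hV.comp (by fun_prop : Measurable fun w : α × β => (w, i))
  refine mixedNorm_le_of_forall_lintegral_mul_le hpq hsr (measurableSet_spanningSets ν)
    (fun n => (measure_spanningSets_lt_top ν n).ne) (monotone_spanningSets ν)
    (ae_of_all _ fun t => ⟨_, mem_spanningSetsIndex ν t⟩) hV.lintegral_prod_right' fun n g hg => ?_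
  have hVg : Measurable fun w : (α × β) × ι => V w.2 w.1.1 w.1.2 * g w.1.1 w.1.2 :=
    hV.mul (hg.measurable.comp measurable_fst)
  have hVgt (t : β) : Measurable fun w : α × ι => V w.2 w.1 t * g w.1 t :=
    hVg.comp (by fun_prop : Measurable fun w : α × ι => ((w.1, t), w.2))
  have hVgi : Measurable fun w : (β × ι) × α => V w.1.2 w.2 w.1.1 * g w.2 w.1.1 :=
    hVg.comp (by fun_prop : Measurable fun w : (β × ι) × α => ((w.2, w.1.1), w.1.2))
  calc _ = ∫⁻ t, ∫⁻ x, ∫⁻ i, V i x t * g x t ∂κ ∂μ ∂ν := by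
        refine lintegral_congr fun t => lintegral_congr fun x => (lintegral_mul_const _ ?_).symm
        exact hV.comp (by fun_prop : Measurable fun i : ι => ((x, t), i))
    _ = ∫⁻ t, ∫⁻ i, ∫⁻ x, V i x t * g x t ∂μ ∂κ ∂ν :=
        lintegral_congr fun t => lintegral_lintegral_swap (hVgt t).aemeasurable
    _ = ∫⁻ i, ∫⁻ t, ∫⁻ x, V i x t * g x t ∂μ ∂ν ∂κ :=
        lintegral_lintegral_swap hVgi.lintegral_prod_right'.aemeasurable
    _ ≤ ∫⁻ i, mixedNorm μ ν q r (V i) * mixedNorm μ ν p s g ∂κ := by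
        gcongr with i
        exact lintegral_mul_le_mixedNorm_mul_mixedNorm hpq hsr (hslice i) hg.measurable
    _ = _ := lintegral_mul_const _ (measurable_mixedNorm q r hV)

end MixedNormInequalities

section Dispersive

variable {α : Type*} [MeasurableSpace α] {ρ : Measure α} {p q r s β : ℝ} {C : ℝ≥0∞}
  {Q : α × ℝ → α × ℝ → ℂ}

/-- The dispersive estimate for a space-time kernel `Q (x, t) (y, τ)`: the operator from time `τ` to
time `t` is bounded from `L^s` to `L^r` with norm at most `C |t - τ|^(-β)`. The times where the
kernels of the Schrödinger group are junk are excluded. -/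
def IsDispersive (ρ : Measure α) (s r : ℝ) (C : ℝ≥0∞) (β : ℝ) (Q : α × ℝ → α × ℝ → ℂ) : Prop :=
  ∀ t τ : ℝ, t ≠ 0 → τ ≠ 0 → t ≠ τ → ∀ f : α → ℂ, Measurable f → Integrable f ρ →
    (∫⁻ x, ‖kernelOp ρ (fun x y => Q (x, t) (y, τ)) f x‖ₑ ^ r ∂ρ) ^ (1 / r) ≤
      C * rieszKernel β (t - τ) * (∫⁻ y, ‖f y‖ₑ ^ s ∂ρ) ^ (1 / s)

variable [SFinite ρ]

theorem measurable_kernelOp_slice (hQ : Measurable (Function.uncurry Q)) {f : α → ℝ → ℂ}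
    (hf : Measurable (Function.uncurry f)) :
    Measurable fun w : (α × ℝ) × ℝ =>
      kernelOp ρ (fun x y => Q (x, w.1.2) (y, w.2)) (fun y => f y w.2) w.1.1 := by
  have hmeas : Measurable fun w : ((α × ℝ) × ℝ) × α =>
      Function.uncurry Q (w.1.1, (w.2, w.1.2)) * Function.uncurry f (w.2, w.1.2) := by fun_prop
  exact hmeas.stronglyMeasurable.integral_prod_right.measurable

theorem rieszEnergy_le_mixedNorm_mul_mixedNorm (hpq : p.HolderConjugate q) (hq : 2 < q)
    {f g : α → ℝ → ℝ≥0∞} (hf : Measurable (Function.uncurry f))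
    (hg : Measurable (Function.uncurry g)) :
    rieszEnergy (2 / q) (fun τ => (∫⁻ x, f x τ ^ s ∂ρ) ^ (1 / s))
        (fun t => (∫⁻ x, g x t ^ s ∂ρ) ^ (1 / s)) ≤
      hlsConst q * (mixedNorm ρ volume p s f * mixedNorm ρ volume p s g) := by
  simp only [mixedNorm_eq_lintegral_rpow]
  exact rieszEnergy_le_hlsConst_mul hpq hq ((measurable_lintegral_rpow s hf).pow_const _)
    ((measurable_lintegral_rpow s hg).pow_const _)

/-- Hölder's inequality in space and the Hardy-Littlewood-Sobolev inequality in time. -/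
theorem IsDispersive.lintegral_mul_le (hdisp : IsDispersive ρ s r C (2 / q) Q)
    (hpq : p.HolderConjugate q) (hsr : s.HolderConjugate r) (hq : 2 < q)
    (hQ : Measurable (Function.uncurry Q)) {f : α → ℝ → ℂ} (hf : Measurable (Function.uncurry f))
    (hfi : ∀ᵐ τ, Integrable (fun y => f y τ) ρ) {g : α → ℝ → ℝ≥0∞}
    (hg : Measurable (Function.uncurry g)) :
    ∫⁻ t, ∫⁻ τ, ∫⁻ x, ‖kernelOp ρ (fun x y => Q (x, t) (y, τ)) (fun y => f y τ) x‖ₑ * g x t ∂ρ ≤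
      C * (hlsConst q * (mixedNorm ρ volume p s (fun x t => ‖f x t‖ₑ) *
        mixedNorm ρ volume p s g)) := by
  set Nf : ℝ → ℝ≥0∞ := fun τ => (∫⁻ x, ‖f x τ‖ₑ ^ s ∂ρ) ^ (1 / s)
  set Ng : ℝ → ℝ≥0∞ := fun t => (∫⁻ x, g x t ^ s ∂ρ) ^ (1 / s)
  have hslice (t τ : ℝ) (ht : t ≠ 0) (hτ : τ ≠ 0) (htτ : t ≠ τ)
      (hτi : Integrable (fun y => f y τ) ρ) :
      ∫⁻ x, ‖kernelOp ρ (fun x y => Q (x, t) (y, τ)) (fun y => f y τ) x‖ₑ * g x t ∂ρ ≤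
        C * Nf τ * Ng t * rieszKernel (2 / q) (t - τ) := by
    have hop : Measurable fun x => ‖kernelOp ρ (fun x y => Q (x, t) (y, τ)) (fun y => f y τ) x‖ₑ :=
      (measurable_kernelOp_slice hQ hf).enorm.comp
        (by fun_prop : Measurable fun x : α => ((x, t), τ))
    calc _ ≤ (∫⁻ x, ‖kernelOp ρ (fun x y => Q (x, t) (y, τ)) (fun y => f y τ) x‖ₑ ^ r ∂ρ) ^
          (1 / r) * Ng t := ENNReal.lintegral_mul_le_Lp_mul_Lq ρ hsr.symm hop.aemeasurable
            hg.of_uncurry_right.aemeasurable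
      _ ≤ C * rieszKernel (2 / q) (t - τ) * Nf τ * Ng t := by
          gcongr
          exact hdisp t τ ht hτ htτ _ hf.of_uncurry_right hτi
      _ = _ := by ring
  have hf' : Measurable (Function.uncurry fun x t => ‖f x t‖ₑ) := hf.enorm
  have hNf : Measurable Nf := (measurable_lintegral_rpow s hf').pow_const _
  have hNg : Measurable Ng := (measurable_lintegral_rpow s hg).pow_const _
  calc _ ≤ rieszEnergy (2 / q) (fun τ => C * Nf τ) (fun t => 1 * Ng t) := by
        refine lintegral_mono_ae ?_
        filter_upwards [Measure.ae_ne volume 0] with t ht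
        refine lintegral_mono_ae ?_
        filter_upwards [Measure.ae_ne volume 0, Measure.ae_ne volume t, hfi] with τ hτ htτ hτi
        rw [one_mul]
        exact hslice t τ ht hτ htτ.symm hτi
    _ = C * rieszEnergy (2 / q) Nf Ng := by rw [rieszEnergy_const_mul hNf hNg, mul_one]
    _ ≤ _ := by
        gcongr
        exact rieszEnergy_le_mixedNorm_mul_mixedNorm hpq hq hf' hg

theorem IsDispersive.enorm_integral_mul_conj_le (hdisp : IsDispersive ρ s r C (2 / q) Q)
    (hpq : p.HolderConjugate q) (hsr : s.HolderConjugate r) (hq : 2 < q)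
    (hQ : Measurable (Function.uncurry Q)) {G : α × ℝ → ℂ} (hG : Measurable G)
    (hGi : ∀ τ, Integrable (fun y => G (y, τ)) ρ)
    (hint : Integrable (fun z : (α × ℝ) × (α × ℝ) =>
      Q z.1 z.2 * (G z.1 * (starRingEnd ℂ) (G z.2))) ((ρ.prod volume).prod (ρ.prod volume))) :
    ‖∫ z : (α × ℝ) × (α × ℝ), Q z.1 z.2 * (G z.1 * (starRingEnd ℂ) (G z.2))
        ∂((ρ.prod volume).prod (ρ.prod volume))‖ₑ ≤
      C * (hlsConst q * (mixedNorm ρ volume p s (fun x t => ‖G (x, t)‖ₑ) *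
        mixedNorm ρ volume p s (fun x t => ‖G (x, t)‖ₑ))) := by
  set H : α → ℝ → ℝ → ℂ := fun x t τ =>
    kernelOp ρ (fun x y => Q (x, t) (y, τ)) (fun y => (starRingEnd ℂ) (G (y, τ))) x
  have hconj : Measurable (Function.uncurry fun y τ => (starRingEnd ℂ) (G (y, τ))) :=
    measurable_conj_comp hG
  have hconji (τ : ℝ) : Integrable (fun y => (starRingEnd ℂ) (G (y, τ))) ρ :=
    (hGi τ).congr' hconj.of_uncurry_right.aestronglyMeasurable
      (ae_of_all _ fun y => (RCLike.norm_conj _).symm)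
  have hHG : Measurable fun w : (α × ℝ) × ℝ => ‖H w.1.1 w.1.2 w.2‖ₑ * ‖G w.1‖ₑ :=
    (measurable_kernelOp_slice hQ hconj).enorm.mul (by fun_prop)
  calc _ ≤ ∫⁻ P : α × ℝ, (∫⁻ τ, ‖H P.1 P.2 τ‖ₑ * ‖G P‖ₑ) ∂(ρ.prod volume) := by
        rw [integral_prod _ hint]
        refine (enorm_integral_le_lintegral_enorm _).trans (lintegral_mono_ae ?_)
        filter_upwards [hint.prod_right_ae] with P hP
        rw [integral_prod_symm _ hP]
        refine (enorm_integral_le_lintegral_enorm _).trans_eq (lintegral_congr fun τ => ?_)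
        simp only [H, kernelOp, ← enorm_mul, ← integral_mul_const]
        congr with y
        ring
    _ = ∫⁻ t, ∫⁻ τ, ∫⁻ x, ‖H x t τ‖ₑ * ‖G (x, t)‖ₑ ∂ρ := by
        rw [lintegral_prod_symm _ hHG.lintegral_prod_right'.aemeasurable]
        refine lintegral_congr fun t => lintegral_lintegral_swap ?_
        exact (hHG.comp (by fun_prop : Measurable fun w : α × ℝ => ((w.1, t), w.2))).aemeasurable
    _ ≤ _ := by
        simpa only [enorm_conj] using hdisp.lintegral_mul_le hpq hsr hq hQ hconj
          (ae_of_all _ hconji)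
          (g := fun x t => ‖G (x, t)‖ₑ) hG.enorm

end Dispersive

section TTStarSpaceTime

variable {Ω α : Type*} [MeasurableSpace Ω] [MeasurableSpace α] {μ : Measure Ω} {ρ : Measure α}
  {p q r s : ℝ} {C : ℝ≥0∞} {k : Ω → α × ℝ → ℂ}

theorem exists_measurable_mul_eq_norm_mul {P : Type*} [MeasurableSpace P] {U : P → ℂ}
    (hU : Measurable U) {g : P → ℝ≥0∞} (hg : Measurable g) :
    ∃ G : P → ℂ, Measurable G ∧ (∀ x, ‖G x‖ₑ ≤ g x) ∧
      ∀ x, G x * U x = ((‖U x‖ * (g x).toReal : ℝ) : ℂ) := by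
  refine ⟨fun x => ((g x).toReal : ℂ) * ((starRingEnd ℂ) (U x) / (‖U x‖ : ℂ)), ?_, fun x => ?_,
    fun x => ?_⟩
  · have := hg.ennreal_toReal
    fun_prop
  · have hle : ‖((g x).toReal : ℂ) * ((starRingEnd ℂ) (U x) / (‖U x‖ : ℂ))‖ ≤ (g x).toReal := by
      rw [norm_mul, Complex.norm_of_nonneg ENNReal.toReal_nonneg, norm_div, RCLike.norm_conj,
        Complex.norm_real, norm_norm]
      exact mul_le_of_le_one_right ENNReal.toReal_nonneg (div_self_le_one _)
    rw [← ofReal_norm]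
    exact ENNReal.ofReal_le_of_le_toReal hle
  · rcases eq_or_ne (U x) 0 with h | h
    · simp [h]
    · have : (‖U x‖ : ℂ) ≠ 0 := by simpa using h
      rw [mul_assoc, div_mul_eq_mul_div, Complex.conj_mul']
      push_cast
      field_simp

theorem enorm_integral_norm_mul_toReal {P : Type*} [MeasurableSpace P] {σ : Measure P} {U : P → ℂ}
    {g : P → ℝ≥0∞} (hg : ∀ x, g x ≠ ⊤)
    (hint : Integrable (fun x => ((‖U x‖ * (g x).toReal : ℝ) : ℂ)) σ) :
    ‖∫ x, ((‖U x‖ * (g x).toReal : ℝ) : ℂ) ∂σ‖ₑ = ∫⁻ x, ‖U x‖ₑ * g x ∂σ := by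
  have hnonneg (x : P) : 0 ≤ ‖U x‖ * (g x).toReal := by positivity
  rw [integral_complex_ofReal, ← ofReal_norm, Complex.norm_of_nonneg (integral_nonneg hnonneg),
    ofReal_integral_eq_lintegral_ofReal (by simpa using hint.re) (ae_of_all _ hnonneg)]
  refine lintegral_congr fun x => ?_
  rw [ENNReal.ofReal_mul (norm_nonneg _), ofReal_norm, ENNReal.ofReal_toReal (hg x)]

theorem enorm_integral_integral_mul_le [SFinite μ] {P : Type*} [MeasurableSpace P] {σ : Measure P}
    [SFinite σ] {l : Ω → P → ℂ} (hl : Measurable (Function.uncurry l)) {B : P → ℝ}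
    (hlB : ∀ Y x, ‖l Y x‖ ≤ B x) (hB : Integrable B σ) {u : Ω → ℂ} (hu : Measurable u)
    (hui : Integrable u μ) :
    Integrable (fun x => ∫ Y, l Y x * u Y ∂μ) σ ∧
    ‖∫ x, ∫ Y, l Y x * u Y ∂μ ∂σ‖ₑ ≤
      (∫⁻ Y, ‖u Y‖ₑ ^ (2 : ℝ) ∂μ) ^ (1 / 2 : ℝ) *
        (∫⁻ Y, ‖∫ x, l Y x ∂σ‖ₑ ^ (2 : ℝ) ∂μ) ^ (1 / 2 : ℝ) := by
  have hint : Integrable (fun w : Ω × P => l w.1 w.2 * u w.1) (μ.prod σ) := by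
    refine (hui.norm.mul_prod hB).mono' (hl.mul (by fun_prop)).aestronglyMeasurable
      (ae_of_all _ fun w => ?_)
    rw [norm_mul, mul_comm]
    gcongr
    exact hlB w.1 w.2
  refine ⟨hint.integral_prod_right, ?_⟩
  have hT : Measurable fun Y => ∫ x, l Y x ∂σ :=
    hl.stronglyMeasurable.integral_prod_right.measurable
  calc _ = ‖∫ Y, u Y * ∫ x, l Y x ∂σ ∂μ‖ₑ := by
        rw [← integral_integral_swap hint]
        simp only [integral_mul_const, mul_comm]
    _ ≤ ∫⁻ Y, ‖u Y‖ₑ * ‖∫ x, l Y x ∂σ‖ₑ ∂μ := by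
        simpa only [enorm_mul] using enorm_integral_le_lintegral_enorm fun Y => u Y * ∫ x, l Y x ∂σ
    _ ≤ _ := ENNReal.lintegral_mul_le_Lp_mul_Lq μ Real.HolderConjugate.two_two
        hu.enorm.aemeasurable hT.enorm.aemeasurable

variable [SFinite μ]

theorem lintegral_mul_enorm_integral_sq_le [SFinite ρ] {χ : Ω → ℝ} (hχm : Measurable χ)
    (hχ : Integrable χ μ) (hχ0 : ∀ Y, 0 ≤ χ Y)
    (hdisp : IsDispersive ρ s r C (2 / q) fun P P' =>
      weightedInner μ χ (fun Y => k Y P) fun Y => k Y P')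
    (hpq : p.HolderConjugate q) (hsr : s.HolderConjugate r) (hq : 2 < q)
    (hk : Measurable (Function.uncurry k)) {G : α × ℝ → ℂ} (hG : Measurable G)
    (hGi : ∀ τ, Integrable (fun y => G (y, τ)) ρ) {B : α × ℝ → ℝ}
    (hB : Integrable B (ρ.prod volume)) (hkB : ∀ Y P, ‖k Y P * G P‖ ≤ B P) :
    ∫⁻ Y, ENNReal.ofReal (χ Y) * ‖∫ P, k Y P * G P ∂(ρ.prod volume)‖ₑ ^ (2 : ℝ) ∂μ ≤
      C * (hlsConst q * (mixedNorm ρ volume p s (fun x t => ‖G (x, t)‖ₑ) *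
        mixedNorm ρ volume p s (fun x t => ‖G (x, t)‖ₑ))) := by
  have hkG : Measurable (Function.uncurry fun Y P => k Y P * G P) := hk.mul (by fun_prop)
  have hint := integrable_weightedInner hkG hkB hB hχ
  rw [lintegral_mul_enorm_integral_sq hkG hkB hB hχ hχ0]
  simp only [weightedInner_mul_const] at hint ⊢
  refine hdisp.enorm_integral_mul_conj_le hpq hsr hq ?_ hG hGi hint
  have hfst : Measurable fun w : ((α × ℝ) × (α × ℝ)) × Ω => Function.uncurry k (w.2, w.1.1) := by
    fun_prop
  have hsnd : Measurable fun w : ((α × ℝ) × (α × ℝ)) × Ω => Function.uncurry k (w.2, w.1.2) := by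
    fun_prop
  exact measurable_weightedInner hχm hfst hsnd

end TTStarSpaceTime

section HomogeneousStrichartz

/-- The bounded sets of times away from `0`, where a kernel that is singular at time `0` stays
bounded. -/
def timeWindow (n : ℕ) : Set ℝ := {t | 1 / ((n : ℝ) + 1) ≤ |t| ∧ |t| ≤ n}

theorem measurableSet_timeWindow (n : ℕ) : MeasurableSet (timeWindow n) :=
  (measurableSet_le measurable_const measurable_norm).inter
    (measurableSet_le measurable_norm measurable_const)

theorem volume_timeWindow_ne_top (n : ℕ) : volume (timeWindow n) ≠ ⊤ :=
  measure_ne_top_of_subset (fun _ ht => abs_le.mp ht.2) measure_Icc_lt_top.ne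

theorem monotone_timeWindow : Monotone timeWindow := fun m n hmn t ht =>
  ⟨(one_div_le_one_div_of_le (by positivity) (by gcongr)).trans ht.1,
    ht.2.trans (by exact_mod_cast hmn)⟩

theorem exists_mem_timeWindow {t : ℝ} (ht : t ≠ 0) : ∃ n, t ∈ timeWindow n := by
  obtain ⟨m, hm⟩ := exists_nat_one_div_lt (abs_pos.mpr ht)
  obtain ⟨n, hn⟩ := exists_nat_ge |t|
  refine ⟨max m n, hm.le.trans' ?_, hn.trans (by simp)⟩
  exact one_div_le_one_div_of_le (by positivity) (by gcongr; simp)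

variable {Ω α : Type*} [MeasurableSpace Ω] [MeasurableSpace α] {μ : Measure Ω} {ρ : Measure α}
  {p q r s : ℝ} {C : ℝ≥0∞} {k : Ω → α × ℝ → ℂ}

theorem IsTestFunction.integrable_slice {T : Set ℝ} {g : α → ℝ → ℝ≥0∞}
    (hg : IsTestFunction ρ volume T g) {G : α × ℝ → ℂ} (hG : Measurable G)
    (hGg : ∀ P, ‖G P‖ₑ ≤ Function.uncurry g P) (t : ℝ) : Integrable (fun x => G (x, t)) ρ :=
  ⟨(hG.comp measurable_prodMk_right).aestronglyMeasurable,
    (lintegral_mono fun x => hGg (x, t)).trans_lt (hg.lintegral_slice_ne_top t).lt_top⟩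

theorem IsTestFunction.integrable [SFinite ρ] {T : Set ℝ} {g : α → ℝ → ℝ≥0∞}
    (hg : IsTestFunction ρ volume T g) {G : α × ℝ → ℂ} (hG : Measurable G)
    (hGg : ∀ P, ‖G P‖ₑ ≤ Function.uncurry g P) : Integrable G (ρ.prod volume) := by
  refine ⟨hG.aestronglyMeasurable, ?_⟩
  calc _ = ∫⁻ t, ∫⁻ x, ‖G (x, t)‖ₑ ∂ρ := lintegral_prod_symm _ hG.enorm.aemeasurable
    _ ≤ ∫⁻ t, ∫⁻ x, g x t ∂ρ := by
        gcongr with t x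
        exact hGg (x, t)
    _ < ⊤ := hg.lintegral_ne_top.lt_top

theorem IsTestFunction.norm_mul_le {γ : Type*} {k : γ → α × ℝ → ℂ} {T : Set ℝ}
    {g : α → ℝ → ℝ≥0∞} (hg : IsTestFunction ρ volume T g) {G : α × ℝ → ℂ}
    (hGg : ∀ P, ‖G P‖ₑ ≤ Function.uncurry g P) {A : ℝ}
    (hA : ∀ Y P, P.2 ∈ T → ‖k Y P‖ ≤ A) (Y : γ) (P : α × ℝ) :
    ‖k Y P * G P‖ ≤ A * ‖G P‖ := by
  rw [norm_mul]
  by_cases hP : P.2 ∈ T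
  · gcongr
    exact hA Y P hP
  · have : G P = 0 := by simpa [Function.uncurry, hg.eq_zero P.1 P.2 hP] using hGg P
    simp [this]

theorem IsTestFunction.enorm_integral_prod_norm_mul_toReal [SFinite ρ] {T : Set ℝ}
    {g : α → ℝ → ℝ≥0∞} (hg : IsTestFunction ρ volume T g) {U : α × ℝ → ℂ} (hU : Measurable U)
    (hint : Integrable (fun P => ((‖U P‖ * (Function.uncurry g P).toReal : ℝ) : ℂ))
      (ρ.prod volume)) :
    ‖∫ P, ((‖U P‖ * (Function.uncurry g P).toReal : ℝ) : ℂ) ∂(ρ.prod volume)‖ₑ =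
      ∫⁻ t, ∫⁻ x, ‖U (x, t)‖ₑ * g x t ∂ρ := by
  have hfin (P : α × ℝ) : Function.uncurry g P ≠ ⊤ := hg.ne_top P.1 P.2
  have hUg : Measurable fun P => ‖U P‖ₑ * Function.uncurry g P := hU.enorm.mul hg.measurable
  rw [enorm_integral_norm_mul_toReal hfin hint, lintegral_prod_symm _ hUg.aemeasurable]
  rfl

/-- Integrable cutoffs that exhaust the space. They regularise the correlations of a kernel, which
need not converge absolutely on their own. -/
structure IsCutoffSequence (μ : Measure Ω) (χ : ℕ → Ω → ℝ) : Prop where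
  measurable : ∀ n, Measurable (χ n)
  integrable : ∀ n, Integrable (χ n) μ
  nonneg : ∀ n Y, 0 ≤ χ n Y
  tendsto_one : ∀ Y, Tendsto (fun n => ENNReal.ofReal (χ n Y)) atTop (𝓝 1)

theorem IsCutoffSequence.lintegral_enorm_integral_mul_sq_le [SFinite μ] [SFinite ρ]
    {χ : ℕ → Ω → ℝ} (hχ : IsCutoffSequence μ χ)
    (hdisp : ∀ n, IsDispersive ρ s r C (2 / q) fun P P' =>
      weightedInner μ (χ n) (fun Y => k Y P) fun Y => k Y P')
    (hpq : p.HolderConjugate q) (hsr : s.HolderConjugate r) (hq : 2 < q)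
    (hk : Measurable (Function.uncurry k)) {G : α × ℝ → ℂ} (hG : Measurable G)
    (hGi : ∀ τ, Integrable (fun y => G (y, τ)) ρ) {B : α × ℝ → ℝ}
    (hB : Integrable B (ρ.prod volume)) (hkB : ∀ Y P, ‖k Y P * G P‖ ≤ B P) :
    ∫⁻ Y, ‖∫ P, k Y P * G P ∂(ρ.prod volume)‖ₑ ^ (2 : ℝ) ∂μ ≤
      C * (hlsConst q * (mixedNorm ρ volume p s (fun x t => ‖G (x, t)‖ₑ) *
        mixedNorm ρ volume p s (fun x t => ‖G (x, t)‖ₑ))) := by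
  have hkG : Measurable (Function.uncurry fun Y P => k Y P * G P) := hk.mul (by fun_prop)
  exact lintegral_le_of_forall_lintegral_mul_le
    (hkG.stronglyMeasurable.integral_prod_right.measurable.enorm.pow_const _)
    (fun n => (hχ.measurable n).ennreal_ofReal) hχ.tendsto_one fun n =>
    lintegral_mul_enorm_integral_sq_le (hχ.measurable n) (hχ.integrable n) (hχ.nonneg n) (hdisp n)
      hpq hsr hq hk hG hGi hB hkB

theorem IsCutoffSequence.lintegral_enorm_integral_mul_le [SFinite μ] [SFinite ρ]
    {χ : ℕ → Ω → ℝ} (hχ : IsCutoffSequence μ χ)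
    (hdisp : ∀ n, IsDispersive ρ s r C (2 / q) fun P P' =>
      weightedInner μ (χ n) (fun Y => k Y P) fun Y => k Y P')
    (hpq : p.HolderConjugate q) (hsr : s.HolderConjugate r) (hq : 2 < q)
    (hk : Measurable (Function.uncurry k)) {T : Set ℝ} {A : ℝ}
    (hA : ∀ Y P, P.2 ∈ T → ‖k Y P‖ ≤ A) {u : Ω → ℂ} (hu : Measurable u) (hui : Integrable u μ)
    {g : α → ℝ → ℝ≥0∞} (hg : IsTestFunction ρ volume T g) :
    ∫⁻ t, ∫⁻ x, ‖kernelOp μ (fun P Y => k Y P) u (x, t)‖ₑ * g x t ∂ρ ≤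
      (C * hlsConst q) ^ (1 / 2 : ℝ) * (∫⁻ Y, ‖u Y‖ₑ ^ (2 : ℝ) ∂μ) ^ (1 / 2 : ℝ) *
        mixedNorm ρ volume p s g := by
  have hswap : Measurable (Function.uncurry fun P Y => k Y P) := hk.comp measurable_swap
  set U := kernelOp μ (fun P Y => k Y P) u
  have hU : Measurable U := measurable_kernelOp hswap hu
  obtain ⟨G, hG, hGg, hGU⟩ := exists_measurable_mul_eq_norm_mul hU hg.measurable
  have hkG : Measurable (Function.uncurry fun Y P => k Y P * G P) := hk.mul (by fun_prop)
  have hkB := hg.norm_mul_le hGg hA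
  have hB := (hg.integrable hG hGg).norm.const_mul A
  obtain ⟨hint, hdual⟩ := enorm_integral_integral_mul_le hkG hkB hB hu hui
  have hfactor (P : α × ℝ) : ∫ Y, k Y P * G P * u Y ∂μ =
      ((‖U P‖ * (Function.uncurry g P).toReal : ℝ) : ℂ) := by
    rw [← hGU P, show U P = ∫ Y, k Y P * u Y ∂μ from rfl, ← integral_const_mul]
    congr with Y
    ring
  simp only [hfactor] at hint hdual
  have hN : mixedNorm ρ volume p s (fun x t => ‖G (x, t)‖ₑ) ≤ mixedNorm ρ volume p s g :=
    mixedNorm_mono_ae hpq.pos.le hsr.pos.le (ae_of_all _ fun t x => hGg (x, t))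
  have hsq := hχ.lintegral_enorm_integral_mul_sq_le hdisp hpq hsr hq hk hG
    (hg.integrable_slice hG hGg) hB hkB
  calc _ ≤ (∫⁻ Y, ‖u Y‖ₑ ^ (2 : ℝ) ∂μ) ^ (1 / 2 : ℝ) *
          (C * (hlsConst q * (mixedNorm ρ volume p s g * mixedNorm ρ volume p s g))) ^
            (1 / 2 : ℝ) := by
        rw [← hg.enorm_integral_prod_norm_mul_toReal hU hint]
        refine hdual.trans ?_
        gcongr
        refine hsq.trans ?_
        gcongr
    _ = _ := by
        rw [← sq, ← ENNReal.rpow_two, ← mul_assoc, ENNReal.mul_rpow_of_nonneg _ _ (by norm_num),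
          ← ENNReal.rpow_mul, mul_one_div_cancel two_ne_zero, ENNReal.rpow_one]
        ring

/-- The `TT*` method, tested by duality on sets of times away from `0`, where the kernel is
bounded. -/
theorem IsCutoffSequence.mixedNorm_enorm_integral_mul_le [SFinite μ] [SigmaFinite ρ]
    {χ : ℕ → Ω → ℝ} (hχ : IsCutoffSequence μ χ)
    (hdisp : ∀ n, IsDispersive ρ s r C (2 / q) fun P P' =>
      weightedInner μ (χ n) (fun Y => k Y P) fun Y => k Y P')
    (hpq : p.HolderConjugate q) (hsr : s.HolderConjugate r) (hq : 2 < q)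
    (hk : Measurable (Function.uncurry k))
    (hbdd : ∀ δ > 0, ∃ A, ∀ Y P, δ ≤ |P.2| → ‖k Y P‖ ≤ A) {u : Ω → ℂ} (hu : Measurable u)
    (hui : Integrable u μ) :
    mixedNorm ρ volume q r (fun x t => ‖kernelOp μ (fun P Y => k Y P) u (x, t)‖ₑ) ≤
      (C * hlsConst q) ^ (1 / 2 : ℝ) * (∫⁻ Y, ‖u Y‖ₑ ^ (2 : ℝ) ∂μ) ^ (1 / 2 : ℝ) := by
  have hswap : Measurable (Function.uncurry fun P Y => k Y P) := hk.comp measurable_swap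
  refine mixedNorm_le_of_forall_lintegral_mul_le hpq hsr measurableSet_timeWindow
    volume_timeWindow_ne_top monotone_timeWindow ?_ (measurable_kernelOp hswap hu).enorm
    fun n g hg => ?_
  · filter_upwards [Measure.ae_ne volume 0] with t ht
    exact exists_mem_timeWindow ht
  · obtain ⟨A, hA⟩ := hbdd (1 / ((n : ℝ) + 1)) (by positivity)
    exact hχ.lintegral_enorm_integral_mul_le hdisp hpq hsr hq hk (fun Y P hP => hA Y P hP.1) hu hui
      hg

end HomogeneousStrichartz

section RetardedStrichartz

variable {α ι : Type*} [MeasurableSpace α] [MeasurableSpace ι] {ρ : Measure α} [SigmaFinite ρ]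
  {κ : Measure ι} {p q r s : ℝ} {C : ℝ≥0∞}

theorem IsDispersive.mixedNorm_lintegral_enorm_kernelOp_le {Q : α × ℝ → α × ℝ → ℂ}
    (hdisp : IsDispersive ρ s r C (2 / q) Q) (hpq : p.HolderConjugate q)
    (hsr : s.HolderConjugate r) (hq : 2 < q) (hQ : Measurable (Function.uncurry Q))
    {f : α → ℝ → ℂ} (hf : Measurable (Function.uncurry f))
    (hfi : ∀ᵐ τ, Integrable (fun y => f y τ) ρ) :
    mixedNorm ρ volume q r
        (fun x t => ∫⁻ τ, ‖kernelOp ρ (fun x y => Q (x, t) (y, τ)) (fun y => f y τ) x‖ₑ) ≤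
      C * hlsConst q * mixedNorm ρ volume p s (fun x t => ‖f x t‖ₑ) := by
  have hK := (measurable_kernelOp_slice (ρ := ρ) hQ hf).enorm
  refine mixedNorm_le_of_forall_lintegral_mul_le hpq hsr
    (measurableSet_spanningSets (volume : Measure ℝ))
    (fun n => (measure_spanningSets_lt_top _ n).ne)
    (monotone_spanningSets _) (ae_of_all _ fun t => ⟨_, mem_spanningSetsIndex _ t⟩)
    hK.lintegral_prod_right' fun n g hg => ?_
  have hKt (t : ℝ) : Measurable fun w : α × ℝ =>
      ‖kernelOp ρ (fun x y => Q (x, t) (y, w.2)) (fun y => f y w.2) w.1‖ₑ :=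
    hK.comp (by fun_prop : Measurable fun w : α × ℝ => ((w.1, t), w.2))
  have hKg (t : ℝ) : Measurable fun w : α × ℝ =>
      ‖kernelOp ρ (fun x y => Q (x, t) (y, w.2)) (fun y => f y w.2) w.1‖ₑ * g w.1 t :=
    (hKt t).mul (hg.measurable.of_uncurry_right.comp measurable_fst)
  have hswap (t : ℝ) : ∫⁻ x, (∫⁻ τ, ‖kernelOp ρ (fun x y => Q (x, t) (y, τ)) (fun y => f y τ) x‖ₑ) *
      g x t ∂ρ = ∫⁻ τ, ∫⁻ x, ‖kernelOp ρ (fun x y => Q (x, t) (y, τ)) (fun y => f y τ) x‖ₑ *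
        g x t ∂ρ := by
    rw [← lintegral_lintegral_swap (hKg t).aemeasurable]
    refine lintegral_congr fun x => (lintegral_mul_const _ ?_).symm
    exact (hKt t).comp measurable_prodMk_left
  simp only [hswap, mul_assoc]
  exact hdisp.lintegral_mul_le hpq hsr hq hQ hf hfi hg.measurable

theorem mixedNorm_lintegral_lintegral_enorm_kernelOp_le [SFinite κ] {Q : ι → α × ℝ → α × ℝ → ℂ}
    (hdisp : ∀ i, IsDispersive ρ s r C (2 / q) (Q i)) (hpq : p.HolderConjugate q)
    (hsr : s.HolderConjugate r) (hq : 2 < q)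
    (hQ : Measurable fun w : ι × (α × ℝ) × (α × ℝ) => Q w.1 w.2.1 w.2.2)
    {f : ι → α → ℝ → ℂ} (hf : Measurable fun w : (α × ℝ) × ι => f w.2 w.1.1 w.1.2)
    (hfi : ∀ᵐ i ∂κ, ∀ᵐ τ, Integrable (fun y => f i y τ) ρ) :
    mixedNorm ρ volume q r (fun x t => ∫⁻ i, (∫⁻ τ,
        ‖kernelOp ρ (fun x y => Q i (x, t) (y, τ)) (fun y => f i y τ) x‖ₑ) ∂κ) ≤
      C * hlsConst q * ∫⁻ i, mixedNorm ρ volume p s (fun x t => ‖f i x t‖ₑ) ∂κ := by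
  have hprod : Measurable fun w : (((α × ℝ) × ι) × ℝ) × α =>
      Q w.1.1.2 (w.1.1.1.1, w.1.1.1.2) (w.2, w.1.2) * f w.1.1.2 w.2 w.1.2 :=
    (hQ.comp (by fun_prop : Measurable fun w : (((α × ℝ) × ι) × ℝ) × α =>
      (w.1.1.2, (w.1.1.1.1, w.1.1.1.2), (w.2, w.1.2)))).mul
    (hf.comp (by fun_prop : Measurable fun w : (((α × ℝ) × ι) × ℝ) × α =>
      ((w.2, w.1.2), w.1.1.2)))
  have hQi (i : ι) : Measurable (Function.uncurry (Q i)) :=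
    hQ.comp (by fun_prop : Measurable fun w : (α × ℝ) × (α × ℝ) => (i, w.1, w.2))
  have hfm (i : ι) : Measurable (Function.uncurry (f i)) :=
    hf.comp (by fun_prop : Measurable fun w : α × ℝ => (w, i))
  calc _ ≤ ∫⁻ i, mixedNorm ρ volume q r (fun x t => ∫⁻ τ,
        ‖kernelOp ρ (fun x y => Q i (x, t) (y, τ)) (fun y => f i y τ) x‖ₑ) ∂κ :=
        mixedNorm_lintegral_le hpq hsr
          hprod.stronglyMeasurable.integral_prod_right'.measurable.enorm.lintegral_prod_right'
    _ ≤ ∫⁻ i, C * hlsConst q * mixedNorm ρ volume p s (fun x t => ‖f i x t‖ₑ) ∂κ := by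
        refine lintegral_mono_ae ?_
        filter_upwards [hfi] with i hi
        exact (hdisp i).mixedNorm_lintegral_enorm_kernelOp_le hpq hsr hq (hQi i) (hfm i) hi
    _ = _ := lintegral_const_mul _ (measurable_mixedNorm p s hf.enorm)

end RetardedStrichartz

section HalfSpaceKernel

variable {α : Type*} [MeasurableSpace α] {ρ : Measure α} {s r β : ℝ}

theorem kernelOp_const_mul {γ : Type*} (c : ℂ) (k : γ → α → ℂ) (f : α → ℂ) (x : γ) :
    kernelOp ρ (fun x y => c * k x y) f x = c * kernelOp ρ k f x := by
  simp only [kernelOp, mul_assoc, integral_const_mul]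

theorem rieszKernel_mul_rieszKernel (σ β : ℝ) {u : ℝ} (hu : u ≠ 0) :
    rieszKernel σ u * rieszKernel β u = rieszKernel (σ + β) u := by
  rw [rieszKernel, rieszKernel, rieszKernel, ← ENNReal.ofReal_mul (by positivity),
    ← Real.rpow_add (by positivity), neg_add]

theorem IsDispersive.mul_of_enorm_le {C c : ℝ≥0∞} {Q : α × ℝ → α × ℝ → ℂ}
    (hQ : IsDispersive ρ s r C β Q) (hr : 0 < r) {A : ℝ → ℝ → ℂ} {σ : ℝ}
    (hA : ∀ t τ, t ≠ 0 → τ ≠ 0 → t ≠ τ → ‖A t τ‖ₑ ≤ c * rieszKernel σ (t - τ)) :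
    IsDispersive ρ s r (c * C) (σ + β) fun P P' => A P.2 P'.2 * Q P P' := by
  intro t τ ht hτ htτ f hf hfi
  simp only [kernelOp_const_mul, enorm_mul, ENNReal.mul_rpow_of_nonneg _ _ hr.le]
  calc
    _ = ‖A t τ‖ₑ *
        (∫⁻ x, ‖kernelOp ρ (fun x y => Q (x, t) (y, τ)) f x‖ₑ ^ r ∂ρ) ^ (1 / r) := by
      rw [lintegral_const_mul' _ _ (by finiteness), ENNReal.mul_rpow_of_nonneg _ _ (by positivity),
        ← ENNReal.rpow_mul, mul_one_div_cancel hr.ne', ENNReal.rpow_one]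
    _ ≤ c * rieszKernel σ (t - τ) *
        (C * rieszKernel β (t - τ) * (∫⁻ y, ‖f y‖ₑ ^ s ∂ρ) ^ (1 / s)) :=
      mul_le_mul' (hA t τ ht hτ htτ) (hQ t τ ht hτ htτ f hf hfi)
    _ = _ := by
      rw [← rieszKernel_mul_rieszKernel σ β (sub_ne_zero.2 htτ)]
      ring

/-- The constant in the `L^{r'} → L^r` dispersive estimate of the free Schrödinger group on
`ℝ^d`. -/
def freeDispersiveConst (d : ℕ) (r : ℝ) : ℝ≥0∞ :=
  ENNReal.ofReal (marcinkiewiczConst r * (4 * Real.pi) ^ (-(d / 2 * (1 - 2 / r))))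

theorem ofReal_marcinkiewiczConst_mul_freeAmplitude_rpow (d : ℕ) (hr : 2 ≤ r) (u : ℝ) :
    ENNReal.ofReal (marcinkiewiczConst r * freeAmplitude d u ^ (1 - 2 / r)) =
      freeDispersiveConst d r * rieszKernel (d / 2 * (1 - 2 / r)) u := by
  have := marcinkiewiczConst_pos hr
  rw [freeDispersiveConst, rieszKernel, ← ENNReal.ofReal_mul (by positivity), freeAmplitude,
    ← Real.rpow_mul (by positivity), Real.mul_rpow (by positivity) (abs_nonneg u), neg_mul,
    mul_assoc]

theorem isDispersive_Sfree (d : ℕ) (hsr : s.HolderConjugate r) (hr : 2 ≤ r) :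
    IsDispersive volume s r (freeDispersiveConst d r) (d / 2 * (1 - 2 / r))
      fun P P' : (Fin d → ℝ) × ℝ => Sfree d P.1 P'.1 (P.2 - P'.2) := by
  intro t τ _ _ htτ f hf hfi
  have h := lintegral_enorm_kernelOp_Sfree_rpow_le (sub_ne_zero.2 htτ) hsr hr hf hfi
  rwa [ofReal_marcinkiewiczConst_mul_freeAmplitude_rpow d hr] at h

theorem isDispersive_freeCorrelation (d : ℕ) (hsr : s.HolderConjugate r) (hr : 2 ≤ r) {ε : ℝ}
    (hε : 0 < ε) : IsDispersive volume s r (freeDispersiveConst d r) (d / 2 * (1 - 2 / r))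
      fun P P' : (Fin d → ℝ) × ℝ => freeCorrelation d ε P.2 P'.2 P.1 P'.1 := by
  intro t τ ht hτ htτ f hf hfi
  rw [← ofReal_marcinkiewiczConst_mul_freeAmplitude_rpow d hr]
  exact lintegral_enorm_kernelOp_freeCorrelation_rpow_le hε ht hτ htτ hsr hr hf hfi

/-- The half-space kernel `SK`, with the Bessel factor extended by continuity up to the boundary
and the roles of the source `Y` and of the space-time point `(x, t)` separated. -/
def SKExt (d : ℕ) (a z : ℝ) (Y : (Fin d → ℝ) × ℝ) (P : (Fin d → ℝ) × ℝ) : ℂ :=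
  Sfree d P.1 Y.1 P.2 * SaKExt a z Y.2 P.2

theorem measurable_SKExt (d : ℕ) (a z : ℝ) : Measurable (Function.uncurry (SKExt d a z)) := by
  simp only [Function.uncurry_def, SKExt]
  fun_prop

theorem SK_eq_SKExt {d : ℕ} {a z t : ℝ} (ha : -1 < a) (hz : 0 < z) (ht : t ≠ 0) (x : Fin d → ℝ)
    {Y : (Fin d → ℝ) × ℝ} (hY : 0 < Y.2) : SK d a (x, z) Y t = SKExt d a z Y (x, t) := by
  rw [SK, SKExt, SaK_eq_SaKExt ha hz hY ht, mul_comm]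

theorem exists_norm_SKExt_le (d : ℕ) {a : ℝ} (ha : 0 ≤ a) (z : ℝ) {δ : ℝ} (hδ : 0 < δ) :
    ∃ A, ∀ Y P, δ ≤ |P.2| → ‖SKExt d a z Y P‖ ≤ A := by
  refine ⟨freeAmplitude d δ * (2 ^ (-a) / Real.Gamma ((a + 1) / 2) * δ ^ (-((a + 1) / 2))),
    fun Y P hP => ?_⟩
  have := Real.Gamma_pos_of_pos (by linarith : 0 < (a + 1) / 2)
  rw [SKExt, norm_mul, norm_Sfree]
  refine mul_le_mul ?_ ((norm_SaKExt_le ha z _ _).trans ?_) (norm_nonneg _)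
    (freeAmplitude_nonneg d δ)
  · rw [freeAmplitude, freeAmplitude, abs_of_pos hδ]
    exact Real.rpow_le_rpow_of_nonpos (by positivity) (by gcongr)
      (neg_nonpos.2 (by positivity))
  · have := Real.rpow_le_rpow_of_nonpos hδ hP (by linarith : -((a + 1) / 2) ≤ 0)
    gcongr

/-- The Gaussian cutoffs `exp(-|Y|²/(n+1))` on the half-space. -/
def halfSpaceCutoff (d n : ℕ) (Y : (Fin d → ℝ) × ℝ) : ℝ :=
  gaussianCutoff d (1 / ((n : ℝ) + 1)) Y.1 * Real.exp (-(1 / ((n : ℝ) + 1) * Y.2 ^ 2))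

theorem isCutoffSequence_halfSpaceCutoff (d : ℕ) {a : ℝ} (ha : -1 < a) :
    IsCutoffSequence (ωa d a) (halfSpaceCutoff d) where
  measurable n := by
    unfold halfSpaceCutoff
    fun_prop
  integrable n := (integrable_gaussianCutoff d (by positivity)).mul_prod
    (integrable_exp_neg_mul_sq_powMeasure ha (by positivity))
  nonneg n Y := mul_nonneg (gaussianCutoff_nonneg d _ _) (Real.exp_pos _).le
  tendsto_one Y := by
    simp only [halfSpaceCutoff, ENNReal.ofReal_mul (gaussianCutoff_nonneg d _ _)]
    simpa [gaussianCutoff] using ENNReal.Tendsto.mul (tendsto_ofReal_exp_neg_one_div_mul _)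
      (by simp) (tendsto_ofReal_exp_neg_one_div_mul _) (by simp)

theorem enorm_le_ofReal_mul_rieszKernel {c σ u : ℝ} (hc : 0 ≤ c) {w : ℂ}
    (hw : ‖w‖ ≤ c * |u| ^ (-σ)) : ‖w‖ₑ ≤ ENNReal.ofReal c * rieszKernel σ u := by
  rw [← ofReal_norm, rieszKernel, ← ENNReal.ofReal_mul hc]
  exact ENNReal.ofReal_le_ofReal hw

/-- The constant in the `L^{r'} → L^r` dispersive estimate of the half-space group on the layers of
constant height. -/
def halfSpaceDispersiveConst (d : ℕ) (a r : ℝ) : ℝ≥0∞ :=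
  ENNReal.ofReal (2 ^ (1 - a) / Real.Gamma ((a + 1) / 2)) * freeDispersiveConst d r

theorem halfSpaceDispersiveConst_ne_top (d : ℕ) (a r : ℝ) : halfSpaceDispersiveConst d a r ≠ ∞ :=
  ENNReal.mul_ne_top ENNReal.ofReal_ne_top ENNReal.ofReal_ne_top

theorem isDispersive_weightedInner_SKExt (d : ℕ) {a : ℝ} (ha : 0 ≤ a) (z : ℝ)
    (hsr : s.HolderConjugate r) (hr : 2 ≤ r) (n : ℕ) :
    IsDispersive volume s r (halfSpaceDispersiveConst d a r) ((a + 1) / 2 + d / 2 * (1 - 2 / r))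
      fun P P' => weightedInner (ωa d a) (halfSpaceCutoff d n) (fun Y => SKExt d a z Y P)
        fun Y => SKExt d a z Y P' := by
  have hε : 0 < 1 / ((n : ℝ) + 1) := by positivity
  have := Real.Gamma_pos_of_pos (by linarith : 0 < (a + 1) / 2)
  convert! (isDispersive_freeCorrelation d hsr hr hε).mul_of_enorm_le (by linarith)
    fun t τ ht hτ htτ => enorm_le_ofReal_mul_rieszKernel (by positivity)
      (norm_weightedInner_SaKExt_le ha z hε ht hτ htτ) using 3 with P₁ P₂
  rw [mul_comm]
  exact weightedInner_prod (μ := (volume : Measure (Fin d → ℝ))) (ν := powMeasure a)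
    (χ := gaussianCutoff d (1 / ((n : ℝ) + 1))) (fun ζ => Real.exp (-(1 / ((n : ℝ) + 1) * ζ ^ 2)))
    (fun y => Sfree d P₁.1 y P₁.2) (fun y => Sfree d P₂.1 y P₂.2) (fun ζ => SaKExt a z ζ P₁.2)
    fun ζ => SaKExt a z ζ P₂.2

/-- The space-time kernel by which the layer at height `ζ` acts on the layer at height `z`. -/
def layerKernel (d : ℕ) (a z ζ : ℝ) (P P' : (Fin d → ℝ) × ℝ) : ℂ :=
  SaKExt a z ζ (P.2 - P'.2) * Sfree d P.1 P'.1 (P.2 - P'.2)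

theorem measurable_layerKernel (d : ℕ) (a z : ℝ) :
    Measurable fun w : ℝ × ((Fin d → ℝ) × ℝ) × (Fin d → ℝ) × ℝ =>
      layerKernel d a z w.1 w.2.1 w.2.2 := by
  unfold layerKernel
  fun_prop

theorem isDispersive_layerKernel (d : ℕ) {a : ℝ} (ha : 0 ≤ a) (z ζ : ℝ)
    (hsr : s.HolderConjugate r) (hr : 2 ≤ r) :
    IsDispersive volume s r (halfSpaceDispersiveConst d a r) ((a + 1) / 2 + d / 2 * (1 - 2 / r))
      (layerKernel d a z ζ) := by
  have := Real.Gamma_pos_of_pos (by linarith : 0 < (a + 1) / 2)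
  refine (isDispersive_Sfree d hsr hr).mul_of_enorm_le (by linarith)
    (A := fun t τ => SaKExt a z ζ (t - τ)) fun t τ _ _ _ =>
    enorm_le_ofReal_mul_rieszKernel (by positivity) ((norm_SaKExt_le ha z ζ (t - τ)).trans ?_)
  gcongr
  · norm_num
  · linarith

end HalfSpaceKernel

section HalfSpaceOperators

variable {d : ℕ} {a q r z : ℝ}

instance : SFinite (ωa d a) := inferInstanceAs (SFinite (volume.prod (powMeasure a)))

theorem ae_ωa_pos (d : ℕ) (a : ℝ) : ∀ᵐ Y ∂ωa d a, 0 < Y.2 :=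
  Measure.quasiMeasurePreserving_snd.ae (ae_powMeasure_pos a)

theorem Tstar_eq_kernelOp (ha : -1 < a) (hz : 0 < z) (u : (Fin d → ℝ) × ℝ → ℂ) (x : Fin d → ℝ)
    {t : ℝ} (ht : t ≠ 0) :
    Tstar d a u (x, z) t = kernelOp (ωa d a) (fun P Y => SKExt d a z Y P) u (x, t) := by
  rw [Tstar, if_neg ht]
  refine integral_congr_ae ?_
  filter_upwards [ae_ωa_pos d a] with Y hY
  rw [SK_eq_SKExt ha hz ht x hY]

/-- The Duhamel term with absolute values taken layer by layer and the time integral extended to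
all of `ℝ`. -/
def duhamelMajorant (d : ℕ) (a z : ℝ) (F : (Fin d → ℝ) × ℝ → ℝ → ℂ) (x : Fin d → ℝ) (t : ℝ) :
    ℝ≥0∞ :=
  ∫⁻ ζ, (∫⁻ τ, ‖kernelOp volume (fun x y => layerKernel d a z ζ (x, t) (y, τ))
    (fun y => F (y, ζ) τ) x‖ₑ) ∂powMeasure a

variable {F : (Fin d → ℝ) × ℝ → ℝ → ℂ}

theorem measurable_kernelOp_layerKernel (a z : ℝ) (hF : Measurable (Function.uncurry F))
    {β : Type*} [MeasurableSpace β] {x : β → Fin d → ℝ} {t τ ζ : β → ℝ} (hx : Measurable x)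
    (ht : Measurable t) (hτ : Measurable τ) (hζ : Measurable ζ) :
    Measurable fun w => kernelOp volume (fun x y => layerKernel d a z (ζ w) (x, t w) (y, τ w))
      (fun y => F (y, ζ w) (τ w)) (x w) := by
  have hmeas : Measurable fun w : β × (Fin d → ℝ) =>
      layerKernel d a z (ζ w.1) (x w.1, t w.1) (w.2, τ w.1) *
        Function.uncurry F ((w.2, ζ w.1), τ w.1) := by
    unfold layerKernel
    fun_prop
  exact hmeas.stronglyMeasurable.integral_prod_right.measurable

theorem measurable_duhamelMajorant (a z : ℝ) (hF : Measurable (Function.uncurry F)) :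
    Measurable (Function.uncurry (duhamelMajorant d a z F)) := by
  have hmeas : Measurable fun w : (((Fin d → ℝ) × ℝ) × ℝ) × ℝ =>
      ‖kernelOp volume (fun x y => layerKernel d a z w.1.2 (x, w.1.1.2) (y, w.2))
        (fun y => F (y, w.1.2) w.2) w.1.1.1‖ₑ :=
    (measurable_kernelOp_layerKernel a z hF (by fun_prop) (by fun_prop) (by fun_prop)
      (by fun_prop)).enorm
  exact (hmeas.lintegral_prod_right' (ν := volume)).lintegral_prod_right' (ν := powMeasure a)

theorem enorm_integral_SK_mul_le (ha : -1 < a) (hz : 0 < z) (f : (Fin d → ℝ) × ℝ → ℂ)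
    (x : Fin d → ℝ) {t τ : ℝ} (htτ : t ≠ τ) :
    ‖∫ Y, SK d a (x, z) Y (t - τ) * f Y ∂ωa d a‖ₑ ≤
      ∫⁻ ζ, ‖kernelOp volume (fun x y => layerKernel d a z ζ (x, t) (y, τ))
        (fun y => f (y, ζ)) x‖ₑ ∂powMeasure a := by
  have hSK : ∫ Y, SK d a (x, z) Y (t - τ) * f Y ∂ωa d a =
      ∫ Y, layerKernel d a z Y.2 (x, t) (Y.1, τ) * f Y ∂volume.prod (powMeasure a) := by
    refine integral_congr_ae ?_
    filter_upwards [ae_ωa_pos d a] with Y hY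
    rw [SK, SaK_eq_SaKExt ha hz hY (sub_ne_zero.2 htτ), layerKernel]
  rw [hSK]
  by_cases hint : Integrable (fun Y => layerKernel d a z Y.2 (x, t) (Y.1, τ) * f Y)
    (volume.prod (powMeasure a))
  · rw [integral_prod_symm _ hint]
    exact enorm_integral_le_lintegral_enorm _
  · simp [integral_undef hint]

theorem enorm_Dop_le_duhamelMajorant (ha : -1 < a) (hz : 0 < z)
    (hF : Measurable (Function.uncurry F)) (x : Fin d → ℝ) (t : ℝ) :
    ‖Dop d a F (x, z) t‖ₑ ≤ duhamelMajorant d a z F x t := by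
  have hmeas : Measurable fun w : ℝ × ℝ =>
      ‖kernelOp volume (fun x y => layerKernel d a z w.2 (x, t) (y, w.1))
        (fun y => F (y, w.2) w.1) x‖ₑ :=
    (measurable_kernelOp_layerKernel a z hF measurable_const measurable_const measurable_fst
      measurable_snd).enorm
  rw [Dop, ← ofReal_norm, intervalIntegral.norm_intervalIntegral_eq, ofReal_norm]
  calc
    _ ≤ ∫⁻ τ, ‖∫ Y, SK d a (x, z) Y (t - τ) * F Y τ ∂ωa d a‖ₑ :=
      (enorm_integral_le_lintegral_enorm _).trans (setLIntegral_le_lintegral _ _)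
    _ ≤ ∫⁻ τ, ∫⁻ ζ, ‖kernelOp volume (fun x y => layerKernel d a z ζ (x, t) (y, τ))
        (fun y => F (y, ζ) τ) x‖ₑ ∂powMeasure a := by
      refine lintegral_mono_ae ?_
      filter_upwards [Measure.ae_ne volume t] with τ hτ
      exact enorm_integral_SK_mul_le ha hz (fun Y => F Y τ) x hτ.symm
    _ = duhamelMajorant d a z F x t := lintegral_lintegral_swap hmeas.aemeasurable

theorem ae_ae_integrable_slice (hF : Measurable (Function.uncurry F))
    (hFi : ∀ᵐ τ, Integrable (fun Y => F Y τ) (ωa d a)) :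
    ∀ᵐ ζ ∂powMeasure a, ∀ᵐ τ, Integrable fun y => F (y, ζ) τ := by
  have hmeas : Measurable fun w : (ℝ × ℝ) × (Fin d → ℝ) =>
      Function.uncurry F ((w.2, w.1.2), w.1.1) := by fun_prop
  refine (Measure.ae_ae_comm (measurableSet_integrable hmeas.stronglyMeasurable)).1 ?_
  filter_upwards [hFi] with τ hτ using hτ.prod_left_ae

theorem exponent_eq_of_admissible (hadm : 2 / q + (d : ℝ) / r = ((d : ℝ) + a + 1) / 2) :
    (a + 1) / 2 + d / 2 * (1 - 2 / r) = 2 / q := by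
  linear_combination -hadm

theorem mixedNorm_kernelOp_SKExt_le (ha : 0 ≤ a) (hr : 2 ≤ r) (hq : 2 < q)
    (hadm : 2 / q + (d : ℝ) / r = ((d : ℝ) + a + 1) / 2) (z : ℝ) {u : (Fin d → ℝ) × ℝ → ℂ}
    (hu : Measurable u) (hui : Integrable u (ωa d a)) :
    mixedNorm volume volume q r
        (fun x t => ‖kernelOp (ωa d a) (fun P Y => SKExt d a z Y P) u (x, t)‖ₑ) ≤
      (halfSpaceDispersiveConst d a r * hlsConst q) ^ (1 / 2 : ℝ) * eLpNorm u 2 (ωa d a) := by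
  have hsr := (Real.HolderConjugate.conjExponent (by linarith : 1 < r)).symm
  have hpq := (Real.HolderConjugate.conjExponent (by linarith : 1 < q)).symm
  have hdisp (n : ℕ) := exponent_eq_of_admissible hadm ▸
    isDispersive_weightedInner_SKExt d ha z hsr hr n
  rw [eLpNorm_eq_lintegral_rpow_enorm_toReal (by simp) (by simp)]
  exact (isCutoffSequence_halfSpaceCutoff d (by linarith)).mixedNorm_enorm_integral_mul_le hdisp
    hpq hsr hq (measurable_SKExt d a z) (fun δ hδ => exists_norm_SKExt_le d ha z hδ) hu hui

theorem mixedNorm_duhamelMajorant_le (ha : 0 ≤ a) (hr : 2 ≤ r) (hq : 2 < q)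
    (hadm : 2 / q + (d : ℝ) / r = ((d : ℝ) + a + 1) / 2) (z : ℝ)
    (hF : Measurable (Function.uncurry F))
    (hFi : ∀ᵐ τ, Integrable (fun Y => F Y τ) (ωa d a)) :
    mixedNorm volume volume q r (duhamelMajorant d a z F) ≤
      halfSpaceDispersiveConst d a r * hlsConst q *
        ∫⁻ ζ in Set.Ioi (0 : ℝ), mixNorm d (q / (q - 1)) (r / (r - 1)) (fun x t => F (x, ζ) t) *
          ENNReal.ofReal (ζ ^ a) := by
  have hsr := (Real.HolderConjugate.conjExponent (by linarith : 1 < r)).symm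
  have hpq := (Real.HolderConjugate.conjExponent (by linarith : 1 < q)).symm
  have hdisp (ζ : ℝ) := exponent_eq_of_admissible hadm ▸ isDispersive_layerKernel d ha z ζ hsr hr
  have hlayers : Measurable fun w : ((Fin d → ℝ) × ℝ) × ℝ => F (w.1.1, w.2) w.1.2 :=
    hF.comp (by fun_prop : Measurable fun w : ((Fin d → ℝ) × ℝ) × ℝ => ((w.1.1, w.2), w.1.2))
  have hnorm : Measurable fun ζ =>
      mixNorm d (q / (q - 1)) (r / (r - 1)) (fun x t => F (x, ζ) t) :=
    measurable_mixedNorm _ _ hlayers.enorm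
  rw [← lintegral_powMeasure a hnorm]
  exact mixedNorm_lintegral_lintegral_enorm_kernelOp_le hdisp hpq hsr hq
    (measurable_layerKernel d a z) hlayers (ae_ae_integrable_slice hF hFi)

theorem mixNorm_Tstar_add_Dop_le (ha : 0 ≤ a) (hr : 2 ≤ r) (hq : 2 < q)
    (hadm : 2 / q + (d : ℝ) / r = ((d : ℝ) + a + 1) / 2) (hz : 0 < z)
    {u : (Fin d → ℝ) × ℝ → ℂ} (hu : Measurable u) (hui : Integrable u (ωa d a))
    (hF : Measurable (Function.uncurry F))
    (hFi : ∀ᵐ τ, Integrable (fun Y => F Y τ) (ωa d a)) :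
    mixNorm d q r (fun x t => Tstar d a u (x, z) t + Dop d a F (x, z) t) ≤
      (halfSpaceDispersiveConst d a r * hlsConst q) ^ (1 / 2 : ℝ) * eLpNorm u 2 (ωa d a) +
        halfSpaceDispersiveConst d a r * hlsConst q *
          ∫⁻ ζ in Set.Ioi (0 : ℝ), mixNorm d (q / (q - 1)) (r / (r - 1)) (fun x t => F (x, ζ) t) *
            ENNReal.ofReal (ζ ^ a) := by
  have hSK : Measurable (Function.uncurry fun P Y => SKExt d a z Y P) := by
    simp only [Function.uncurry_def, SKExt]
    fun_prop
  have hT := measurable_kernelOp (μ := ωa d a) hSK hu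
  calc
    _ ≤ mixedNorm volume volume q r fun x t =>
        ‖kernelOp (ωa d a) (fun P Y => SKExt d a z Y P) u (x, t)‖ₑ +
          duhamelMajorant d a z F x t := by
      refine mixedNorm_mono_ae (by linarith) (by linarith) ?_
      filter_upwards [Measure.ae_ne volume 0] with t ht x
      rw [Tstar_eq_kernelOp (by linarith) hz u x ht]
      exact (enorm_add_le _ _).trans
        (add_le_add_right (enorm_Dop_le_duhamelMajorant (by linarith) hz hF x t) _)
    _ ≤ _ := mixedNorm_add_le (by linarith) (by linarith) hT.enorm
      (measurable_duhamelMajorant a z hF)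
    _ ≤ _ := add_le_add (mixedNorm_kernelOp_SKExt_le ha hr hq hadm z hu hui)
      (mixedNorm_duhamelMajorant_le ha hr hq hadm z hF hFi)

end HalfSpaceOperators

section SchwartzData

variable {d : ℕ} {a : ℝ}

theorem rpow_le_one_add_pow {x : ℝ} {n : ℕ} (hx : 0 ≤ x) (ha : 0 ≤ a) (han : a ≤ n) :
    x ^ a ≤ 1 + x ^ n := by
  rcases le_total x 1 with hx1 | hx1
  · exact (Real.rpow_le_one hx hx1 ha).trans (le_add_of_nonneg_right (by positivity))
  · have := Real.rpow_le_rpow_of_exponent_le hx1 han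
    rw [Real.rpow_natCast] at this
    linarith

theorem integrable_ωa_iff {f : (Fin d → ℝ) × ℝ → ℂ} :
    Integrable f (ωa d a) ↔ Integrable (fun X => (ENNReal.ofReal (X.2 ^ a)).toReal • f X)
      ((volume : Measure (Fin d → ℝ)).prod (volume.restrict (Set.Ioi 0))) := by
  rw [ωa, prod_withDensity_right (by fun_prop)]
  exact integrable_withDensity_iff_integrable_smul' (by fun_prop)
    (ae_of_all _ fun _ => ENNReal.ofReal_lt_top)

theorem integrable_ωa_of_schwartzMap (ha : 0 ≤ a) (u : SchwartzMap ((Fin d → ℝ) × ℝ) ℂ) :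
    Integrable u (ωa d a) := by
  have : (volume : Measure ((Fin d → ℝ) × ℝ)).IsAddHaarMeasure := by
    rw [Measure.volume_eq_prod]
    infer_instance
  have hmoments := (u.integrable_pow_mul volume 0).add (u.integrable_pow_mul volume ⌈a⌉₊)
  have hmeas : Measurable u := u.continuous.measurable
  refine integrable_ωa_iff.2 ((hmoments.mono_measure
    (Measure.prod_mono le_rfl Measure.restrict_le_self)).mono'
    (by fun_prop : Measurable _).aestronglyMeasurable (ae_of_all _ fun X => ?_))
  have hweight : ‖(ENNReal.ofReal (X.2 ^ a)).toReal‖ ≤ 1 + ‖X‖ ^ ⌈a⌉₊ := by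
    rw [ENNReal.toReal_ofReal', Real.norm_of_nonneg (le_max_right _ _)]
    calc
      max (X.2 ^ a) 0 ≤ |X.2| ^ a :=
        max_le ((le_abs_self _).trans (Real.abs_rpow_le_abs_rpow _ _)) (by positivity)
      _ ≤ 1 + |X.2| ^ ⌈a⌉₊ := rpow_le_one_add_pow (abs_nonneg _) ha (Nat.le_ceil a)
      _ ≤ 1 + ‖X‖ ^ ⌈a⌉₊ := by
        gcongr
        exact norm_snd_le X
  rw [norm_smul]
  exact (mul_le_mul_of_nonneg_right hweight (norm_nonneg _)).trans_eq (by simp [add_mul])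

theorem integrable_ωa_slice_of_schwartzMap (ha : 0 ≤ a)
    (F : SchwartzMap (((Fin d → ℝ) × ℝ) × ℝ) ℂ) (τ : ℝ) :
    Integrable (fun Y => F (Y, τ)) (ωa d a) := by
  have hanti : AntilipschitzWith 1 fun Y : (Fin d → ℝ) × ℝ => (Y, τ) :=
    LipschitzWith.prod_fst.to_rightInverse fun _ => rfl
  have hgrowth : (fun Y : (Fin d → ℝ) × ℝ => (Y, τ)).HasTemperateGrowth := by
    simpa [Pi.add_def] using (ContinuousLinearMap.inl ℝ ((Fin d → ℝ) × ℝ) ℝ).hasTemperateGrowth.add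
      (.const ((0, τ) : ((Fin d → ℝ) × ℝ) × ℝ))
  exact integrable_ωa_of_schwartzMap ha
    (SchwartzMap.compCLMOfAntilipschitz ℝ hgrowth hanti F)

end SchwartzData

theorem bulk_strichartz_nonneg_general (d : ℕ) (a : ℝ) (ha : 0 ≤ a) (q r : ℝ) (hr : 2 ≤ r)
    (hq : 2 < q) (hadm : 2 / q + (d : ℝ) / r = ((d : ℝ) + a + 1) / 2) :
    ∃ C > (0 : ℝ), ∀ (u₀ : (Fin d → ℝ) × ℝ → ℂ) (F : (Fin d → ℝ) × ℝ → ℝ → ℂ),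
      Measurable u₀ → Integrable u₀ (ωa d a) → Measurable (Function.uncurry F) →
      (∀ᵐ τ, Integrable (fun Y => F Y τ) (ωa d a)) →
      (⨆ (z : ℝ) (_ : 0 < z),
          mixNorm d q r (fun x t => Tstar d a u₀ (x, z) t + Dop d a F (x, z) t)) ≤
        ENNReal.ofReal C *
          (eLpNorm u₀ 2 (ωa d a) +
            ∫⁻ ζ in Set.Ioi (0 : ℝ), mixNorm d (q / (q - 1)) (r / (r - 1)) (fun x t => F (x, ζ) t) *
              ENNReal.ofReal (ζ ^ a)) := by
  set K := halfSpaceDispersiveConst d a r * hlsConst q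
  have hK : K ≠ ∞ := ENNReal.mul_ne_top (halfSpaceDispersiveConst_ne_top d a r) (hlsConst_ne_top q)
  have hKK : K ^ (1 / 2 : ℝ) + K ≠ ∞ := by finiteness
  refine ⟨(K ^ (1 / 2 : ℝ) + K).toReal + 1, by positivity, fun u₀ F hu hui hF hFi =>
    iSup₂_le fun z hz => (mixNorm_Tstar_add_Dop_le ha hr hq hadm hz hu hui hF hFi).trans ?_⟩
  have hC : K ^ (1 / 2 : ℝ) + K ≤ ENNReal.ofReal ((K ^ (1 / 2 : ℝ) + K).toReal + 1) :=
    ENNReal.le_ofReal_iff_toReal_le hKK (by positivity) |>.2 (by linarith)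
  rw [mul_add]
  gcongr
  · exact le_self_add.trans hC
  · exact le_add_self.trans hC

/-- Bulk Strichartz estimate for `a ≥ 0`: if `r ≥ 2`, `2 < q < ∞` and
`2/q + d/r = (d+a+1)/2`, then for Schwartz data `u₀, F` the solution
`U = 𝕋_a^*(u₀) + 𝔻_a(F)` satisfies
`sup_{z>0} ‖U(·,z,·)‖_{L^q_t L^r_x} ≤ C (‖u₀‖_{L²_a} + ∫₀^∞ ‖F(·,ζ,·)‖_{L^{q'}_t L^{r'}_x} ζ^a dζ)`. -/
theorem bulk_strichartz_nonneg
    (d : ℕ) (hd : 1 ≤ d) (a : ℝ) (ha : 0 ≤ a) (q r : ℝ)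
    (hr : 2 ≤ r) (hq : 2 < q)
    (hadm : 2 / q + (d : ℝ) / r = ((d : ℝ) + a + 1) / 2) :
    ∃ C > (0 : ℝ), ∀ (u₀ : SchwartzMap ((Fin d → ℝ) × ℝ) ℂ)
      (F : SchwartzMap (((Fin d → ℝ) × ℝ) × ℝ) ℂ),
      (⨆ (z : ℝ) (_ : 0 < z),
          mixNorm d q r (fun x t =>
            Tstar d a (fun Y => u₀ Y) (x, z) t + Dop d a (fun Y τ => F (Y, τ)) (x, z) t))
        ≤ ENNReal.ofReal C *
          (eLpNorm (fun X => u₀ X) 2 (ωa d a)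
            + ∫⁻ ζ in Set.Ioi (0 : ℝ),
                mixNorm d (q / (q - 1)) (r / (r - 1)) (fun x t => F ((x, ζ), t)) *
                  ENNReal.ofReal (ζ ^ a)) := by
  obtain ⟨C, hC, hbound⟩ := bulk_strichartz_nonneg_general d a ha q r hr hq hadm
  exact ⟨C, hC, fun u₀ F => hbound u₀ (fun Y τ => F (Y, τ)) u₀.continuous.measurable
    (integrable_ωa_of_schwartzMap ha u₀) F.continuous.measurable
    (ae_of_all _ (integrable_ωa_slice_of_schwartzMap ha F))⟩

end
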